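/- If p and q are strictly positive probability vectors on finite alphabets with H(p) = H(q), then the Bernoulli schemes BS(p) and BS(q) are finitarily isomorphic. -/

import Mathlib

open MeasureTheory ENNReal Filter

noncomputable section

/-- The left shift transformation on bi-infinite sequences: `(shift x) n = x (n+1)`. -/
def shift {A : Type*} : (ℤ → A) → (ℤ → A) := fun x n => x (n + 1)

/-- `φ` is a homomorphism (factor map) from the shift system `(ℤ → A, μ, shift)` to
`(ℤ → B, ν, shift)`, defined on the shift-invariant full-measure domain `D`. -/
structure IsFactorMap {A B : Type*} [MeasurableSpace A] [MeasurableSpace B]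
    (μ : Measure (ℤ → A)) (ν : Measure (ℤ → B))
    (D : Set (ℤ → A)) (φ : (ℤ → A) → (ℤ → B)) : Prop where
  measurable_map : Measurable φ
  dom_measurable : MeasurableSet D
  dom_shift_invariant : shift ⁻¹' D = D
  dom_full : μ D = 1
  pushforward : ν = μ.map φ
  equivariant : ∀ x ∈ D, φ (shift x) = shift (φ x)

/-- The window `[-q, r]` of `x` determines the zero coordinate of the image under `φ`
(among points of the domain `D`). -/
def DeterminesAt {A B : Type*} (D : Set (ℤ → A)) (φ : (ℤ → A) → (ℤ → B))
    (q r : ℕ) (x : ℤ → A) : Prop :=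
  ∀ y ∈ D, (∀ i : ℤ, -(q : ℤ) ≤ i → i ≤ (r : ℤ) → y i = x i) → φ y 0 = φ x 0

/-- A homomorphism `φ` with domain `D` is finitary if for almost every `x` in the domain
there are nonnegative integers `q`, `r` such that the coordinates `x_{-q}, …, x_r`
determine `(φ x)_0`. -/
def IsFinitary {A B : Type*} [MeasurableSpace A] [MeasurableSpace B]
    (μ : Measure (ℤ → A)) (D : Set (ℤ → A)) (φ : (ℤ → A) → (ℤ → B)) : Prop :=
  ∀ᵐ x ∂μ, x ∈ D → ∃ q r : ℕ, DeterminesAt D φ q r x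

/-- The code length `C(x) = q(x) + r(x)` with `q(x), r(x)` minimal such that the window
`[-q(x), r(x)]` determines the zero output coordinate (`⊤` if no finite window works). -/
def codeLength {A B : Type*} (D : Set (ℤ → A)) (φ : (ℤ → A) → (ℤ → B))
    (x : ℤ → A) : ℝ≥0∞ :=
  ⨅ (q : ℕ) (r : ℕ) (_ : DeterminesAt D φ q r x), ((q : ℝ≥0∞) + (r : ℝ≥0∞))

/-- `μ` is the Bernoulli (product) measure on `(ℤ → A)` given by the probability vector `p`. -/
def IsBernoulliMeasure {A : Type*} [MeasurableSpace A] (μ : Measure (ℤ → A)) (p : A → ℝ) : Prop :=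
  ∀ (F : Finset ℤ) (s : ℤ → A),
    μ {x | ∀ i ∈ F, x i = s i} = ENNReal.ofReal (∏ i ∈ F, p (s i))

/-- A strictly positive probability vector on a finite alphabet. -/
def IsProbVector {A : Type*} [Fintype A] (p : A → ℝ) : Prop :=
  (∀ i, 0 < p i) ∧ ∑ i, p i = 1

/-- The entropy `H(p) = -∑ p_i log p_i` of a probability vector. -/
def vecEntropy {A : Type*} [Fintype A] (p : A → ℝ) : ℝ := -∑ i, p i * Real.log (p i)

/-- A finitary isomorphism: a pair of mutually inverse finitary factor maps. -/
def IsFinitaryIsomorphism {A B : Type*} [MeasurableSpace A] [MeasurableSpace B]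
    (μ : Measure (ℤ → A)) (ν : Measure (ℤ → B))
    (D : Set (ℤ → A)) (E : Set (ℤ → B))
    (φ : (ℤ → A) → (ℤ → B)) (ψ : (ℤ → B) → (ℤ → A)) : Prop :=
  IsFactorMap μ ν D φ ∧ IsFactorMap ν μ E ψ ∧
  IsFinitary μ D φ ∧ IsFinitary ν E ψ ∧
  (∀ x ∈ D, φ x ∈ E ∧ ψ (φ x) = x) ∧ (∀ y ∈ E, ψ y ∈ D ∧ φ (ψ y) = y)

/-!
# The Keane–Smorodinsky theorem for equal entropies

Suppose first that each scheme has an unbordered marker word, of the same length and the same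
probability in both. Cutting a sequence at the occurrences of its marker writes it as a
concatenation of independent return words. The sequence of their lengths, the skeleton, has the same
law in both schemes and is left untouched by the isomorphism; only the return words have to be
translated. Cutting the skeleton after the return words of length at least `N` gives blocks of
level `N`.

For a rapidly increasing sequence of levels one couples the blocks with a given skeleton in the two
schemes, each coupling refining blockwise the preceding ones. By Carathéodory's theorem a coupling
of `m` weights with `n` others can be chosen so sparse that at most `n + 1` of the `m` elements have
more than one partner. By the Shannon–McMillan theorem a typical block of length `L` has conditional
probability about `exp (-h * L)`, and by equality of the entropies `h` is the same on both sides;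
truncating one side leaves fewer than `exp (h * L)` classes there, so most blocks of the other side
have a unique partner class. Doing this alternately for the two sides, almost every symbol of
either sequence is determined by a finite block of the other one.

In general, two schemes of equal entropy are joined through a third one of the same entropy, which
shares a marker `a⋯ab` probability with each of them.
-/

namespace KeaneSmorodinsky

open scoped Classical Topology

open ProbabilityTheory

/-! ### Couplings of finite weights -/

section Coupling

universe u v

variable {U : Type u} {V : Type v} {X Y : Type*} {F : Finset U} {G : Finset V} {f : U → ℝ}
  {g : V → ℝ} {R : U → V → Prop}

/-- `γ` is a transport plan from the weights `f` on `F` to the weights `g` on `G` which moves mass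
only along the relation `R`. -/
structure IsCoupling (F : Finset U) (G : Finset V) (f : U → ℝ) (g : V → ℝ) (R : U → V → Prop)
    (γ : U → V → ℝ) : Prop where
  nonneg : ∀ u ∈ F, ∀ v ∈ G, 0 ≤ γ u v
  sum_right : ∀ u ∈ F, ∑ v ∈ G, γ u v = f u
  sum_left : ∀ v ∈ G, ∑ u ∈ F, γ u v = g v
  rel_of_ne_zero : ∀ u ∈ F, ∀ v ∈ G, γ u v ≠ 0 → R u v

/-- The weights `f` on `F` and `g` on `G` can be coupled along the relation `R`. -/
def HasCoupling (F : Finset U) (G : Finset V) (f : U → ℝ) (g : V → ℝ)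
    (R : U → V → Prop) : Prop :=
  ∃ γ, IsCoupling F G f g R γ

theorem HasCoupling.mono {R' : U → V → Prop} (h : HasCoupling F G f g R)
    (hR : ∀ u ∈ F, ∀ v ∈ G, R u v → R' u v) : HasCoupling F G f g R' :=
  let ⟨γ, hγ⟩ := h
  ⟨γ, hγ.nonneg, hγ.sum_right, hγ.sum_left,
    fun u hu v hv hne => hR u hu v hv (hγ.rel_of_ne_zero u hu v hv hne)⟩

theorem HasCoupling.swap (h : HasCoupling F G f g R) : HasCoupling G F g f (fun v u => R u v) :=
  let ⟨γ, hγ⟩ := h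
  ⟨fun v u => γ u v, fun v hv u hu => hγ.nonneg u hu v hv, hγ.sum_left, hγ.sum_right,
    fun v hv u hu => hγ.rel_of_ne_zero u hu v hv⟩

theorem HasCoupling.sum_filter_le (h : HasCoupling F G f g R) {p : U → Prop} {q : V → Prop}
    (hpq : ∀ u ∈ F, ∀ v ∈ G, R u v → q v → p u) :
    ∑ v ∈ G with q v, g v ≤ ∑ u ∈ F with p u, f u := by
  obtain ⟨γ, hγ⟩ := h
  have column_eq : ∀ v ∈ G.filter q, g v = ∑ u ∈ F with p u, γ u v := by
    intro v hv
    obtain ⟨hvG, hvq⟩ := Finset.mem_filter.1 hv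
    rw [← hγ.sum_left v hvG]
    refine (Finset.sum_filter_of_ne fun u hu hne => ?_).symm
    exact hpq u hu v hvG (hγ.rel_of_ne_zero u hu v hvG hne) hvq
  have row_le : ∀ u ∈ F.filter p, ∑ v ∈ G with q v, γ u v ≤ f u := by
    intro u hu
    have huF := (Finset.mem_filter.1 hu).1
    rw [← hγ.sum_right u huF]
    exact Finset.sum_le_sum_of_subset_of_nonneg (Finset.filter_subset _ _)
      fun v hv _ => hγ.nonneg u huF v hv
  rw [Finset.sum_congr rfl column_eq, Finset.sum_comm]
  exact Finset.sum_le_sum row_le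

theorem HasCoupling.exists_right (h : HasCoupling F G f g R) {u : U} (hu : u ∈ F) (hf : f u ≠ 0) :
    ∃ v ∈ G, R u v := by
  obtain ⟨γ, hγ⟩ := h
  rw [← hγ.sum_right u hu] at hf
  obtain ⟨v, hv, hne⟩ := Finset.exists_ne_zero_of_sum_ne_zero hf
  exact ⟨v, hv, hγ.rel_of_ne_zero u hu v hv hne⟩

theorem HasCoupling.map [DecidableEq X] [DecidableEq Y] (h : HasCoupling F G f g R)
    (l : U → X) (m : V → Y) :
    HasCoupling (F.image l) (G.image m) (fun x => ∑ u ∈ F with l u = x, f u)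
      (fun y => ∑ v ∈ G with m v = y, g v)
      (fun x y => ∃ u ∈ F, ∃ v ∈ G, l u = x ∧ m v = y ∧ R u v) := by
  obtain ⟨γ, hγ⟩ := h
  refine ⟨fun x y => ∑ u ∈ F with l u = x, ∑ v ∈ G with m v = y, γ u v,
    fun x _ y _ => ?_, fun x _ => ?_, fun y _ => ?_, fun x _ y _ hne => ?_⟩
  · exact Finset.sum_nonneg fun u hu => Finset.sum_nonneg fun v hv =>
      hγ.nonneg u (Finset.mem_filter.1 hu).1 v (Finset.mem_filter.1 hv).1
  · rw [Finset.sum_comm]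
    refine Finset.sum_congr rfl fun u hu => ?_
    rw [Finset.sum_fiberwise_of_maps_to fun v hv => Finset.mem_image_of_mem m hv]
    exact hγ.sum_right u (Finset.mem_filter.1 hu).1
  · rw [Finset.sum_fiberwise_of_maps_to fun u hu => Finset.mem_image_of_mem l hu, Finset.sum_comm]
    exact Finset.sum_congr rfl fun v hv => hγ.sum_left v (Finset.mem_filter.1 hv).1
  · obtain ⟨u, hu, hne'⟩ := Finset.exists_ne_zero_of_sum_ne_zero hne
    obtain ⟨v, hv, hne''⟩ := Finset.exists_ne_zero_of_sum_ne_zero hne'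
    obtain ⟨huF, hux⟩ := Finset.mem_filter.1 hu
    obtain ⟨hvG, hvy⟩ := Finset.mem_filter.1 hv
    exact ⟨u, huF, v, hvG, hux, hvy, hγ.rel_of_ne_zero u huF v hvG hne''⟩

theorem HasCoupling.image [DecidableEq X] [DecidableEq Y] {l : U → X} {m : V → Y} {f' : X → ℝ}
    {g' : Y → ℝ} {R' : X → Y → Prop} (h : HasCoupling F G (f' ∘ l) (g' ∘ m) R)
    (hl : Set.InjOn l F) (hm : Set.InjOn m G)
    (hR : ∀ u ∈ F, ∀ v ∈ G, R u v → R' (l u) (m v)) :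
    HasCoupling (F.image l) (G.image m) f' g' R' := by
  obtain ⟨γ, hγ⟩ := h.map l m
  have row {x : X} (hx : x ∈ F.image l) : ∑ u ∈ F with l u = x, (f' ∘ l) u = f' x := by
    obtain ⟨u, hu, rfl⟩ := Finset.mem_image.1 hx
    refine (Finset.sum_eq_single_of_mem u (by simp [hu]) fun u' hu' hne => ?_)
    exact absurd (hl (Finset.mem_filter.1 hu').1 hu (Finset.mem_filter.1 hu').2) hne
  have column {y : Y} (hy : y ∈ G.image m) : ∑ v ∈ G with m v = y, (g' ∘ m) v = g' y := by
    obtain ⟨v, hv, rfl⟩ := Finset.mem_image.1 hy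
    refine (Finset.sum_eq_single_of_mem v (by simp [hv]) fun v' hv' hne => ?_)
    exact absurd (hm (Finset.mem_filter.1 hv').1 hv (Finset.mem_filter.1 hv').2) hne
  refine ⟨γ, hγ.nonneg, fun x hx => (hγ.sum_right x hx).trans (row hx),
    fun y hy => (hγ.sum_left y hy).trans (column hy), fun x hx y hy hne => ?_⟩
  obtain ⟨u, hu, v, hv, rfl, rfl, huv⟩ := hγ.rel_of_ne_zero x hx y hy hne
  exact hR u hu v hv huv

theorem HasCoupling.prod {F' : Finset X} {G' : Finset Y} {f' : X → ℝ} {g' : Y → ℝ}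
    {R' : X → Y → Prop} (h : HasCoupling F G f g R) (h' : HasCoupling F' G' f' g' R') :
    HasCoupling (F ×ˢ F') (G ×ˢ G') (fun q => f q.1 * f' q.2) (fun q => g q.1 * g' q.2)
      (fun p q => R p.1 q.1 ∧ R' p.2 q.2) := by
  obtain ⟨γ, hγ⟩ := h
  obtain ⟨γ', hγ'⟩ := h'
  refine ⟨fun p q => γ p.1 q.1 * γ' p.2 q.2, fun p hp q hq => ?_, fun p hp => ?_, fun q hq => ?_,
    fun p hp q hq hne => ?_⟩ <;> simp only [Finset.mem_product] at *
  · exact mul_nonneg (hγ.nonneg _ hp.1 _ hq.1) (hγ'.nonneg _ hp.2 _ hq.2)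
  · rw [← hγ.sum_right _ hp.1, ← hγ'.sum_right _ hp.2, Finset.sum_mul_sum, Finset.sum_product]
  · rw [← hγ.sum_left _ hq.1, ← hγ'.sum_left _ hq.2, Finset.sum_mul_sum, Finset.sum_product]
  · exact ⟨hγ.rel_of_ne_zero _ hp.1 _ hq.1 (left_ne_zero_of_mul hne),
      hγ'.rel_of_ne_zero _ hp.2 _ hq.2 (right_ne_zero_of_mul hne)⟩

theorem sum_fiber_pos [DecidableEq X] (hf : ∀ u ∈ F, 0 < f u) (l : U → X) {u : U} (hu : u ∈ F) :
    0 < ∑ u' ∈ F with l u' = l u, f u' :=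
  Finset.sum_pos (fun u' hu' => hf u' (Finset.mem_filter.1 hu').1)
    ⟨u, Finset.mem_filter.2 ⟨hu, rfl⟩⟩

theorem sum_mul_div_sum_fiber [DecidableEq X] (hf : ∀ u ∈ F, 0 < f u) (l : U → X) (k : X → ℝ) :
    ∑ u ∈ F, k (l u) * (f u / ∑ u' ∈ F with l u' = l u, f u') = ∑ x ∈ F.image l, k x := by
  rw [← Finset.sum_fiberwise_of_maps_to fun u hu => Finset.mem_image_of_mem l hu]
  refine Finset.sum_congr rfl fun x hx => ?_
  obtain ⟨u₀, hu₀, rfl⟩ := Finset.mem_image.1 hx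
  have fiber_eq : ∀ u ∈ F.filter (l · = l u₀),
      k (l u) * (f u / ∑ u' ∈ F with l u' = l u, f u') =
        k (l u₀) * (f u / ∑ u' ∈ F with l u' = l u₀, f u') := by
    intro u hu
    rw [(Finset.mem_filter.1 hu).2]
  rw [Finset.sum_congr rfl fiber_eq, ← Finset.mul_sum, ← Finset.sum_div,
    div_self (sum_fiber_pos hf l hu₀).ne', mul_one]

theorem HasCoupling.of_map [DecidableEq X] [DecidableEq Y] (hf : ∀ u ∈ F, 0 < f u)
    (hg : ∀ v ∈ G, 0 < g v) (l : U → X) (m : V → Y) {ρ : X → Y → Prop}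
    (h : HasCoupling (F.image l) (G.image m) (fun x => ∑ u ∈ F with l u = x, f u)
      (fun y => ∑ v ∈ G with m v = y, g v) ρ) :
    HasCoupling F G f g (fun u v => ρ (l u) (m v)) := by
  obtain ⟨θ, hθ⟩ := h
  refine ⟨fun u v => θ (l u) (m v) * (f u / ∑ u' ∈ F with l u' = l u, f u') *
    (g v / ∑ v' ∈ G with m v' = m v, g v'), fun u hu v hv => ?_, fun u hu => ?_, fun v hv => ?_,
    fun u hu v hv hne => ?_⟩
  · have := hθ.nonneg _ (Finset.mem_image_of_mem l hu) _ (Finset.mem_image_of_mem m hv)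
    have := hf u hu
    have := hg v hv
    have := sum_fiber_pos hf l hu
    have := sum_fiber_pos hg m hv
    positivity
  · rw [sum_mul_div_sum_fiber hg m fun y => θ (l u) y * _, ← Finset.sum_mul,
      hθ.sum_right _ (Finset.mem_image_of_mem l hu),
      mul_div_cancel₀ _ (sum_fiber_pos hf l hu).ne']
  · simp only [mul_right_comm _ (f _ / _)]
    rw [sum_mul_div_sum_fiber hf l fun x => θ x (m v) * _, ← Finset.sum_mul,
      hθ.sum_left _ (Finset.mem_image_of_mem m hv),
      mul_div_cancel₀ _ (sum_fiber_pos hg m hv).ne']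
  · exact hθ.rel_of_ne_zero _ (Finset.mem_image_of_mem l hu) _ (Finset.mem_image_of_mem m hv)
      (left_ne_zero_of_mul (left_ne_zero_of_mul hne))

theorem HasCoupling.marginals_mem_convexHull (h : HasCoupling F G f g R) (hf : 0 < ∑ u ∈ F, f u) :
    ((fun u : F => f u / ∑ u ∈ F, f u, fun v : G => g v / ∑ u ∈ F, f u) : (F → ℝ) × (G → ℝ)) ∈
      convexHull ℝ {z | ∃ (u : F) (v : G), R u v ∧ z = (Pi.single u 1, Pi.single v 1)} := by
  obtain ⟨γ, hγ⟩ := h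
  set M := ∑ u ∈ F, f u with hM
  have hMγ : ∑ u : F, ∑ v : G, γ u v = M := by
    rw [hM, ← Finset.sum_coe_sort F]
    exact Finset.sum_congr rfl fun u _ =>
      (Finset.sum_coe_sort G (γ u)).trans (hγ.sum_right u u.2)
  set T : Finset (F × G) := {q | γ q.1 q.2 ≠ 0}
  have sum_eq : ∑ q ∈ T, (γ q.1 q.2 / M) • ((Pi.single q.1 1, Pi.single q.2 1) :
      (F → ℝ) × (G → ℝ)) = (fun u : F => f u / M, fun v : G => g v / M) := by
    rw [Finset.sum_filter_of_ne (p := fun q : F × G => γ q.1 q.2 ≠ 0)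
      fun q _ hne hq => hne (by rw [hq, zero_div, zero_smul]), Fintype.sum_prod_type]
    refine Prod.ext (funext fun u => ?_) (funext fun v => ?_)
    · simp [Prod.fst_sum, Finset.sum_apply, Pi.single_apply, ← hγ.sum_right u u.2, Finset.sum_div,
        ← Finset.sum_coe_sort G, Finset.sum_ite_eq]
    · simp [Prod.snd_sum, Finset.sum_apply, Pi.single_apply, ← hγ.sum_left v v.2, Finset.sum_div,
        ← Finset.sum_coe_sort F, Finset.sum_ite_eq]
  rw [← sum_eq]
  refine (convex_convexHull ℝ _).sum_mem (fun q _ => ?_) ?_ fun q hq => ?_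
  · exact div_nonneg (hγ.nonneg _ q.1.2 _ q.2.2) hf.le
  · rw [← Finset.sum_div, Finset.sum_filter_ne_zero, Fintype.sum_prod_type, hMγ, div_self hf.ne']
  · exact subset_convexHull ℝ _ ⟨q.1, q.2,
      hγ.rel_of_ne_zero _ q.1.2 _ q.2.2 (Finset.mem_filter.1 hq).2, rfl⟩

/-- Carathéodory's theorem, applied to the pair of marginals. -/
theorem HasCoupling.exists_atoms (h : HasCoupling F G f g R) (hf : 0 < ∑ u ∈ F, f u) :
    ∃ (ι : Type max u v) (_ : Fintype ι) (a : ι → F) (b : ι → G) (w : ι → ℝ),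
      Fintype.card ι ≤ F.card + G.card + 1 ∧ (∀ i, R (a i) (b i)) ∧ (∀ i, 0 < w i) ∧
      (∀ u, ∑ i with a i = u, w i = f u / ∑ u ∈ F, f u) ∧
      ∀ v, ∑ i with b i = v, w i = g v / ∑ u ∈ F, f u := by
  obtain ⟨ι, _, z, w, hz, haff, hw, -, hwz⟩ :=
    eq_pos_convex_span_of_mem_convexHull (h.marginals_mem_convexHull hf)
  choose a b hR hzab using fun i => hz ⟨i, rfl⟩
  refine ⟨ι, ‹_›, a, b, w, ?_, hR, hw, fun u => ?_, fun v => ?_⟩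
  · refine haff.card_le_finrank_succ.trans ?_
    have := Submodule.finrank_le (vectorSpan ℝ (Set.range z))
    simp only [Module.finrank_prod, Module.finrank_fintype_fun_eq_card, Fintype.card_coe] at this
    omega
  · have := congrFun (congrArg Prod.fst hwz) u
    simpa [Prod.fst_sum, Finset.sum_apply, hzab, Pi.single_apply, Finset.sum_filter,
      eq_comm (a := u)] using this
  · have := congrFun (congrArg Prod.snd hwz) v
    simpa [Prod.snd_sum, Finset.sum_apply, hzab, Pi.single_apply, Finset.sum_filter,
      eq_comm (a := v)] using this

/-- There are at most `#F + #G + 1` atoms, and every `u ∈ F` needs at least one of them. -/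
theorem HasCoupling.exists_sparse (h : HasCoupling F G f g R) (hf : ∀ u ∈ F, 0 < f u) :
    ∃ ρ : U → V → Prop, HasCoupling F G f g ρ ∧ (∀ u v, ρ u v → R u v) ∧
      (F.filter fun u => ∃ v v', v ≠ v' ∧ ρ u v ∧ ρ u v').card ≤ G.card + 1 := by
  rcases F.eq_empty_or_nonempty with rfl | hne
  · exact ⟨R, h, fun _ _ => id, by simp⟩
  have hM : 0 < ∑ u ∈ F, f u := Finset.sum_pos hf hne
  obtain ⟨ι, _, a, b, w, card_le, hR, hw, row, column⟩ := h.exists_atoms hM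
  set M := ∑ u ∈ F, f u
  simp only [Subtype.ext_iff] at row column
  refine ⟨fun u v => ∃ i, a i = u ∧ b i = v, ⟨fun u v => M * ∑ i with a i = u ∧ b i = v, w i,
    fun u _ v _ => ?_, fun u hu => ?_, fun v hv => ?_, fun u _ v _ hne => ?_⟩, ?_, ?_⟩
  · exact mul_nonneg hM.le (Finset.sum_nonneg fun i _ => (hw i).le)
  · have := Finset.sum_fiberwise_of_maps_to (s := {i | (a i : U) = u}) (t := G)
      (g := fun i => (b i : V)) (fun i _ => (b i).2) w
    simp only [Finset.filter_filter] at this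
    rw [← Finset.mul_sum, this, row ⟨u, hu⟩, mul_div_cancel₀ _ hM.ne']
  · have := Finset.sum_fiberwise_of_maps_to (s := {i | (b i : V) = v}) (t := F)
      (g := fun i => (a i : U)) (fun i _ => (a i).2) w
    simp only [Finset.filter_filter] at this
    simp only [and_comm (a := (a _ : U) = _)]
    rw [← Finset.mul_sum, this, column ⟨v, hv⟩, mul_div_cancel₀ _ hM.ne']
  · obtain ⟨i, hi, -⟩ := Finset.exists_ne_zero_of_sum_ne_zero (right_ne_zero_of_mul hne)
    exact ⟨i, (Finset.mem_filter.1 hi).2⟩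
  · rintro _ _ ⟨i, rfl, rfl⟩
    exact hR i
  · have le_card_fiber : ∀ u ∈ F, 1 + (if ∃ v v' : V, v ≠ v' ∧ (∃ i, a i = u ∧ b i = v) ∧
        ∃ i, a i = u ∧ b i = v' then 1 else 0) ≤ (Finset.univ.filter fun i => a i = u).card := by
      intro u hu
      split_ifs with hs
      · obtain ⟨_, _, hne', ⟨i, hi, rfl⟩, j, hj, rfl⟩ := hs
        exact Finset.one_lt_card.2 ⟨i, by simp [hi], j, by simp [hj], fun e => hne' (e ▸ rfl)⟩
      · have hpos : ∑ i with (a i : U) = u, w i ≠ 0 := by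
          rw [row ⟨u, hu⟩]; exact (div_pos (hf u hu) hM).ne'
        obtain ⟨i, hi, -⟩ := Finset.exists_ne_zero_of_sum_ne_zero hpos
        exact Finset.card_pos.2 ⟨i, hi⟩
    have := Finset.sum_le_sum le_card_fiber
    rw [← Finset.card_eq_sum_card_fiberwise fun i _ => (a i).2, Finset.card_univ,
      Finset.sum_add_distrib, ← Finset.card_filter, ← Finset.card_eq_sum_ones] at this
    dsimp only
    omega

end Coupling

/-! ### Blocks -/

section Blocks

variable {N N' m n : ℕ} {S : List ℕ}

/-- A block at level `N` is a list of word lengths in which exactly the last one is at least `N`. -/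
def IsBlock (N : ℕ) (S : List ℕ) : Prop :=
  ∃ S₀ m, S = S₀ ++ [m] ∧ (∀ n ∈ S₀, n < N) ∧ N ≤ m

/-- Concatenations of blocks of level `N`. -/
inductive IsBlockConcat (N : ℕ) : List ℕ → Prop
  | nil : IsBlockConcat N []
  | append {b S : List ℕ} : IsBlock N b → IsBlockConcat N S → IsBlockConcat N (b ++ S)

theorem IsBlock.ne_nil (h : IsBlock N S) : S ≠ [] := by
  obtain ⟨S₀, m, rfl, -⟩ := h
  simp

theorem IsBlock.cons (hn : n < N) (h : IsBlock N S) : IsBlock N (n :: S) := by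
  obtain ⟨S₀, m, rfl, hS₀, hm⟩ := h
  exact ⟨n :: S₀, m, rfl, by simpa [hn] using hS₀, hm⟩

theorem IsBlock.singleton (h : N ≤ m) : IsBlock N [m] := ⟨[], m, rfl, by simp, h⟩

theorem IsBlock.le_sum (h : IsBlock N S) : N ≤ S.sum := by
  obtain ⟨S₀, m, rfl, -, hm⟩ := h
  simp only [List.sum_append, List.sum_singleton]
  omega

theorem isBlock_zero : IsBlock 0 S ↔ ∃ m, S = [m] := by
  constructor
  · rintro ⟨S₀, m, rfl, hS₀, -⟩
    rcases S₀ with _ | ⟨a, S₀⟩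
    · exact ⟨m, rfl⟩
    · simpa using hS₀ a
  · rintro ⟨m, rfl⟩
    exact .singleton (Nat.zero_le _)

theorem isBlockConcat_append_singleton (hm : N ≤ m) (S : List ℕ) :
    IsBlockConcat N (S ++ [m]) := by
  induction S with
  | nil => simpa using IsBlockConcat.append (.singleton hm) .nil
  | cons n S ih =>
    by_cases hn : N ≤ n
    · exact .append (b := [n]) (.singleton hn) ih
    · generalize hT : S ++ [m] = T at ih
      cases ih with
      | nil => simp at hT
      | @append b S' hb hS' =>
        simp only [List.cons_append, hT]
        exact .append (b := n :: b) (hb.cons (not_le.1 hn)) hS'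

theorem IsBlock.isBlockConcat (h : IsBlock N' S) (hN : N ≤ N') : IsBlockConcat N S := by
  obtain ⟨S₀, m, rfl, -, hm⟩ := h
  exact isBlockConcat_append_singleton (hN.trans hm) S₀

end Blocks

section BlockSplit

variable {α β : Type*} (f : α → ℕ) {N : ℕ}

/-- Splits a list after each entry `a` with `N ≤ f a`. -/
def blockSplit (N : ℕ) : List α → List (List α)
  | [] => []
  | a :: u => if N ≤ f a then [a] :: blockSplit N u else
      match blockSplit N u with
      | [] => [[a]]
      | b :: bs => (a :: b) :: bs

theorem blockSplit_append_of_isBlock {b : List α} (hb : IsBlock N (b.map f)) (u : List α) :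
    blockSplit f N (b ++ u) = b :: blockSplit f N u := by
  induction b with
  | nil => exact absurd rfl hb.ne_nil
  | cons a b ih =>
    obtain ⟨S₀, m, h, hS₀, hm⟩ := hb
    rcases S₀ with _ | ⟨n, S₀⟩
    · simp only [List.map_cons, List.nil_append, List.cons.injEq, List.map_eq_nil_iff] at h
      obtain ⟨rfl, rfl⟩ := h
      simp [blockSplit, hm]
    · simp only [List.map_cons, List.cons_append, List.cons.injEq] at h
      obtain ⟨rfl, h⟩ := h
      have ha : ¬ N ≤ f a := by simpa using hS₀ (f a) (by simp)
      have := ih ⟨S₀, m, h, fun n hn => hS₀ n (by simp [hn]), hm⟩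
      simp [blockSplit, ha, this]

theorem flatten_blockSplit (u : List α) : (blockSplit f N u).flatten = u := by
  induction u with
  | nil => rfl
  | cons a u ih =>
    rw [blockSplit]
    split_ifs
    · simp [ih]
    · rcases h : blockSplit f N u with _ | ⟨b, bs⟩ <;> rw [h] at ih <;> simp [← ih]

theorem blockSplit_map (g : β → α) (u : List β) :
    blockSplit f N (u.map g) = (blockSplit (f ∘ g) N u).map (List.map g) := by
  induction u with
  | nil => rfl
  | cons a u ih =>
    simp only [List.map_cons, blockSplit, ih, Function.comp]
    split_ifs
    · simp
    · rcases blockSplit (f ∘ g) N u with _ | ⟨b, bs⟩ <;> simp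

end BlockSplit

/-! ### Weighted lexicons -/

/-- A set `α` of letters, each spelled as a word over `A` and carrying a positive weight, with
finitely many letters of each word length. -/
structure Lexicon (α A : Type*) where
  spell : α → List A
  weight : α → ℝ
  fiber : ℕ → Finset α
  weight_pos : ∀ a, 0 < weight a
  mem_fiber : ∀ {m a}, a ∈ fiber m ↔ (spell a).length = m

namespace Lexicon

variable {α A : Type*} (X : Lexicon α A)

/-- The length of the word spelled by a letter. -/
def length (a : α) : ℕ := (X.spell a).length

/-- The skeleton of a list of letters retains only the word lengths. -/
def skeleton (u : List α) : List ℕ := u.map X.length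

/-- The word spelled by a list of letters. -/
def spelling (u : List α) : List A := (u.map X.spell).flatten

/-- The product weight of a list of letters. -/
def prodWeight (u : List α) : ℝ := (u.map X.weight).prod

/-- The total weight of the letters of length `m`. -/
def lengthWeight (m : ℕ) : ℝ := ∑ a ∈ X.fiber m, X.weight a

/-- The product of the total weights of the lengths in a skeleton. -/
def skeletonWeight (S : List ℕ) : ℝ := (S.map X.lengthWeight).prod

/-- The lists of letters with a given skeleton. -/
def fillers : List ℕ → Finset (List α)
  | [] => {[]}
  | n :: S => (X.fiber n ×ˢ fillers S).image fun q => q.1 :: q.2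

theorem mem_fiber_iff_length_eq {X : Lexicon α A} {m : ℕ} {a : α} :
    a ∈ X.fiber m ↔ X.length a = m := X.mem_fiber

@[simp] theorem skeleton_nil : X.skeleton [] = [] := rfl

@[simp] theorem skeleton_cons (a : α) (u : List α) :
    X.skeleton (a :: u) = X.length a :: X.skeleton u := rfl

@[simp] theorem skeleton_append (u v : List α) :
    X.skeleton (u ++ v) = X.skeleton u ++ X.skeleton v := by simp [skeleton]

@[simp] theorem spelling_nil : X.spelling [] = [] := rfl

@[simp] theorem spelling_cons (a : α) (u : List α) :
    X.spelling (a :: u) = X.spell a ++ X.spelling u := rfl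

@[simp] theorem spelling_append (u v : List α) :
    X.spelling (u ++ v) = X.spelling u ++ X.spelling v := by simp [spelling]

@[simp] theorem prodWeight_nil : X.prodWeight [] = 1 := rfl

@[simp] theorem prodWeight_cons (a : α) (u : List α) :
    X.prodWeight (a :: u) = X.weight a * X.prodWeight u := by simp [prodWeight]

@[simp] theorem prodWeight_append (u v : List α) :
    X.prodWeight (u ++ v) = X.prodWeight u * X.prodWeight v := by simp [prodWeight]

@[simp] theorem skeletonWeight_nil : X.skeletonWeight [] = 1 := rfl

@[simp] theorem skeletonWeight_cons (n : ℕ) (S : List ℕ) :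
    X.skeletonWeight (n :: S) = X.lengthWeight n * X.skeletonWeight S := by simp [skeletonWeight]

theorem length_spelling (u : List α) : (X.spelling u).length = (X.skeleton u).sum := by
  induction u with
  | nil => rfl
  | cons a u ih => simp [ih, length]

theorem prodWeight_pos (u : List α) : 0 < X.prodWeight u := by
  induction u with
  | nil => simp
  | cons a u ih => rw [prodWeight_cons]; exact mul_pos (X.weight_pos a) ih

theorem mem_fillers {S : List ℕ} {u : List α} : u ∈ X.fillers S ↔ X.skeleton u = S := by
  induction S generalizing u with
  | nil => simp [fillers, skeleton]
  | cons n S ih =>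
    rcases u with _ | ⟨a, u⟩
    · simp [fillers]
    · simp [fillers, ih, X.mem_fiber, length]

theorem sum_fillers_cons {M : Type*} [AddCommMonoid M] (n : ℕ) (S : List ℕ) (f : List α → M) :
    ∑ u ∈ X.fillers (n :: S), f u = ∑ a ∈ X.fiber n, ∑ u ∈ X.fillers S, f (a :: u) := by
  rw [fillers, Finset.sum_image, Finset.sum_product]
  rintro ⟨a, u⟩ - ⟨b, v⟩ - h
  simpa using h

theorem sum_prodWeight (S : List ℕ) : ∑ u ∈ X.fillers S, X.prodWeight u = X.skeletonWeight S := by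
  induction S with
  | nil => simp [fillers]
  | cons n S ih =>
    simp [sum_fillers_cons, ← Finset.mul_sum, ih, ← Finset.sum_mul, lengthWeight]

theorem lengthWeight_pos (a : α) : 0 < X.lengthWeight (X.length a) :=
  Finset.sum_pos (fun a _ => X.weight_pos a) ⟨a, X.mem_fiber.2 rfl⟩

theorem lengthWeight_nonneg (m : ℕ) : 0 ≤ X.lengthWeight m :=
  Finset.sum_nonneg fun a _ => (X.weight_pos a).le

theorem skeletonWeight_nonneg (S : List ℕ) : 0 ≤ X.skeletonWeight S := by
  rw [← sum_prodWeight]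
  exact Finset.sum_nonneg fun a _ => (X.prodWeight_pos a).le

/-- The conditional information of a letter given its length. -/
def letterInfo (a : α) : ℝ := Real.log (X.lengthWeight (X.length a)) - Real.log (X.weight a)

/-- The conditional information, given the skeleton, of the letters of length at most `c`. -/
def visibleInfo (c : ℕ) (u : List α) : ℝ :=
  (u.map fun a => if X.length a ≤ c then X.letterInfo a else 0).sum

/-- Only the length of a letter is retained if it exceeds `c`. -/
def hide (c : ℕ) (a : α) : ℕ × Option α := (X.length a, if X.length a ≤ c then some a else none)

/-- A list of letters in which all letters longer than `c` are hidden. -/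
def mask (c : ℕ) (u : List α) : List (ℕ × Option α) := u.map (X.hide c)

theorem letterInfo_nonneg (a : α) : 0 ≤ X.letterInfo a := by
  rw [letterInfo, sub_nonneg]
  exact Real.log_le_log (X.weight_pos a)
    (Finset.single_le_sum (f := X.weight) (fun a _ => (X.weight_pos a).le) (X.mem_fiber.2 rfl))

theorem lengthWeight_mul_exp_neg_letterInfo (a : α) :
    X.lengthWeight (X.length a) * Real.exp (-X.letterInfo a) = X.weight a := by
  rw [letterInfo, neg_sub, Real.exp_sub, Real.exp_log (X.weight_pos a),
    Real.exp_log (X.lengthWeight_pos a), mul_div_cancel₀ _ (X.lengthWeight_pos a).ne']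

theorem skeleton_eq_of_mask_eq {c : ℕ} {u v : List α} (h : X.mask c u = X.mask c v) :
    X.skeleton u = X.skeleton v := by
  have := congrArg (List.map Prod.fst) h
  simpa [mask, hide, skeleton, Function.comp_def] using this

theorem mask_eq_of_le {c c' : ℕ} (hc : c ≤ c') {u v : List α} (h : X.mask c' u = X.mask c' v) :
    X.mask c u = X.mask c v := by
  let rehide (q : ℕ × Option α) : ℕ × Option α := (q.1, if q.1 ≤ c then q.2 else none)
  have rehide_hide (a : α) : rehide (X.hide c' a) = X.hide c a := by
    by_cases ha : X.length a ≤ c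
    · simp [rehide, hide, ha, ha.trans hc]
    · simp [rehide, hide, ha]
  have map_mask (u : List α) : (X.mask c' u).map rehide = X.mask c u := by
    rw [mask, mask, List.map_map]
    exact List.map_congr_left fun a _ => rehide_hide a
  rw [← map_mask, h, map_mask]

theorem visibleInfo_eq_of_mask_eq {c : ℕ} {u v : List α} (h : X.mask c u = X.mask c v) :
    X.visibleInfo c u = X.visibleInfo c v := by
  have info_eq (u : List α) :
      X.visibleInfo c u = ((X.mask c u).map fun q => q.2.elim 0 X.letterInfo).sum := by
    rw [mask, visibleInfo, List.map_map]
    congr 1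
    refine List.map_congr_left fun a _ => ?_
    simp only [Function.comp, hide]
    split_ifs <;> rfl
  rw [info_eq, info_eq, h]

theorem sum_weight_hide_class (c : ℕ) (a : α) :
    ∑ b ∈ X.fiber (X.length a) with X.hide c b = X.hide c a, X.weight b =
      X.lengthWeight (X.length a) * Real.exp (-if X.length a ≤ c then X.letterInfo a else 0) := by
  by_cases hc : X.length a ≤ c
  · have class_eq : (X.fiber (X.length a)).filter (fun b => X.hide c b = X.hide c a) = {a} := by
      ext b
      simp only [hide, hc, if_true, Prod.mk.injEq, Finset.mem_filter, Finset.mem_singleton]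
      constructor
      · rintro ⟨-, hlen, hb⟩
        rw [hlen, if_pos hc] at hb
        simpa using hb
      · rintro rfl
        exact ⟨X.mem_fiber.2 rfl, rfl, by simp [hc]⟩
    rw [class_eq, Finset.sum_singleton, if_pos hc, lengthWeight_mul_exp_neg_letterInfo]
  · rw [if_neg hc, neg_zero, Real.exp_zero, mul_one, lengthWeight]
    refine Finset.sum_congr (Finset.filter_true_of_mem fun b hb => ?_) fun _ _ => rfl
    have : X.length b = X.length a := mem_fiber_iff_length_eq.1 hb
    simp [hide, this, hc]

theorem sum_prodWeight_mask_class (c : ℕ) (u : List α) :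
    ∑ v ∈ X.fillers (X.skeleton u) with X.mask c v = X.mask c u, X.prodWeight v =
      X.skeletonWeight (X.skeleton u) * Real.exp (-X.visibleInfo c u) := by
  induction u with
  | nil => simp [fillers, mask, visibleInfo, Finset.filter_singleton]
  | cons a u ih =>
    have mask_cons (b : α) (v : List α) : X.mask c (b :: v) = X.mask c (a :: u) ↔
        X.hide c b = X.hide c a ∧ X.mask c v = X.mask c u := by
      simp [mask]
    have sum_tail (b : α) : ∑ v ∈ X.fillers (X.skeleton u),
        (if X.mask c (b :: v) = X.mask c (a :: u) then X.prodWeight (b :: v) else 0) =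
          if X.hide c b = X.hide c a then
            X.weight b * (X.skeletonWeight (X.skeleton u) * Real.exp (-X.visibleInfo c u))
          else 0 := by
      simp only [mask_cons]
      by_cases h : X.hide c b = X.hide c a
      · simp [h, ← ih, Finset.sum_filter, Finset.mul_sum]
      · simp [h]
    rw [Finset.sum_filter, skeleton_cons, sum_fillers_cons]
    simp only [sum_tail]
    rw [← Finset.sum_filter, ← Finset.sum_mul, sum_weight_hide_class]
    simp only [skeletonWeight_cons, visibleInfo, List.map_cons, List.sum_cons, neg_add,
      Real.exp_add]
    ring

end Lexicon

/-! ### Blockwise relations -/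

namespace Lexicon

variable {α β A B : Type*} {X : Lexicon α A} {Y : Lexicon β B} {N c : ℕ} {S T : List ℕ} {a b : ℝ}

theorem length_of_mem_fillers {u : List α} (h : u ∈ X.fillers S) : u.length = S.length := by
  rw [← X.mem_fillers.1 h, skeleton, List.length_map]

theorem fillers_append (S T : List ℕ) :
    X.fillers (S ++ T) = (X.fillers S ×ˢ X.fillers T).image fun q => q.1 ++ q.2 := by
  ext w
  simp only [mem_fillers, Finset.mem_image, Finset.mem_product, Prod.exists]
  constructor
  · intro hw
    obtain ⟨u, v, rfl, hu, hv⟩ := List.map_eq_append_iff.1 hw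
    exact ⟨u, v, ⟨hu, hv⟩, rfl⟩
  · rintro ⟨u, v, ⟨rfl, rfl⟩, rfl⟩
    exact X.skeleton_append u v

theorem injOn_append_fillers (S T : List ℕ) :
    Set.InjOn (fun q : List α × List α => q.1 ++ q.2)
      (X.fillers S ×ˢ X.fillers T : Finset (List α × List α)) := by
  rintro ⟨u, v⟩ hq ⟨u', v'⟩ hq' h
  simp only [SetLike.mem_coe, Finset.mem_product] at hq hq'
  obtain ⟨rfl, rfl⟩ := List.append_inj h
    ((length_of_mem_fillers hq.1).trans (length_of_mem_fillers hq'.1).symm)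
  rfl

theorem hasCoupling_append {R R' R'' : List α → List β → Prop}
    (h : HasCoupling (X.fillers S) (Y.fillers S) X.prodWeight Y.prodWeight R)
    (h' : HasCoupling (X.fillers T) (Y.fillers T) X.prodWeight Y.prodWeight R')
    (hR : ∀ u ∈ X.fillers S, ∀ v ∈ Y.fillers S, ∀ u' v', R u v → R' u' v' →
      R'' (u ++ u') (v ++ v')) :
    HasCoupling (X.fillers (S ++ T)) (Y.fillers (S ++ T)) X.prodWeight Y.prodWeight R'' := by
  rw [fillers_append, fillers_append]
  have hprod := h.prod h'
  simp only [← prodWeight_append] at hprod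
  exact hprod.image (f' := X.prodWeight) (g' := Y.prodWeight) (injOn_append_fillers S T)
    (injOn_append_fillers S T) fun p hp q hq hpq =>
      hR _ (Finset.mem_product.1 hp).1 _ (Finset.mem_product.1 hq).1 _ _ hpq.1 hpq.2

variable (X Y) in
/-- `R` holds between the successive blocks of level `N` of two lists of letters. -/
def Blockwise (N : ℕ) (R : List α → List β → Prop) (u : List α) (v : List β) : Prop :=
  List.Forall₂ R (blockSplit X.length N u) (blockSplit Y.length N v)

theorem Blockwise.append {R : List α → List β → Prop} {u u' : List α} {v v' : List β}
    (hu : IsBlock N (X.skeleton u)) (hv : IsBlock N (Y.skeleton v)) (h : R u v)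
    (h' : Blockwise X Y N R u' v') : Blockwise X Y N R (u ++ u') (v ++ v') := by
  rw [Blockwise, blockSplit_append_of_isBlock X.length hu, blockSplit_append_of_isBlock Y.length hv]
  exact .cons h h'

theorem Blockwise.swap {R : List α → List β → Prop} {u : List α} {v : List β}
    (h : Blockwise X Y N R u v) : Blockwise Y X N (fun v u => R u v) v u :=
  h.flip

theorem hasCoupling_blockwise {R : List α → List β → Prop}
    (h : ∀ S, IsBlock N S → HasCoupling (X.fillers S) (Y.fillers S) X.prodWeight Y.prodWeight R)
    (hS : IsBlockConcat N S) :
    HasCoupling (X.fillers S) (Y.fillers S) X.prodWeight Y.prodWeight (Blockwise X Y N R) := by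
  induction hS with
  | nil => exact ⟨fun _ _ => 1, by simp, by simp [fillers], by simp [fillers],
      by simp [fillers, Blockwise, blockSplit]⟩
  | append hb _ ih =>
    refine hasCoupling_append (h _ hb) ih fun u hu v hv u' v' hR hR' => ?_
    exact .append (by rwa [X.mem_fillers.1 hu]) (by rwa [Y.mem_fillers.1 hv]) hR hR'

variable (X) in
/-- Two lists are equivalent if their successive blocks of level `N` are `E`-equivalent. -/
def blockwiseSetoid (N : ℕ) (E : Setoid (List α)) : Setoid (List α) where
  r := Blockwise X X N E
  iseqv :=
    { refl u := List.forall₂_same.2 fun _ _ => E.refl' _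
      symm h := h.flip.imp fun _ _ => E.symm'
      trans {u v w} h h' := by
        unfold Blockwise at *
        generalize blockSplit X.length N u = l at h
        generalize blockSplit X.length N v = l' at h h'
        generalize blockSplit X.length N w = l'' at h'
        induction h generalizing l'' with
        | nil => cases h'; exact .nil
        | cons h _ ih => cases h' with
          | cons hb hl => exact .cons (E.trans' h hb) (ih _ hl) }

theorem Blockwise.of_blockwiseSetoid {R : List α → List β → Prop} {E : Setoid (List α)}
    {E' : Setoid (List β)} (hR : ∀ u u' v v', R u v → E u u' → E' v v' → R u' v')
    {u u' : List α} {v v' : List β} (h : Blockwise X Y N R u v) (hu : X.blockwiseSetoid N E u u')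
    (hv : Y.blockwiseSetoid N E' v v') : Blockwise X Y N R u' v' := by
  change List.Forall₂ E _ _ at hu
  change List.Forall₂ E' _ _ at hv
  unfold Blockwise at *
  generalize blockSplit X.length N u = l at h hu
  generalize blockSplit Y.length N v = m at h hv
  generalize blockSplit X.length N u' = l' at hu
  generalize blockSplit Y.length N v' = m' at hv
  induction h generalizing l' m' with
  | nil => cases hu; cases hv; exact .nil
  | cons h _ ih => cases hu with
    | cons hub hul => cases hv with
      | cons hvb hvl => exact .cons (hR _ _ _ _ h hub hvb) (ih _ hul _ hvl)

theorem ker_mask_le_blockwiseSetoid {E : Setoid (List α)} (hE : Setoid.ker (X.mask c) ≤ E) :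
    Setoid.ker (X.mask c) ≤ X.blockwiseSetoid N E := by
  intro u v h
  have map_mask (u : List α) :
      (blockSplit X.length N u).map (X.mask c) = blockSplit Prod.fst N (X.mask c u) :=
    (blockSplit_map (N := N) Prod.fst (X.hide c) u).symm
  have forall₂_mask : List.Forall₂ (· = ·) ((blockSplit X.length N u).map (X.mask c))
      ((blockSplit X.length N v).map (X.mask c)) := by
    rw [map_mask, map_mask, Setoid.ker_def.1 h]
    exact List.forall₂_same.2 fun _ _ => rfl
  rw [List.forall₂_map_left_iff, List.forall₂_map_right_iff] at forall₂_mask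
  exact forall₂_mask.imp fun _ _ huv => hE (Setoid.ker_def.2 huv)

/-! ### Counting classes -/

theorem card_image_le_card_image {ι κ κ' : Type*} [DecidableEq κ] [DecidableEq κ'] {s : Finset ι}
    {f : ι → κ} {g : ι → κ'} (h : ∀ i ∈ s, ∀ j ∈ s, g i = g j → f i = f j) :
    (s.image f).card ≤ (s.image g).card := by
  refine Finset.card_le_card_of_forall_subsingleton (fun y z => ∃ i ∈ s, f i = y ∧ g i = z)
    (fun y hy => ?_) fun z _ y hy y' hy' => ?_
  · obtain ⟨i, hi, rfl⟩ := Finset.mem_image.1 hy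
    exact ⟨g i, Finset.mem_image_of_mem g hi, i, hi, rfl, rfl⟩
  · obtain ⟨-, i, hi, rfl, hiz⟩ := hy
    obtain ⟨-, j, hj, rfl, hjz⟩ := hy'
    exact h i hi j hj (hiz.trans hjz.symm)

/-- The number of `E`-classes of lists of letters with skeleton `S`. -/
def numClasses (X : Lexicon α A) (E : Setoid (List α)) (S : List ℕ) : ℕ :=
  ((X.fillers S).image (Quotient.mk E)).card

theorem numClasses_blockwiseSetoid_append_le {E : Setoid (List α)} (hS : IsBlock N S) :
    X.numClasses (X.blockwiseSetoid N E) (S ++ T) ≤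
      X.numClasses E S * X.numClasses (X.blockwiseSetoid N E) T := by
  rw [numClasses, fillers_append, Finset.image_image, numClasses, numClasses,
    ← Finset.card_product, ← Finset.prodMap_image_product]
  refine card_image_le_card_image fun p hp q hq h => Quotient.sound ?_
  simp only [Finset.mem_product, mem_fillers] at hp hq
  obtain ⟨h, h'⟩ := Prod.ext_iff.1 h
  exact Blockwise.append (hp.1 ▸ hS) (hq.1 ▸ hS) (Quotient.exact h) (Quotient.exact h')

theorem numClasses_blockwiseSetoid_le {E : Setoid (List α)}
    (h : ∀ S, IsBlock N S → (X.numClasses E S : ℝ) ≤ Real.exp (a * S.sum))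
    (hS : IsBlockConcat N S) :
    (X.numClasses (X.blockwiseSetoid N E) S : ℝ) ≤ Real.exp (a * S.sum) := by
  induction hS with
  | nil => simp [numClasses, fillers]
  | @append b S hb _ ih =>
    calc (X.numClasses (X.blockwiseSetoid N E) (b ++ S) : ℝ)
        ≤ X.numClasses E b * X.numClasses (X.blockwiseSetoid N E) S := by
          exact_mod_cast numClasses_blockwiseSetoid_append_le hb
      _ ≤ Real.exp (a * b.sum) * Real.exp (a * S.sum) := by
          gcongr
          exact h b hb
      _ = Real.exp (a * (b ++ S).sum) := by
          rw [← Real.exp_add, List.sum_append, Nat.cast_add, mul_add]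

theorem card_image_mask_le {p : List α → Prop}
    (hp : ∀ u ∈ X.fillers S, p u → X.visibleInfo c u ≤ a * S.sum) :
    ((((X.fillers S).filter p).image (X.mask c)).card : ℝ) ≤ Real.exp (a * S.sum) := by
  rcases ((X.fillers S).filter p).eq_empty_or_nonempty with h | ⟨u₀, hu₀⟩
  · rw [h, Finset.image_empty, Finset.card_empty, Nat.cast_zero]
    positivity
  have hS : 0 < X.skeletonWeight S := by
    rw [← sum_prodWeight]
    exact Finset.sum_pos (fun u _ => X.prodWeight_pos u) ⟨u₀, (Finset.mem_filter.1 hu₀).1⟩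
  set K := ((X.fillers S).filter p).image (X.mask c)
  have le_class : ∀ m ∈ K, X.skeletonWeight S * Real.exp (-(a * S.sum)) ≤
      ∑ u ∈ X.fillers S with X.mask c u = m, X.prodWeight u := by
    intro m hm
    obtain ⟨u, hu, rfl⟩ := Finset.mem_image.1 hm
    obtain ⟨huS, hup⟩ := Finset.mem_filter.1 hu
    have := X.sum_prodWeight_mask_class c u
    rw [X.mem_fillers.1 huS] at this
    rw [this]
    gcongr
    exact hp u huS hup
  have card_mul_le : X.skeletonWeight S * (K.card * Real.exp (-(a * S.sum))) ≤
      X.skeletonWeight S * 1 :=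
    calc X.skeletonWeight S * (K.card * Real.exp (-(a * S.sum)))
        = ∑ _ ∈ K, X.skeletonWeight S * Real.exp (-(a * S.sum)) := by
          rw [Finset.sum_const, nsmul_eq_mul]; ring
      _ ≤ ∑ m ∈ K, ∑ u ∈ X.fillers S with X.mask c u = m, X.prodWeight u :=
          Finset.sum_le_sum le_class
      _ = ∑ u ∈ X.fillers S with X.mask c u ∈ K, X.prodWeight u :=
          Finset.sum_fiberwise_eq_sum_filter _ _ _ _
      _ ≤ ∑ u ∈ X.fillers S, X.prodWeight u :=
          Finset.sum_le_sum_of_subset_of_nonneg (Finset.filter_subset _ _)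
            fun u _ _ => (X.prodWeight_pos u).le
      _ = X.skeletonWeight S * 1 := by rw [sum_prodWeight, mul_one]
  have := le_of_mul_le_mul_left card_mul_le hS
  rwa [Real.exp_neg, ← div_eq_mul_inv, div_le_one (Real.exp_pos _)] at this

theorem sum_prodWeight_label_le {p : List α → Prop} {ι : Type*} [DecidableEq ι]
    (l : List α → ι) (K : Finset ι)
    (hp : ∀ u ∈ X.fillers S, p u → b * S.sum ≤ X.visibleInfo c u)
    (hl : ∀ u v, p u → p v → l u = l v → X.mask c u = X.mask c v) :
    ∑ u ∈ X.fillers S with p u ∧ l u ∈ K, X.prodWeight u ≤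
      K.card * (X.skeletonWeight S * Real.exp (-(b * S.sum))) := by
  have fiberwise : ∑ u ∈ X.fillers S with p u ∧ l u ∈ K, X.prodWeight u =
      ∑ x ∈ K, ∑ u ∈ (X.fillers S).filter p with l u = x, X.prodWeight u := by
    have := Finset.sum_fiberwise_eq_sum_filter ((X.fillers S).filter p) K l X.prodWeight
    rw [Finset.filter_filter] at this
    convert this.symm
  rw [fiberwise, ← nsmul_eq_mul]
  refine Finset.sum_le_card_nsmul _ _ _ fun x _ => ?_
  rcases (((X.fillers S).filter p).filter fun u => l u = x).eq_empty_or_nonempty with h | ⟨v, hv⟩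
  · rw [h, Finset.sum_empty]
    exact mul_nonneg (X.skeletonWeight_nonneg S) (Real.exp_pos _).le
  · simp only [Finset.mem_filter] at hv
    obtain ⟨⟨hvS, hvp⟩, rfl⟩ := hv
    calc ∑ u ∈ (X.fillers S).filter p with l u = l v, X.prodWeight u
        ≤ ∑ u ∈ X.fillers (X.skeleton v) with X.mask c u = X.mask c v, X.prodWeight u := by
          refine Finset.sum_le_sum_of_subset_of_nonneg ?_ fun u _ _ => (X.prodWeight_pos u).le
          intro u hu
          simp only [Finset.mem_filter, X.mem_fillers.1 hvS] at hu ⊢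
          exact ⟨hu.1.1, hl _ _ hu.1.2 hvp hu.2⟩
      _ = X.skeletonWeight S * Real.exp (-X.visibleInfo c v) := by
          rw [sum_prodWeight_mask_class, X.mem_fillers.1 hvS]
      _ ≤ X.skeletonWeight S * Real.exp (-(b * S.sum)) := by
          gcongr
          · exact X.skeletonWeight_nonneg S
          · exact hp v hvS hvp

end Lexicon

/-! ### Partitions of blocks -/

namespace Lexicon

variable {α β A B : Type*} {X : Lexicon α A} {Y : Lexicon β B} {N N' c c' : ℕ}
  {a a' b h j δ : ℝ}

/-- The visible information per symbol of the list `u` differs from `j` by at most `δ`. -/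
def IsTypical (X : Lexicon α A) (c : ℕ) (j δ : ℝ) (u : List α) : Prop :=
  |X.visibleInfo c u - j * (X.skeleton u).sum| ≤ δ * (X.skeleton u).sum

theorem isTypical_congr {u v : List α} (h : X.mask c u = X.mask c v) :
    X.IsTypical c j δ u ↔ X.IsTypical c j δ v := by
  rw [IsTypical, IsTypical, X.skeleton_eq_of_mask_eq h, X.visibleInfo_eq_of_mask_eq h]

/-- A partition `E`, finer than by skeleton and coarser than by mask, of the blocks of level `N`
into at most `exp (a * n)` classes per skeleton of total length `n`. -/
structure IsBlockPartition (X : Lexicon α A) (N c : ℕ) (a : ℝ) (E : Setoid (List α)) : Prop where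
  le_ker_skeleton : E ≤ Setoid.ker X.skeleton
  ker_mask_le : Setoid.ker (X.mask c) ≤ E
  numClasses_le : ∀ S, IsBlock N S → (X.numClasses E S : ℝ) ≤ Real.exp (a * S.sum)

theorem isBlockPartition_zero (X : Lexicon α A) :
    IsBlockPartition X 0 0 0 (Setoid.ker X.skeleton) where
  le_ker_skeleton := le_rfl
  ker_mask_le _ _ h := X.skeleton_eq_of_mask_eq h
  numClasses_le S _ := by
    rw [zero_mul, Real.exp_zero]
    refine Nat.cast_le_one.2 (Finset.card_le_one.2 fun x hx y hy => ?_)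
    obtain ⟨u, hu, rfl⟩ := Finset.mem_image.1 hx
    obtain ⟨v, hv, rfl⟩ := Finset.mem_image.1 hy
    exact Quotient.sound ((X.mem_fillers.1 hu).trans (X.mem_fillers.1 hv).symm)

/-- Lists with the property `p` are classified by their mask, the others by the `E`-classes of their
successive blocks of level `N`. -/
def refinePartition (X : Lexicon α A) (N : ℕ) (E : Setoid (List α)) (c : ℕ) (p : List α → Prop) :
    Setoid (List α) :=
  Setoid.ker fun u => (X.skeleton u,
    if p u then Sum.inl (X.mask c u) else Sum.inr (Quotient.mk (X.blockwiseSetoid N E) u))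

section RefinePartition

variable {E : Setoid (List α)} {p : List α → Prop} {u v : List α}

theorem refinePartition_le_ker_skeleton : X.refinePartition N E c p ≤ Setoid.ker X.skeleton :=
  fun _ _ h => (Prod.ext_iff.1 h).1

theorem refinePartition_of_mask_eq (hu : p u) (hv : p v) (h : X.mask c u = X.mask c v) :
    X.refinePartition N E c p u v :=
  Prod.ext (X.skeleton_eq_of_mask_eq h) (by simp [hu, hv, h])

theorem refinePartition_of_blockwise (hu : ¬ p u) (hv : ¬ p v)
    (hskel : X.skeleton u = X.skeleton v) (h : X.blockwiseSetoid N E u v) :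
    X.refinePartition N E c p u v :=
  Prod.ext hskel (by simpa [hu, hv] using Quotient.sound h)

theorem mask_eq_of_refinePartition (h : X.refinePartition N E c p u v) (hu : p u) :
    p v ∧ X.mask c u = X.mask c v := by
  have label_eq := (Prod.ext_iff.1 h).2
  by_cases hv : p v
  · exact ⟨hv, by simpa [hu, hv] using label_eq⟩
  · simp [hu, hv] at label_eq

theorem refinePartition_le_blockwiseSetoid (hE : Setoid.ker (X.mask c) ≤ E) :
    X.refinePartition N E c p ≤ X.blockwiseSetoid N E := by
  intro u v h
  by_cases hu : p u
  · exact ker_mask_le_blockwiseSetoid hE (mask_eq_of_refinePartition h hu).2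
  · have hv : ¬ p v := fun hv =>
      hu (mask_eq_of_refinePartition ((X.refinePartition N E c p).symm' h) hv).1
    have label_eq := (Prod.ext_iff.1 h).2
    simp only [hu, hv, if_false] at label_eq
    exact Quotient.exact (Sum.inr_injective label_eq)

theorem ker_mask_le_refinePartition (hE : Setoid.ker (X.mask c) ≤ E)
    (hp : ∀ u v, X.mask c u = X.mask c v → (p u ↔ p v)) :
    Setoid.ker (X.mask c) ≤ X.refinePartition N E c p := by
  intro u v h
  by_cases hu : p u
  · exact refinePartition_of_mask_eq hu ((hp u v h).1 hu) h
  · exact refinePartition_of_blockwise hu (fun hv => hu ((hp u v h).2 hv))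
      (X.skeleton_eq_of_mask_eq h) (ker_mask_le_blockwiseSetoid hE h)

theorem numClasses_refinePartition_le (S : List ℕ) :
    X.numClasses (X.refinePartition N E c p) S ≤
      (((X.fillers S).filter p).image (X.mask c)).card +
        X.numClasses (X.blockwiseSetoid N E) S := by
  nth_rewrite 1 [numClasses, ← Finset.filter_union_filter_not_eq p (X.fillers S)]
  rw [Finset.image_union]
  refine (Finset.card_union_le _ _).trans (add_le_add ?_ ?_)
  · refine card_image_le_card_image fun u hu v hv h => Quotient.sound ?_
    exact refinePartition_of_mask_eq (Finset.mem_filter.1 hu).2 (Finset.mem_filter.1 hv).2 h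
  · refine le_trans (card_image_le_card_image fun u hu v hv h => Quotient.sound ?_)
      (Finset.card_le_card (Finset.image_subset_image (Finset.filter_subset (¬ p ·) _)))
    rw [Finset.mem_filter, mem_fillers] at hu hv
    exact refinePartition_of_blockwise hu.2 hv.2 (hu.1.trans hv.1.symm) (Quotient.exact h)

end RefinePartition

theorem eventually_exp_add_exp_le (ha : a < a') (hb : b < a') :
    ∀ᶠ n : ℕ in atTop, Real.exp (a * n) + Real.exp (b * n) ≤ Real.exp (a' * n) := by
  have two_mul_le : ∀ᶠ n : ℕ in atTop, Real.log 2 ≤ (a' - max a b) * n :=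
    (tendsto_natCast_atTop_atTop.const_mul_atTop
      (sub_pos.2 (max_lt ha hb))).eventually_ge_atTop _
  filter_upwards [two_mul_le] with n hn
  calc Real.exp (a * n) + Real.exp (b * n)
      ≤ Real.exp (max a b * n) + Real.exp (max a b * n) := by
        gcongr
        exacts [le_max_left a b, le_max_right a b]
    _ = Real.exp (Real.log 2 + max a b * n) := by
        rw [Real.exp_add, Real.exp_log two_pos, two_mul]
    _ ≤ Real.exp (a' * n) := by
        gcongr
        linarith

theorem IsBlockPartition.eventually_refinePartition {E : Setoid (List α)}
    (hE : IsBlockPartition X N c a E) (hc : c ≤ c') (ha : a < a') (hj : j + δ < a') :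
    ∀ᶠ N' in atTop,
      IsBlockPartition X N' c' a' (X.refinePartition N E c' (X.IsTypical c' j δ)) := by
  have ker_mask_le : Setoid.ker (X.mask c') ≤ E := fun u v h =>
    hE.ker_mask_le (X.mask_eq_of_le hc h)
  filter_upwards [eventually_forall_ge_atTop.2 (eventually_exp_add_exp_le hj ha),
    eventually_ge_atTop N] with N' hN' hNN'
  refine ⟨refinePartition_le_ker_skeleton,
    ker_mask_le_refinePartition ker_mask_le fun _ _ => isTypical_congr, fun S hS => ?_⟩
  have card_typical_le :
      ((((X.fillers S).filter (X.IsTypical c' j δ)).image (X.mask c')).card : ℝ) ≤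
        Real.exp ((j + δ) * S.sum) := by
    refine card_image_mask_le fun u hu ht => ?_
    rw [IsTypical, X.mem_fillers.1 hu] at ht
    linarith [(abs_le.1 ht).2]
  calc (X.numClasses (X.refinePartition N E c' (X.IsTypical c' j δ)) S : ℝ)
      ≤ (((X.fillers S).filter (X.IsTypical c' j δ)).image (X.mask c')).card +
          X.numClasses (X.blockwiseSetoid N E) S := by
        exact_mod_cast numClasses_refinePartition_le S
    _ ≤ Real.exp ((j + δ) * S.sum) + Real.exp (a * S.sum) :=
        add_le_add card_typical_le
          (numClasses_blockwiseSetoid_le hE.numClasses_le (hS.isBlockConcat hNN'))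
    _ ≤ Real.exp (a' * S.sum) := hN' _ hS.le_sum

/-! ### Matchings of blocks -/

/-- A relation between blocks of level `N` with equal skeletons, along which the weights on both
sides can be coupled. -/
structure IsBlockRelation (X : Lexicon α A) (Y : Lexicon β B) (N : ℕ)
    (R : List α → List β → Prop) : Prop where
  isBlock : ∀ u v, R u v → IsBlock N (X.skeleton u)
  skeleton_eq : ∀ u v, R u v → Y.skeleton v = X.skeleton u
  hasCoupling : ∀ S, IsBlock N S →
    HasCoupling (X.fillers S) (Y.fillers S) X.prodWeight Y.prodWeight R

theorem IsBlockRelation.swap {R : List α → List β → Prop} (hR : IsBlockRelation X Y N R) :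
    IsBlockRelation Y X N (fun v u => R u v) where
  isBlock v u h := by rw [hR.skeleton_eq u v h]; exact hR.isBlock u v h
  skeleton_eq v u h := (hR.skeleton_eq u v h).symm
  hasCoupling S hS := (hR.hasCoupling S hS).swap

/-- The relation `R` depends only on the classes of its arguments. -/
def IsSaturated (R : List α → List β → Prop) (E : Setoid (List α)) (E' : Setoid (List β)) : Prop :=
  ∀ u u' v v', R u v → E u u' → E' v v' → R u' v'

/-- A relation between blocks of level `N` that depends only on their classes in partitions with
fewer than `exp (h * n)` classes. -/
structure IsBlockMatching (X : Lexicon α A) (Y : Lexicon β B) (N : ℕ) (h : ℝ)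
    (R : List α → List β → Prop) : Prop extends IsBlockRelation X Y N R where
  exists_partitions : ∃ E E', IsSaturated R E E' ∧ (∃ c, ∃ a < h, IsBlockPartition X N c a E) ∧
    ∃ c, ∃ a < h, IsBlockPartition Y N c a E'

theorem IsBlockMatching.swap {R : List α → List β → Prop} (hR : IsBlockMatching X Y N h R) :
    IsBlockMatching Y X N h (fun v u => R u v) where
  toIsBlockRelation := hR.toIsBlockRelation.swap
  exists_partitions :=
    let ⟨E, E', hsat, hE, hE'⟩ := hR.exists_partitions
    ⟨E', E, fun v v' u u' h hv hu => hsat u u' v v' h hu hv, hE', hE⟩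

theorem isBlockMatching_zero (hXY : ∀ m, X.lengthWeight m = Y.lengthWeight m) (hh : 0 < h) :
    IsBlockMatching X Y 0 h
      (fun u v => IsBlock 0 (X.skeleton u) ∧ Y.skeleton v = X.skeleton u) where
  isBlock _ _ huv := huv.1
  skeleton_eq _ _ huv := huv.2
  hasCoupling S hS := by
    have weight_eq : X.skeletonWeight S = Y.skeletonWeight S := by
      rw [skeletonWeight, skeletonWeight, funext hXY]
    refine ⟨fun u v => X.prodWeight u * Y.prodWeight v / X.skeletonWeight S, fun u _ v _ => ?_,
      fun u hu => ?_, fun v hv => ?_, fun u hu v hv _ => ?_⟩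
    · exact div_nonneg (mul_nonneg (X.prodWeight_pos u).le (Y.prodWeight_pos v).le)
        (X.skeletonWeight_nonneg S)
    · have : 0 < X.skeletonWeight S :=
        X.sum_prodWeight S ▸ Finset.sum_pos (fun u _ => X.prodWeight_pos u) ⟨u, hu⟩
      rw [← Finset.sum_div, ← Finset.mul_sum, sum_prodWeight, ← weight_eq,
        mul_div_cancel_right₀ _ this.ne']
    · have : 0 < Y.skeletonWeight S :=
        Y.sum_prodWeight S ▸ Finset.sum_pos (fun v _ => Y.prodWeight_pos v) ⟨v, hv⟩
      rw [← Finset.sum_div, ← Finset.sum_mul, sum_prodWeight, weight_eq,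
        mul_div_cancel_left₀ _ this.ne']
    · rw [X.mem_fillers.1 hu, Y.mem_fillers.1 hv]
      exact ⟨hS, rfl⟩
  exists_partitions := by
    refine ⟨_, _, fun u u' v v' huv hu hv => ?_, ⟨0, 0, hh, isBlockPartition_zero X⟩,
      ⟨0, 0, hh, isBlockPartition_zero Y⟩⟩
    rw [Setoid.ker_def] at hu hv
    rwa [← hu, ← hv]

/-- The partners of `u` under `R` do not all lie in the same `E`-class. -/
def IsAmbiguous (R : List α → List β → Prop) (E : Setoid (List β)) (u : List α) : Prop :=
  ∃ v v', R u v ∧ R u v' ∧ ¬ E v v'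

theorem IsBlockRelation.exists_sparse_labels {R : List α → List β → Prop}
    (hR : IsBlockRelation X Y N R) (hN : N ≤ N') (E : Setoid (List α)) (E' : Setoid (List β))
    (S : List ℕ) (hS : IsBlock N' S) :
    ∃ ρ : Quotient E → Quotient E' → Prop,
      HasCoupling (X.fillers S) (Y.fillers S) X.prodWeight Y.prodWeight
        (fun u v => ρ (Quotient.mk E u) (Quotient.mk E' v)) ∧
      (∀ x y, ρ x y → ∃ u v, Quotient.mk E u = x ∧ Quotient.mk E' v = y ∧
        Blockwise X Y N R u v) ∧
      (((X.fillers S).image (Quotient.mk E)).filter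
        fun x => ∃ y y', y ≠ y' ∧ ρ x y ∧ ρ x y').card ≤ Y.numClasses E' S + 1 := by
  obtain ⟨ρ, hρ, hsub, hcard⟩ :=
    ((hasCoupling_blockwise hR.hasCoupling (hS.isBlockConcat hN)).map (Quotient.mk E)
      (Quotient.mk E')).exists_sparse fun x hx => by
        obtain ⟨u, hu, rfl⟩ := Finset.mem_image.1 hx
        exact sum_fiber_pos (fun u _ => X.prodWeight_pos u) _ hu
  refine ⟨ρ, hρ.of_map (fun u _ => X.prodWeight_pos u) (fun v _ => Y.prodWeight_pos v) _ _,
    fun x y hxy => ?_, hcard⟩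
  obtain ⟨u, -, v, -, hu, hv, huv⟩ := hsub x y hxy
  exact ⟨u, v, hu, hv, huv⟩

theorem IsBlockRelation.exists_sparse {R : List α → List β → Prop} {E₀ E : Setoid (List α)}
    {E₀' E' : Setoid (List β)} (hR : IsBlockRelation X Y N R) (hN : N ≤ N')
    (hsat : IsSaturated R E₀ E₀') (hE : E ≤ X.blockwiseSetoid N E₀)
    (hE' : E' ≤ Y.blockwiseSetoid N E₀') (hskel : E ≤ Setoid.ker X.skeleton)
    (hskel' : E' ≤ Setoid.ker Y.skeleton) :
    ∃ R', IsBlockRelation X Y N' R' ∧ IsSaturated R' E E' ∧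
      (∀ u v, R' u v → Blockwise X Y N R u v) ∧
      ∀ S, IsBlock N' S →
        (((X.fillers S).filter (IsAmbiguous R' E')).image (Quotient.mk E)).card ≤
          Y.numClasses E' S + 1 := by
  choose! ρ hρ using hR.exists_sparse_labels hN E E'
  refine ⟨fun u v => IsBlock N' (X.skeleton u) ∧ Y.skeleton v = X.skeleton u ∧
    ρ (X.skeleton u) (Quotient.mk E u) (Quotient.mk E' v),
    ⟨fun u v h => h.1, fun u v h => h.2.1, fun S hS => ?_⟩, ?_, ?_, fun S hS => ?_⟩
  · refine (hρ S hS).1.mono fun u hu v hv huv => ?_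
    rw [X.mem_fillers.1 hu, Y.mem_fillers.1 hv]
    exact ⟨hS, rfl, huv⟩
  · rintro u u' v v' ⟨hblock, hvu, huv⟩ hu hv
    rw [← Setoid.ker_def.1 (hskel hu), ← Setoid.ker_def.1 (hskel' hv), ← Quotient.sound hu,
      ← Quotient.sound hv]
    exact ⟨hblock, hvu, huv⟩
  · rintro u v ⟨hblock, -, huv⟩
    obtain ⟨u₀, v₀, hu, hv, h₀⟩ := (hρ _ hblock).2.1 _ _ huv
    exact h₀.of_blockwiseSetoid hsat (hE (Quotient.exact hu)) (hE' (Quotient.exact hv))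
  · refine (Finset.card_le_card fun x hx => ?_).trans (hρ S hS).2.2
    obtain ⟨u, hu, rfl⟩ := Finset.mem_image.1 hx
    obtain ⟨huS, v, v', huv, huv', hne⟩ := Finset.mem_filter.1 hu
    rw [X.mem_fillers.1 huS] at huv huv'
    exact Finset.mem_filter.2 ⟨Finset.mem_image_of_mem _ huS, _, _,
      fun h => hne (Quotient.exact h), huv.2.2, huv'.2.2⟩

end Lexicon

/-! ### Refining a matching -/

/-- Position `d` lies in an entry of length at most `c`, or beyond all entries, when the entries of
the skeleton are laid out one after the other. -/
def IsShortAt (c : ℕ) : List ℕ → ℕ → Prop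
  | [], _ => True
  | n :: S, d => if d < n then n ≤ c else IsShortAt c S (d - n)

namespace Lexicon

variable {α β A B : Type*} {X : Lexicon α A} {Y : Lexicon β B} {N N' c : ℕ} {κ : ℕ → ℝ≥0∞}
  {a b h ε : ℝ}

theorem getElem?_spelling_eq_of_mask_eq {u v : List α} (h : X.mask c u = X.mask c v) {d : ℕ}
    (hd : IsShortAt c (X.skeleton u) d) : (X.spelling u)[d]? = (X.spelling v)[d]? := by
  induction u generalizing v d with
  | nil =>
    have : v = [] := by simpa [mask] using h.symm
    rw [this]
  | cons a u ih =>
    rcases v with _ | ⟨a', v⟩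
    · simp [mask] at h
    simp only [mask, List.map_cons, List.cons.injEq] at h
    obtain ⟨h_head, h_tail⟩ := h
    have length_eq : (X.spell a).length = (X.spell a').length := congrArg Prod.fst h_head
    rw [spelling_cons, spelling_cons]
    rw [skeleton_cons, IsShortAt] at hd
    split_ifs at hd with hda
    · have h_letter := congrArg Prod.snd h_head
      simp only [hide, length, ← length_eq] at h_letter
      rw [length] at hd hda
      obtain rfl : a = a' := by simpa [hd] using h_letter
      rw [List.getElem?_append_left hda, List.getElem?_append_left hda]
    · rw [length, not_lt] at hda
      rw [List.getElem?_append_right hda, List.getElem?_append_right (length_eq ▸ hda), ← length_eq]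
      exact ih h_tail hd

/-- The relation `R` determines the symbol at position `d` in the spelling of the partners of
`u`. -/
def DeterminesLetter (Y : Lexicon β B) (R : List α → List β → Prop) (u : List α) (d : ℕ) : Prop :=
  ∀ v v', R u v → R u v' → (Y.spelling v)[d]? = (Y.spelling v')[d]?

/-- The probability that the origin lies at position `d` of a block `u` of level `N` with `Q d u`,
where `κ N` is the normalising factor of the blocks of level `N`. -/
def blockProb (X : Lexicon α A) (κ : ℕ → ℝ≥0∞) (N : ℕ) (Q : ℕ → List α → Prop) : ℝ≥0∞ :=
  ∑' S : List ℕ, if IsBlock N S then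
    ∑ d ∈ Finset.range S.sum, κ N * ENNReal.ofReal (∑ u ∈ X.fillers S with Q d u, X.prodWeight u)
  else 0

theorem sum_prodWeight_le_of_imp {p q : List α → Prop} {_ : DecidablePred p}
    {_ : DecidablePred q} {S : List ℕ} (hpq : ∀ u ∈ X.fillers S, p u → q u) :
    ∑ u ∈ X.fillers S with p u, X.prodWeight u ≤ ∑ u ∈ X.fillers S with q u, X.prodWeight u := by
  refine Finset.sum_le_sum_of_subset_of_nonneg ?_ fun u _ _ => (X.prodWeight_pos u).le
  intro u hu
  rw [Finset.mem_filter] at hu ⊢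
  exact ⟨hu.1, hpq u hu.1 hu.2⟩

theorem sum_prodWeight_le_add {p q₁ q₂ : List α → Prop} (hpq : ∀ u, p u → q₁ u ∨ q₂ u)
    (S : List ℕ) :
    ∑ u ∈ X.fillers S with p u, X.prodWeight u ≤
      ∑ u ∈ X.fillers S with q₁ u, X.prodWeight u +
        ∑ u ∈ X.fillers S with q₂ u, X.prodWeight u := by
  rw [← Finset.sum_union_inter, ← Finset.filter_or]
  exact (sum_prodWeight_le_of_imp fun u _ => hpq u).trans
    (le_add_of_nonneg_right (Finset.sum_nonneg fun u _ => (X.prodWeight_pos u).le))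

theorem blockProb_le_add {Q Q₁ Q₂ : ℕ → List α → Prop}
    (hQ : ∀ d u, Q d u → Q₁ d u ∨ Q₂ d u) :
    blockProb X κ N Q ≤ blockProb X κ N Q₁ + blockProb X κ N Q₂ := by
  unfold blockProb
  rw [← ENNReal.tsum_add]
  refine ENNReal.tsum_le_tsum fun S => ?_
  split_ifs
  · rw [← Finset.sum_add_distrib]
    refine Finset.sum_le_sum fun d _ => ?_
    rw [← mul_add]
    gcongr
    exact (ENNReal.ofReal_le_ofReal (sum_prodWeight_le_add (hQ d) S)).trans
      ENNReal.ofReal_add_le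
  · rw [add_zero]

theorem blockProb_le_mul {Q : ℕ → List α → Prop} {Q' : ℕ → List β → Prop} {C : ℝ} (hC : 0 ≤ C)
    (hQ : ∀ S, IsBlock N S → ∀ d, ∑ u ∈ X.fillers S with Q d u, X.prodWeight u ≤
      C * ∑ v ∈ Y.fillers S with Q' d v, Y.prodWeight v) :
    blockProb X κ N Q ≤ ENNReal.ofReal C * blockProb Y κ N Q' := by
  unfold blockProb
  rw [← ENNReal.tsum_mul_left]
  refine ENNReal.tsum_le_tsum fun S => ?_
  split_ifs with hS
  · rw [Finset.mul_sum]
    refine Finset.sum_le_sum fun d _ => ?_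
    rw [mul_left_comm, ← ENNReal.ofReal_mul hC]
    gcongr
    exact hQ S hS d
  · rw [mul_zero]

/-- The visible information per symbol of long blocks concentrates around `j c`, and `j c` increases
to the limit `h` as the truncation `c` is removed, while long letters become rare. -/
structure HasInformationRate (X : Lexicon α A) (κ : ℕ → ℝ≥0∞) (h : ℝ) (j : ℕ → ℝ) : Prop where
  blockProb_true_le : ∀ N, blockProb X κ N (fun _ _ => True) ≤ 1
  tendsto_not_isTypical : ∀ c, ∀ δ > 0,
    Tendsto (fun N => blockProb X κ N fun _ u => ¬ X.IsTypical c (j c) δ u) atTop (𝓝 0)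
  not_isShortAt_le : ∀ ε : ℝ, 0 < ε → ∃ c₀, ∀ c ≥ c₀, ∀ N,
    blockProb X κ N (fun d u => ¬ IsShortAt c (X.skeleton u) d) ≤ ENNReal.ofReal ε
  lt : ∀ c, j c < h
  tendsto : Tendsto j atTop (𝓝 h)

theorem eventually_exp_add_one_mul_exp_neg_le (hab : a < b) (hb : 0 < b) (hε : 0 < ε) :
    ∀ᶠ n : ℕ in atTop, (Real.exp (a * n) + 1) * Real.exp (-(b * n)) ≤ ε := by
  have tendsto_zero {s : ℝ} (hs : s < 0) : Tendsto (fun n : ℕ => Real.exp (s * n)) atTop (𝓝 0) :=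
    Real.tendsto_exp_atBot.comp (tendsto_natCast_atTop_atTop.const_mul_atTop_of_neg hs)
  have h_sum := (tendsto_zero (sub_neg.2 hab)).add (tendsto_zero (neg_lt_zero.2 hb))
  rw [add_zero] at h_sum
  filter_upwards [h_sum.eventually_le_const hε] with n hn
  rwa [add_mul, ← Real.exp_add, one_mul, ← sub_eq_add_neg, ← sub_mul, ← neg_mul]

section Refinement

variable {E : Setoid (List α)} {E' : Setoid (List β)} {R : List α → List β → Prop}
  {p : List α → Prop} {q : List β → Prop}

/-- There are few ambiguous classes, and a typical class has small weight. -/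
theorem blockProb_isAmbiguous_le (hε : 0 ≤ ε) (hX : blockProb X κ N (fun _ _ => True) ≤ 1)
    (hp : ∀ u, p u → b * (X.skeleton u).sum ≤ X.visibleInfo c u)
    (hmask : ∀ u v, E u v → p u → X.mask c u = X.mask c v)
    (hcard : ∀ S, IsBlock N S →
      (((X.fillers S).filter (IsAmbiguous R E')).image (Quotient.mk E)).card ≤
        Real.exp (a * S.sum) + 1)
    (hN : ∀ n ≥ N, (Real.exp (a * n) + 1) * Real.exp (-(b * n)) ≤ ε) :
    blockProb X κ N (fun _ u => p u ∧ IsAmbiguous R E' u) ≤ ENNReal.ofReal ε := by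
  refine (blockProb_le_mul (Y := X) (Q' := fun _ _ => True) hε fun S hS _ => ?_).trans
    (mul_le_of_le_one_right' hX)
  set K := ((X.fillers S).filter (IsAmbiguous R E')).image (Quotient.mk E)
  rw [Finset.filter_true, sum_prodWeight]
  calc _ ≤ ∑ u ∈ X.fillers S with p u ∧ Quotient.mk E u ∈ K, X.prodWeight u :=
        sum_prodWeight_le_of_imp fun u huS hu =>
          ⟨hu.1, Finset.mem_image_of_mem _ (Finset.mem_filter.2 ⟨huS, hu.2⟩)⟩
    _ ≤ K.card * (X.skeletonWeight S * Real.exp (-(b * S.sum))) := by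
        refine sum_prodWeight_label_le (Quotient.mk E) K (fun u hu hpu => ?_)
          fun u v hu _ huv => hmask u v (Quotient.exact huv) hu
        rw [← X.mem_fillers.1 hu]
        exact hp u hpu
    _ ≤ (Real.exp (a * S.sum) + 1) * (X.skeletonWeight S * Real.exp (-(b * S.sum))) := by
        have := X.skeletonWeight_nonneg S
        gcongr
        exact hcard S hS
    _ = (Real.exp (a * S.sum) + 1) * Real.exp (-(b * S.sum)) * X.skeletonWeight S := by ring
    _ ≤ ε * X.skeletonWeight S :=
        mul_le_mul_of_nonneg_right (hN _ hS.le_sum) (X.skeletonWeight_nonneg S)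

theorem blockProb_exists_not_le (hR : IsBlockRelation X Y N R)
    (hq : ∀ v v', E' v v' → q v → q v') :
    blockProb X κ N (fun _ u => ¬ IsAmbiguous R E' u ∧ ∃ v, R u v ∧ ¬ q v) ≤
      blockProb Y κ N (fun _ v => ¬ q v) := by
  have := blockProb_le_mul (X := X) (Y := Y) (κ := κ) (N := N)
    (Q := fun _ u => ¬ IsAmbiguous R E' u ∧ ∃ v, R u v ∧ ¬ q v) (Q' := fun _ v => ¬ q v)
    zero_le_one fun S hS _ => by
      rw [one_mul]
      refine (hR.hasCoupling S hS).swap.sum_filter_le ?_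
      rintro v - u - huv ⟨hu, v', huv', hv'⟩ hv
      exact hv' (hq v v' (not_not.1 fun hne => hu ⟨v, v', huv, huv', hne⟩) hv)
  rwa [ENNReal.ofReal_one, one_mul] at this

theorem blockProb_not_determinesLetter_le (hR : IsBlockRelation X Y N R)
    (hE' : ∀ v v', E' v v' → q v → q v' ∧ Y.mask c v = Y.mask c v') (p : List α → Prop) :
    blockProb X κ N (fun d u => ¬ DeterminesLetter Y R u d) ≤
      blockProb X κ N (fun d u => ¬ IsShortAt c (X.skeleton u) d) +
        (blockProb X κ N (fun _ u => ¬ p u) +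
          (blockProb X κ N (fun _ u => p u ∧ IsAmbiguous R E' u) +
            blockProb Y κ N (fun _ v => ¬ q v))) := by
  refine (blockProb_le_add (Q₂ := fun _ u => ¬ p u ∨ (p u ∧ IsAmbiguous R E' u) ∨
    ¬ IsAmbiguous R E' u ∧ ∃ v, R u v ∧ ¬ q v) fun d u hdet => ?_).trans
    (add_le_add_right ((blockProb_le_add fun _ _ => id).trans
      (add_le_add_right ((blockProb_le_add fun _ _ => id).trans
        (add_le_add_right (blockProb_exists_not_le hR fun v v' h hv => (hE' v v' h hv).1) _)) _)) _)
  by_contra! hgood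
  obtain ⟨hshort, hpu, hunamb, hq⟩ := hgood
  refine hdet fun v v' hv hv' => ?_
  have hvv' : E' v v' := not_not.1 fun hne => hunamb hpu ⟨v, v', hv, hv', hne⟩
  refine getElem?_spelling_eq_of_mask_eq (hE' v v' hvv' (hq (hunamb hpu) v hv)).2 ?_
  rwa [hR.skeleton_eq u v hv]

end Refinement

/-- First truncate the letters of `Y` so that long letters are rare; this leaves fewer than
`exp (a * n)` classes on that side with `a < h`. Then truncate the letters of `X` so late that a
typical class there has relative weight below `exp (-b * n)` with `a < b < h`. -/
theorem IsBlockMatching.exists_refinement (hh : 0 < h) {jX jY : ℕ → ℝ}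
    (hX : HasInformationRate X κ h jX) (hY : HasInformationRate Y κ h jY)
    {R : List α → List β → Prop} (hR : IsBlockMatching X Y N h R) (hε : 0 < ε) :
    ∃ N' > N, ∃ R', IsBlockMatching X Y N' h R' ∧ (∀ u v, R' u v → Blockwise X Y N R u v) ∧
      blockProb X κ N' (fun d u => ¬ DeterminesLetter Y R' u d) ≤ ENNReal.ofReal ε := by
  obtain ⟨E, E', hsat, ⟨cX₀, aX₀, haX₀, hE⟩, cY₀, aY₀, haY₀, hE'⟩ := hR.exists_partitions
  obtain ⟨cS, hcS⟩ := hX.not_isShortAt_le (ε / 4) (by positivity)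
  obtain ⟨cY, hcY₀, hcS'⟩ : ∃ c, cY₀ ≤ c ∧ cS ≤ c := ⟨_, le_max_left _ _, le_max_right _ _⟩
  obtain ⟨δY, hδY, hjY⟩ := exists_between (sub_pos.2 (hY.lt cY))
  obtain ⟨aY, haY, haYh⟩ := exists_between (max_lt haY₀ (lt_sub_iff_add_lt'.1 hjY))
  obtain ⟨b, hab, hbh⟩ := exists_between (max_lt haYh hh)
  rw [max_lt_iff] at haY hab
  obtain ⟨cX, hcX₀, hbj⟩ :=
    ((eventually_ge_atTop cX₀).and (hX.tendsto.eventually_const_lt hbh)).exists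
  obtain ⟨δX, hδX, hδX'⟩ := exists_between (lt_min (sub_pos.2 (hX.lt cX)) (sub_pos.2 hbj))
  rw [lt_min_iff] at hδX'
  obtain ⟨aX, haX, haXh⟩ := exists_between (max_lt haX₀ (lt_sub_iff_add_lt'.1 hδX'.1))
  rw [max_lt_iff] at haX
  have hε4 : 0 < ENNReal.ofReal (ε / 4) := ENNReal.ofReal_pos.2 (by positivity)
  obtain ⟨N', hNN', hpartX, hpartY, hN', htypX, htypY⟩ := ((eventually_gt_atTop N).and <|
    (hE.eventually_refinePartition hcX₀ haX.1 haX.2).and <|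
    (hE'.eventually_refinePartition hcY₀ haY.1 haY.2).and <| (eventually_forall_ge_atTop.2
      (eventually_exp_add_one_mul_exp_neg_le hab.1 hab.2 (show 0 < ε / 4 by positivity))).and <|
    ((hX.tendsto_not_isTypical cX δX hδX).eventually_le_const hε4).and
    ((hY.tendsto_not_isTypical cY δY hδY).eventually_le_const hε4)).exists
  obtain ⟨R', hR', hsat', hsub, hcard⟩ := hR.toIsBlockRelation.exists_sparse hNN'.le hsat
    (refinePartition_le_blockwiseSetoid fun u v h => hE.ker_mask_le (X.mask_eq_of_le hcX₀ h))
    (refinePartition_le_blockwiseSetoid fun u v h => hE'.ker_mask_le (Y.mask_eq_of_le hcY₀ h))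
    hpartX.le_ker_skeleton hpartY.le_ker_skeleton
  refine ⟨N', hNN', R', ⟨hR', _, _, hsat', ⟨cX, aX, haXh, hpartX⟩, cY, aY, haYh, hpartY⟩, hsub, ?_⟩
  have ambiguous_le := blockProb_isAmbiguous_le (κ := κ) (p := X.IsTypical cX (jX cX) δX)
    (ε := ε / 4) (b := b) (by positivity) (hX.blockProb_true_le N')
    (fun u hu => ?_) (fun u v h hu => (mask_eq_of_refinePartition h hu).2)
    (fun S hS => (Nat.cast_le.2 (hcard S hS)).trans ?_) hN'
  · calc _ ≤ _ := blockProb_not_determinesLetter_le hR'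
            (q := Y.IsTypical cY (jY cY) δY)
            (fun v v' h hv => mask_eq_of_refinePartition h hv) _
      _ ≤ ENNReal.ofReal (ε / 4) + (ENNReal.ofReal (ε / 4) +
          (ENNReal.ofReal (ε / 4) + ENNReal.ofReal (ε / 4))) :=
        add_le_add (hcS cY hcS' N') (add_le_add htypX (add_le_add ambiguous_le htypY))
      _ = ENNReal.ofReal ε := by
        rw [← ENNReal.ofReal_add, ← ENNReal.ofReal_add, ← ENNReal.ofReal_add] <;>
          first | positivity | (congr 1; ring)
  · have : b * (X.skeleton u).sum ≤ (jX cX - δX) * (X.skeleton u).sum := by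
      gcongr
      linarith [hδX'.2]
    linarith [(abs_le.1 hu).1]
  · push_cast
    exact_mod_cast add_le_add_left (hpartY.numClasses_le S hS) 1

/-! ### Towers of matchings -/

/-- An increasing sequence of nested relations between blocks in which, infinitely often, each side
determines the symbols of the other one up to a small probability. -/
structure IsBlockTower (X : Lexicon α A) (Y : Lexicon β B) (κ : ℕ → ℝ≥0∞) (N : ℕ → ℕ)
    (R : ℕ → List α → List β → Prop) : Prop where
  strictMono : StrictMono N
  isBlockRelation : ∀ r, IsBlockRelation X Y (N r) (R r)
  blockwise : ∀ r u v, R (r + 1) u v → Blockwise X Y (N r) (R r) u v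
  frequently_right : ∀ ε : ℝ, 0 < ε → ∃ᶠ r in atTop,
    blockProb X κ (N r) (fun d u => ¬ DeterminesLetter Y (R r) u d) ≤ ENNReal.ofReal ε
  frequently_left : ∀ ε : ℝ, 0 < ε → ∃ᶠ r in atTop,
    blockProb Y κ (N r) (fun d v => ¬ DeterminesLetter X (fun v u => R r u v) v d) ≤
      ENNReal.ofReal ε

theorem IsBlockTower.swap {N : ℕ → ℕ} {R : ℕ → List α → List β → Prop}
    (hT : IsBlockTower X Y κ N R) : IsBlockTower Y X κ N (fun r v u => R r u v) where
  strictMono := hT.strictMono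
  isBlockRelation r := (hT.isBlockRelation r).swap
  blockwise r v u h := (hT.blockwise r u v h).swap
  frequently_right := hT.frequently_left
  frequently_left := hT.frequently_right

theorem IsBlockMatching.exists_alternating_refinement (hh : 0 < h) {jX jY : ℕ → ℝ}
    (hX : HasInformationRate X κ h jX) (hY : HasInformationRate Y κ h jY)
    {R : List α → List β → Prop} (hR : IsBlockMatching X Y N h R) (n : ℕ) :
    ∃ N' > N, ∃ R', IsBlockMatching X Y N' h R' ∧ (∀ u v, R' u v → Blockwise X Y N R u v) ∧
      (Even n → blockProb X κ N' (fun d u => ¬ DeterminesLetter Y R' u d) ≤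
        ENNReal.ofReal (1 / (n + 1))) ∧
      (Odd n → blockProb Y κ N' (fun d v => ¬ DeterminesLetter X (fun v u => R' u v) v d) ≤
        ENNReal.ofReal (1 / (n + 1))) := by
  have hε : (0 : ℝ) < 1 / (n + 1) := by positivity
  rcases Nat.even_or_odd n with hn | hn
  · obtain ⟨N', hN', R', hR', hsub, hdet⟩ := hR.exists_refinement hh hX hY hε
    exact ⟨N', hN', R', hR', hsub, fun _ => hdet, fun hn' => absurd hn (Nat.not_even_iff_odd.2 hn')⟩
  · obtain ⟨N', hN', R', hR', hsub, hdet⟩ := hR.swap.exists_refinement hh hY hX hε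
    exact ⟨N', hN', fun u v => R' v u, hR'.swap, fun u v h => (hsub v u h).swap,
      fun hn' => absurd hn (Nat.not_odd_iff_even.2 hn'), fun _ => hdet⟩

theorem frequently_le_ofReal_of_frequently {p : ℕ → Prop} {f : ℕ → ℝ≥0∞}
    (hp : ∃ᶠ n in atTop, p n) (hf : ∀ n, p n → f (n + 1) ≤ ENNReal.ofReal (1 / (n + 1)))
    (hε : 0 < ε) : ∃ᶠ r in atTop, f r ≤ ENNReal.ofReal ε := by
  refine (tendsto_add_atTop_nat 1).frequently ((hp.and_eventually
    (tendsto_one_div_add_atTop_nhds_zero_nat.eventually_le_const hε)).mono fun n hn => ?_)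
  exact (hf n hn.1).trans (ENNReal.ofReal_le_ofReal hn.2)

theorem exists_isBlockTower (hh : 0 < h) (hXY : ∀ m, X.lengthWeight m = Y.lengthWeight m)
    {jX jY : ℕ → ℝ} (hX : HasInformationRate X κ h jX) (hY : HasInformationRate Y κ h jY) :
    ∃ N R, IsBlockTower X Y κ N R := by
  let Matching := {s : ℕ × (List α → List β → Prop) // IsBlockMatching X Y s.1 h s.2}
  choose N' hN' R' hR' hsub hright hleft using
    fun (n : ℕ) (s : Matching) => s.2.exists_alternating_refinement hh hX hY n
  let s : ℕ → Matching := fun n =>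
    Nat.rec ⟨(0, _), isBlockMatching_zero hXY hh⟩ (fun n s => ⟨(N' n s, R' n s), hR' n s⟩) n
  refine ⟨fun r => (s r).1.1, fun r => (s r).1.2, strictMono_nat_of_lt_succ fun n => hN' n (s n),
    fun r => (s r).2.toIsBlockRelation, fun r => hsub r (s r), fun ε hε => ?_, fun ε hε => ?_⟩
  · exact frequently_le_ofReal_of_frequently Nat.frequently_even (fun n => hright n (s n)) hε
  · exact frequently_le_ofReal_of_frequently Nat.frequently_odd (fun n => hleft n (s n)) hε

end Lexicon

/-! ### Words in bi-infinite sequences -/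

section Words

variable {A : Type*} {x y : ℤ → A} {i j : ℤ} {l l' : List A} {m n : ℕ}

/-- The word of length `n` of `x` starting at position `i`. -/
def window (x : ℤ → A) (i : ℤ) (n : ℕ) : List A := (List.range n).map fun t : ℕ => x (i + t)

@[simp] theorem length_window (x : ℤ → A) (i : ℤ) (n : ℕ) : (window x i n).length = n := by
  simp [window]

@[simp] theorem window_zero (x : ℤ → A) (i : ℤ) : window x i 0 = [] := rfl

theorem window_add (x : ℤ → A) (i : ℤ) (m n : ℕ) :
    window x i (m + n) = window x i m ++ window x (i + m) n := by
  simp only [window, List.range_add, List.map_append, List.map_map, List.append_cancel_left_eq]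
  refine List.map_congr_left fun t _ => ?_
  simp [add_assoc]

theorem getElem?_window (x : ℤ → A) (i : ℤ) {t : ℕ} (ht : t < n) :
    (window x i n)[t]? = some (x (i + t)) := by
  simp [window, ht]

theorem window_congr (h : ∀ t < n, x (i + t) = y (j + t)) : window x i n = window y j n :=
  List.map_congr_left fun t ht => h t (List.mem_range.1 ht)

theorem window_eq_iff (hn : l.length = n) :
    window x i n = l ↔ ∀ t < n, l[t]? = some (x (i + t)) := by
  constructor
  · rintro rfl t ht
    exact getElem?_window x i ht
  · intro h
    refine List.ext_getElem? fun t => ?_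
    by_cases ht : t < n
    · rw [getElem?_window x i ht, h t ht]
    · rw [List.getElem?_eq_none (by simpa using ht), List.getElem?_eq_none (by omega)]

theorem window_eq_append_iff :
    window x i (l ++ l').length = l ++ l' ↔
      window x i l.length = l ∧ window x (i + l.length) l'.length = l' := by
  rw [List.length_append, window_add]
  constructor
  · exact fun h => List.append_inj h (by simp)
  · rintro ⟨h, h'⟩
    rw [h, h']

theorem take_window (x : ℤ → A) (i : ℤ) (h : m ≤ n) : (window x i n).take m = window x i m := by
  obtain ⟨d, rfl⟩ := Nat.exists_eq_add_of_le h
  rw [window_add, List.take_left' (by simp)]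

theorem drop_window (x : ℤ → A) (i : ℤ) (h : m ≤ n) :
    (window x i n).drop m = window x (i + m) (n - m) := by
  obtain ⟨d, rfl⟩ := Nat.exists_eq_add_of_le h
  rw [window_add, List.drop_left' (by simp), Nat.add_sub_cancel_left]

theorem suffix_window_iff :
    l <:+ window x i n ↔ l.length ≤ n ∧ window x (i + n - l.length) l.length = l := by
  have drop_eq (hl : l.length ≤ n) :
      (window x i n).drop (n - l.length) = window x (i + n - l.length) l.length := by
    rw [drop_window _ _ (Nat.sub_le _ _), show n - (n - l.length) = l.length by omega]
    congr 1
    omega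
  rw [List.suffix_iff_eq_drop, length_window]
  constructor
  · intro h
    have hl : l.length ≤ n := by
      rw [h, List.length_drop, length_window]
      exact Nat.sub_le _ _
    exact ⟨hl, (drop_eq hl).symm.trans h.symm⟩
  · rintro ⟨hl, h⟩
    exact h.symm.trans (drop_eq hl).symm

/-- The word `u` ends with its only occurrence of `w`. -/
def IsFirstOccurrence (w u : List A) : Prop := w <:+ u ∧ ∀ j < u.length, ¬ w <:+ u.take j

end Words

/-! ### Marked sequences and their blocks -/

/-- A Bernoulli scheme with a marker word none of whose proper prefixes is a suffix, such that
arbitrarily long return words to the marker are not determined by their lengths. -/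
structure MarkedScheme (A : Type*) [Fintype A] where
  prob : A → ℝ
  isProbVector : IsProbVector prob
  marker : List A
  marker_ne_nil : marker ≠ []
  unbordered : ∀ m, 0 < m → m < marker.length → marker.drop m ≠ marker.take (marker.length - m)
  exists_ne_of_length_eq : ∀ M : ℕ, ∃ u v, IsFirstOccurrence marker u ∧
    IsFirstOccurrence marker v ∧ u ≠ v ∧ u.length = v.length ∧ M ≤ u.length

namespace MarkedScheme

variable {A : Type*} [Fintype A] (X : MarkedScheme A)

/-- The letters of the induced alphabet: words between consecutive markers. -/
abbrev Letter : Type _ := {u : List A // IsFirstOccurrence X.marker u}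

/-- The return words to the marker, weighted by their probabilities. -/
def lexicon : Lexicon X.Letter A where
  spell := Subtype.val
  weight a := (a.1.map X.prob).prod
  fiber m := ((List.finite_length_eq A m).preimage
    (Subtype.val_injective (p := IsFirstOccurrence X.marker)).injOn).toFinset
  weight_pos a := List.prod_pos fun b hb => by
    obtain ⟨c, _, rfl⟩ := List.mem_map.1 hb
    exact X.isProbVector.1 c
  mem_fiber := by simp

/-- A marker of `x` ends just before position `i`. -/
def IsMarked (x : ℤ → A) (i : ℤ) : Prop :=
  window x (i - X.marker.length) X.marker.length = X.marker

/-- A marker ends just before `i`, and no other one ends in the preceding `N` positions. -/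
def IsCut (N : ℕ) (x : ℤ → A) (i : ℤ) : Prop :=
  X.IsMarked x i ∧ ∀ j, i - N < j → j < i → ¬ X.IsMarked x j

/-- The word of `x` from the marked position `i` on starts with the letter `a`. -/
def IsLetterAt (x : ℤ → A) (i : ℤ) (a : X.Letter) : Prop :=
  X.IsMarked x i ∧ window x i (X.lexicon.length a) = a.1

/-- The word of `x` from the marked position `i` on starts with the letters of `u`. -/
def SpellsAt (x : ℤ → A) (i : ℤ) (u : List X.Letter) : Prop :=
  X.IsMarked x i ∧ window x i (X.lexicon.spelling u).length = X.lexicon.spelling u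

/-- `u` is the block of level `N` of `x` starting at `i`. -/
def IsBlockAt (N : ℕ) (x : ℤ → A) (i : ℤ) (u : List X.Letter) : Prop :=
  X.IsCut N x i ∧ IsBlock N (X.lexicon.skeleton u) ∧ X.SpellsAt x i u

theorem marker_length_pos : 0 < X.marker.length := List.length_pos_iff.2 X.marker_ne_nil

theorem lexicon_length (a : X.Letter) : X.lexicon.length a = a.1.length := rfl

theorem marker_length_le (a : X.Letter) : X.marker.length ≤ X.lexicon.length a :=
  a.2.1.length_le

theorem lexicon_length_pos (a : X.Letter) : 0 < X.lexicon.length a :=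
  X.marker_length_pos.trans_le (X.marker_length_le a)

variable {X} {x y : ℤ → A} {N N' : ℕ} {i i' j l : ℤ} {a : X.Letter} {u u' v : List X.Letter}

theorem IsCut.mono (h : N ≤ N') (hc : X.IsCut N' x i) : X.IsCut N x i :=
  ⟨hc.1, fun j hj => hc.2 j (by omega)⟩

theorem IsMarked.not_isMarked (hi : X.IsMarked x i) (hij : i < j)
    (hj : j < i + X.marker.length) : ¬ X.IsMarked x j := by
  intro hb
  obtain ⟨m, rfl⟩ : ∃ m : ℕ, j = i + m := ⟨(j - i).toNat, by omega⟩
  refine X.unbordered m (by omega) (by omega) ?_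
  calc X.marker.drop m
      = window x (i - X.marker.length + m) (X.marker.length - m) := by
        rw [← drop_window _ _ (by omega)]
        exact congrArg _ hi.symm
    _ = window x (i + m - X.marker.length) (X.marker.length - m) := by congr 1; omega
    _ = X.marker.take (X.marker.length - m) := by
        rw [← take_window _ _ (Nat.sub_le X.marker.length m)]
        exact congrArg _ hb

theorem IsLetterAt.isMarked_end (h : X.IsLetterAt x i a) :
    X.IsMarked x (i + X.lexicon.length a) := by
  have := a.2.1
  rw [← h.2, suffix_window_iff] at this
  exact this.2

theorem IsLetterAt.not_isMarked (h : X.IsLetterAt x i a) (hij : i < j)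
    (hj : j < i + X.lexicon.length a) : ¬ X.IsMarked x j := by
  intro hb
  by_cases hc : j < i + X.marker.length
  · exact h.1.not_isMarked hij hc hb
  obtain ⟨m, rfl⟩ : ∃ m : ℕ, j = i + m := ⟨(j - i).toNat, by omega⟩
  refine a.2.2 m (by rw [← lexicon_length]; omega) ?_
  rw [← h.2, take_window _ _ (by omega), suffix_window_iff]
  exact ⟨by omega, hb⟩

theorem exists_isLetterAt (hi : X.IsMarked x i) (hj : X.IsMarked x j) (hij : i < j)
    (h : ∀ l, i < l → l < j → ¬ X.IsMarked x l) :
    ∃ a, X.IsLetterAt x i a ∧ i + X.lexicon.length a = j := by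
  obtain ⟨m, rfl⟩ : ∃ m : ℕ, j = i + m := ⟨(j - i).toNat, by omega⟩
  have hm : X.marker.length ≤ m := by
    by_contra hc
    exact hi.not_isMarked hij (by omega) hj
  refine ⟨⟨window x i m, suffix_window_iff.2 ⟨hm, hj⟩, fun t ht hs => ?_⟩, ⟨hi, ?_⟩, ?_⟩
  · rw [length_window] at ht
    rw [take_window _ _ ht.le, suffix_window_iff] at hs
    have := X.marker_length_pos
    exact h (i + t) (by omega) (by omega) hs.2
  · simp [lexicon_length]
  · simp [lexicon_length]

theorem spellsAt_cons :
    X.SpellsAt x i (a :: u) ↔ X.IsLetterAt x i a ∧ X.SpellsAt x (i + X.lexicon.length a) u := by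
  rw [SpellsAt, Lexicon.spelling_cons, window_eq_append_iff]
  constructor
  · rintro ⟨h, ha, hu⟩
    have : X.IsLetterAt x i a := ⟨h, ha⟩
    exact ⟨this, this.isMarked_end, hu⟩
  · rintro ⟨⟨h, ha⟩, _, hu⟩
    exact ⟨h, ha, hu⟩

theorem spellsAt_append :
    X.SpellsAt x i (u ++ v) ↔
      X.SpellsAt x i u ∧ X.SpellsAt x (i + (X.lexicon.skeleton u).sum) v := by
  induction u generalizing i with
  | nil => simp [SpellsAt]
  | cons a u ih =>
    rw [List.cons_append, spellsAt_cons, ih, spellsAt_cons]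
    simp [add_assoc, and_assoc]

theorem IsLetterAt.eq {b : X.Letter} (ha : X.IsLetterAt x i a) (hb : X.IsLetterAt x i b) :
    a = b := by
  have length_eq : X.lexicon.length a = X.lexicon.length b := by
    have ha' := X.lexicon_length_pos a
    have hb' := X.lexicon_length_pos b
    rcases lt_trichotomy (X.lexicon.length a) (X.lexicon.length b) with h | h | h
    · exact absurd ha.isMarked_end (hb.not_isMarked (by omega) (by omega))
    · exact h
    · exact absurd hb.isMarked_end (ha.not_isMarked (by omega) (by omega))
  apply Subtype.ext
  rw [← ha.2, ← hb.2, length_eq]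

theorem SpellsAt.eq (hu : X.SpellsAt x i u) (hv : X.SpellsAt x i v)
    (h : (X.lexicon.skeleton u).sum = (X.lexicon.skeleton v).sum) : u = v := by
  induction u generalizing i v with
  | nil =>
    cases v with
    | nil => rfl
    | cons b v =>
      have := X.lexicon_length_pos b
      simp only [Lexicon.skeleton_nil, Lexicon.skeleton_cons, List.sum_nil, List.sum_cons] at h
      omega
  | cons a u ih =>
    cases v with
    | nil =>
      have := X.lexicon_length_pos a
      simp only [Lexicon.skeleton_nil, Lexicon.skeleton_cons, List.sum_nil, List.sum_cons] at h
      omega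
    | cons b v =>
      rw [spellsAt_cons] at hu hv
      obtain rfl := hu.1.eq hv.1
      rw [ih hu.2 hv.2 (by simpa using h)]

theorem exists_spellsAt (hi : X.IsMarked x i) (hj : X.IsMarked x j) (hij : i ≤ j) :
    ∃ u, X.SpellsAt x i u ∧ i + (X.lexicon.skeleton u).sum = j := by
  obtain ⟨m, rfl⟩ : ∃ m : ℕ, j = i + m := ⟨(j - i).toNat, by omega⟩
  induction m using Nat.strong_induction_on generalizing i with
  | _ m ih =>
    rcases Nat.eq_zero_or_pos m with rfl | hm
    · exact ⟨[], ⟨hi, by simp⟩, by simp⟩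
    have exists_next : ∃ n : ℕ, 0 < n ∧ X.IsMarked x (i + n) := ⟨m, hm, hj⟩
    set n := Nat.find exists_next
    obtain ⟨hn, hn'⟩ : 0 < n ∧ X.IsMarked x (i + n) := Nat.find_spec exists_next
    have hnm : n ≤ m := Nat.find_min' exists_next ⟨hm, hj⟩
    obtain ⟨a, ha, hla⟩ := exists_isLetterAt hi hn' (by omega) fun l h₁ h₂ hb => by
      obtain ⟨t, rfl⟩ : ∃ t : ℕ, l = i + t := ⟨(l - i).toNat, by omega⟩
      exact Nat.find_min exists_next (m := t) (by omega) ⟨by omega, hb⟩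
    obtain ⟨u, hu, hs⟩ := ih (m - n) (by omega) hn'
      (by convert hj using 1; push_cast [hnm]; ring) (by omega)
    refine ⟨a :: u, spellsAt_cons.2 ⟨ha, by rwa [hla]⟩, ?_⟩
    simp only [Lexicon.skeleton_cons, List.sum_cons]
    push_cast [hnm] at hs ⊢
    omega

theorem IsLetterAt.isCut_end_iff (h : X.IsLetterAt x i a) :
    X.IsCut N x (i + X.lexicon.length a) ↔ N ≤ X.lexicon.length a := by
  constructor
  · rintro ⟨_, hc⟩
    by_contra hN
    exact hc i (by omega) (by have := X.lexicon_length_pos a; omega) h.1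
  · exact fun hN => ⟨h.isMarked_end, fun j h₁ h₂ => h.not_isMarked (by omega) h₂⟩

theorem SpellsAt.not_isCut (h : X.SpellsAt x i u) (hu : ∀ n ∈ X.lexicon.skeleton u, n < N)
    (hij : i < j) (hj : j ≤ i + (X.lexicon.skeleton u).sum) : ¬ X.IsCut N x j := by
  induction u generalizing i with
  | nil =>
    simp only [Lexicon.skeleton_nil, List.sum_nil] at hj
    omega
  | cons a u ih =>
    rw [spellsAt_cons] at h
    simp only [Lexicon.skeleton_cons, List.forall_mem_cons, List.sum_cons] at hu hj
    rcases lt_trichotomy j (i + X.lexicon.length a) with hja | hja | hja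
    · exact fun hc => h.1.not_isMarked hij hja hc.1
    · rw [hja, h.1.isCut_end_iff]
      omega
    · exact ih h.2 hu.2 hja (by omega)

theorem exists_eq_append_singleton_of_isBlock (hu : IsBlock N (X.lexicon.skeleton u)) :
    ∃ v a, u = v ++ [a] ∧ (∀ n ∈ X.lexicon.skeleton v, n < N) ∧ N ≤ X.lexicon.length a := by
  obtain ⟨S₀, m, hS, h₀, hm⟩ := hu
  obtain ⟨v, v', rfl, rfl, hv'⟩ := List.map_eq_append_iff.1 hS
  obtain ⟨a, rfl, rfl⟩ := List.map_eq_singleton_iff.1 hv'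
  exact ⟨v, a, rfl, h₀, hm⟩

theorem SpellsAt.isCut_end (hs : X.SpellsAt x i u) (hu : IsBlock N (X.lexicon.skeleton u)) :
    X.IsCut N x (i + (X.lexicon.skeleton u).sum) := by
  obtain ⟨v, a, rfl, -, ha⟩ := exists_eq_append_singleton_of_isBlock hu
  rw [spellsAt_append, spellsAt_cons] at hs
  simpa [add_assoc] using hs.2.1.isCut_end_iff.2 ha

theorem IsBlockAt.isCut_end (h : X.IsBlockAt N x i u) :
    X.IsCut N x (i + (X.lexicon.skeleton u).sum) := h.2.2.isCut_end h.2.1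

theorem IsBlockAt.not_isCut (h : X.IsBlockAt N x i u) (hij : i < j)
    (hj : j < i + (X.lexicon.skeleton u).sum) : ¬ X.IsCut N x j := by
  obtain ⟨-, hu, hs⟩ := h
  obtain ⟨v, a, rfl, hv, -⟩ := exists_eq_append_singleton_of_isBlock hu
  rw [spellsAt_append, spellsAt_cons] at hs
  simp only [Lexicon.skeleton_append, Lexicon.skeleton_cons, Lexicon.skeleton_nil,
    List.sum_append, List.sum_cons, List.sum_nil] at hj
  by_cases hjv : j ≤ i + (X.lexicon.skeleton v).sum
  · exact hs.1.not_isCut hv hij hjv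
  · exact fun hc => hs.2.1.not_isMarked (by omega) (by omega) hc.1

theorem IsBlockAt.unique (h : X.IsBlockAt N x i u) (h' : X.IsBlockAt N x i' u') (hl : i ≤ l)
    (hr : l < i + (X.lexicon.skeleton u).sum) (hl' : i' ≤ l)
    (hr' : l < i' + (X.lexicon.skeleton u').sum) : i = i' ∧ u = u' := by
  obtain rfl : i = i' := by
    rcases lt_trichotomy i i' with hc | hc | hc
    · exact absurd h'.1 (h.not_isCut hc (by omega))
    · exact hc
    · exact absurd h.1 (h'.not_isCut hc (by omega))
  refine ⟨rfl, h.2.2.eq h'.2.2 ?_⟩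
  rcases lt_trichotomy (X.lexicon.skeleton u).sum (X.lexicon.skeleton u').sum with hc | hc | hc
  · exact absurd h.isCut_end (h'.not_isCut (by omega) (by omega))
  · exact hc
  · exact absurd h'.isCut_end (h.not_isCut (by omega) (by omega))

theorem SpellsAt.isBlock (hs : X.SpellsAt x i u) (hu : u ≠ [])
    (hend : X.IsCut N x (i + (X.lexicon.skeleton u).sum))
    (h : ∀ l, i < l → l < i + (X.lexicon.skeleton u).sum → ¬ X.IsCut N x l) :
    IsBlock N (X.lexicon.skeleton u) := by
  induction u generalizing i with
  | nil => exact absurd rfl hu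
  | cons a u ih =>
    rw [spellsAt_cons] at hs
    have ha := X.lexicon_length_pos a
    simp only [Lexicon.skeleton_cons, List.sum_cons, Nat.cast_add, ← add_assoc] at hend h
    rcases u with _ | ⟨b, u⟩
    · exact .singleton (hs.1.isCut_end_iff.1 (by simpa using hend))
    · have hb := X.lexicon_length_pos b
      refine (ih hs.2 (by simp) hend fun l hl => h l (by omega)).cons ?_
      have := h (i + X.lexicon.length a) (by omega)
        (by simp only [Lexicon.skeleton_cons, List.sum_cons]; omega)
      rwa [hs.1.isCut_end_iff, not_le] at this

theorem exists_isBlockAt_of_isCut (hi : X.IsCut N x i) (hj : X.IsCut N x j) (hij : i < j)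
    (h : ∀ l, i < l → l < j → ¬ X.IsCut N x l) :
    ∃ u, X.IsBlockAt N x i u ∧ i + (X.lexicon.skeleton u).sum = j := by
  obtain ⟨u, hu, rfl⟩ := exists_spellsAt hi.1 hj.1 hij.le
  have hne : u ≠ [] := by
    rintro rfl
    simp at hij
  exact ⟨u, ⟨hi, hu.isBlock hne hj h, hu⟩, rfl⟩

theorem exists_isBlockAt (hl : ∃ i ≤ l, X.IsCut N x i) (hr : ∃ i, l < i ∧ X.IsCut N x i) :
    ∃ i u, X.IsBlockAt N x i u ∧ i ≤ l ∧ l < i + (X.lexicon.skeleton u).sum := by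
  obtain ⟨i, ⟨hil, hi⟩, hmax⟩ := Int.exists_greatest_of_bdd (P := fun i => i ≤ l ∧ X.IsCut N x i)
    ⟨l, fun z hz => hz.1⟩ hl
  obtain ⟨j, ⟨hlj, hj⟩, hmin⟩ := Int.exists_least_of_bdd (P := fun i => l < i ∧ X.IsCut N x i)
    ⟨l, fun z hz => hz.1.le⟩ hr
  obtain ⟨u, hu, hs⟩ := exists_isBlockAt_of_isCut hi hj (by omega) fun m h₁ h₂ hc => by
    by_cases hm : m ≤ l
    · have := hmax m ⟨hm, hc⟩
      omega
    · have := hmin m ⟨by omega, hc⟩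
      omega
  exact ⟨i, u, hu, hil, by omega⟩

theorem SpellsAt.exists_isBlockAt (hU : IsBlockConcat N (X.lexicon.skeleton u))
    (hc : X.IsCut N x i) (hs : X.SpellsAt x i u) (hl : i ≤ l)
    (hr : l < i + (X.lexicon.skeleton u).sum) :
    ∃ u₁ u₂ u₃, u = u₁ ++ (u₂ ++ u₃) ∧ IsBlockConcat N (X.lexicon.skeleton u₁) ∧
      X.IsBlockAt N x (i + (X.lexicon.skeleton u₁).sum) u₂ ∧
      i + (X.lexicon.skeleton u₁).sum ≤ l ∧
      l < i + (X.lexicon.skeleton u₁).sum + (X.lexicon.skeleton u₂).sum := by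
  generalize hS : X.lexicon.skeleton u = S at hU
  induction hU generalizing i u with
  | nil =>
    simp only [hS, List.sum_nil] at hr
    omega
  | @append b S hb _ ih =>
    obtain ⟨v, w, rfl, rfl, rfl⟩ := List.map_eq_append_iff.1 hS
    rw [spellsAt_append] at hs
    have hv : X.IsBlockAt N x i v := ⟨hc, hb, hs.1⟩
    by_cases h : l < i + (X.lexicon.skeleton v).sum
    · exact ⟨[], v, w, rfl, .nil, by simpa using hv, by simpa using hl, by simpa using h⟩
    · simp only [Lexicon.skeleton_append, List.sum_append] at hr
      obtain ⟨u₁, u₂, u₃, rfl, h₁, h₂, h₃, h₄⟩ :=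
        ih hv.isCut_end hs.2 (by omega) (by omega) rfl
      refine ⟨v ++ u₁, u₂, u₃, by simp, ?_, ?_, ?_, ?_⟩
      · rw [Lexicon.skeleton_append]
        exact .append hb h₁
      · simpa [add_assoc] using h₂
      all_goals simp only [Lexicon.skeleton_append, List.sum_append]; omega

theorem IsBlockAt.exists_eq_append (hN : N ≤ N') (hu' : X.IsBlockAt N' x i' u')
    (hu : X.IsBlockAt N x i u) (hl' : i' ≤ l) (hr' : l < i' + (X.lexicon.skeleton u').sum)
    (hl : i ≤ l) (hr : l < i + (X.lexicon.skeleton u).sum) :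
    ∃ u₁ u₃, u' = u₁ ++ (u ++ u₃) ∧ IsBlockConcat N (X.lexicon.skeleton u₁) ∧
      i = i' + (X.lexicon.skeleton u₁).sum := by
  obtain ⟨u₁, u₂, u₃, h₁, h₂, h₃, h₄, h₅⟩ :=
    hu'.2.2.exists_isBlockAt (hu'.2.1.isBlockConcat hN) (hu'.1.mono hN) hl' hr'
  obtain ⟨rfl, rfl⟩ := h₃.unique hu h₄ h₅ hl hr
  exact ⟨u₁, u₃, h₁, h₂, rfl⟩

/-! ### Dependence on finitely many coordinates -/

theorem isMarked_congr
    (h : ∀ t : ℤ, -(X.marker.length : ℤ) ≤ t → t < 0 → x (i + t) = y (j + t)) :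
    X.IsMarked x i ↔ X.IsMarked y j := by
  rw [IsMarked, IsMarked, window_congr (y := y) (j := j - X.marker.length)]
  intro t ht
  have := h (t - X.marker.length) (by omega) (by omega)
  convert this using 2 <;> ring

theorem isCut_congr
    (h : ∀ t : ℤ, -(X.marker.length + N : ℤ) ≤ t → t < 0 → x (i + t) = y (j + t)) :
    X.IsCut N x i ↔ X.IsCut N y j := by
  have isMarked_add (s : ℤ) (hs : -(N : ℤ) ≤ s) (hs' : s ≤ 0) :
      X.IsMarked x (i + s) ↔ X.IsMarked y (j + s) :=
    isMarked_congr fun t _ _ => by simpa [add_assoc] using h (s + t) (by omega) (by omega)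
  have isMarked_iff : X.IsMarked x i ↔ X.IsMarked y j := by
    simpa using isMarked_add 0 (by omega) le_rfl
  rw [IsCut, IsCut, isMarked_iff]
  refine and_congr_right fun _ => ⟨fun H l h₁ h₂ hb => ?_, fun H l h₁ h₂ hb => ?_⟩
  · exact H (i + (l - j)) (by omega) (by omega)
      ((isMarked_add _ (by omega) (by omega)).2 (by simpa using hb))
  · exact H (j + (l - i)) (by omega) (by omega)
      ((isMarked_add _ (by omega) (by omega)).1 (by simpa using hb))

theorem spellsAt_congr
    (h : ∀ t : ℤ, -(X.marker.length : ℤ) ≤ t → t < (X.lexicon.skeleton u).sum →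
      x (i + t) = y (j + t)) :
    X.SpellsAt x i u ↔ X.SpellsAt y j u := by
  rw [SpellsAt, SpellsAt, isMarked_congr (y := y) (j := j) fun t h₁ h₂ => h t h₁ (by omega),
    window_congr (y := y) (j := j)]
  rw [Lexicon.length_spelling]
  exact fun t ht => h t (by omega) (by omega)

theorem isBlockAt_congr
    (h : ∀ t : ℤ, -(X.marker.length + N : ℤ) ≤ t → t < (X.lexicon.skeleton u).sum →
      x (i + t) = y (j + t)) :
    X.IsBlockAt N x i u ↔ X.IsBlockAt N y j u := by
  rw [IsBlockAt, IsBlockAt, isCut_congr (y := y) (j := j) fun t h₁ h₂ => h t h₁ (by omega),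
    spellsAt_congr (y := y) (j := j) fun t h₁ h₂ => h t (by omega) h₂]

end MarkedScheme

/-! ### Functions of finitely many coordinates -/

section DependsOnFinite

variable {ι A β : Type*} [Finite A] {s : Set ι} [Finite s]

theorem measurable_of_dependsOn [MeasurableSpace A] [DiscreteMeasurableSpace A]
    [MeasurableSpace β] {f : (ι → A) → β} (hf : DependsOn f s) : Measurable f := by
  rcases isEmpty_or_nonempty β with hβ | hβ
  · have : IsEmpty (ι → A) := ⟨fun x => hβ.elim (f x)⟩
    exact measurable_of_empty f
  · obtain ⟨g, rfl⟩ := dependsOn_iff_exists_comp.1 hf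
    exact (measurable_of_countable g).comp
      (measurable_pi_lambda _ fun i => measurable_pi_apply i.1)

theorem measurableSet_of_dependsOn [MeasurableSpace A] [DiscreteMeasurableSpace A]
    {P : (ι → A) → Prop} (hP : DependsOn P s) : MeasurableSet {x | P x} :=
  measurableSet_setOfPred.2 (measurable_of_dependsOn hP)

theorem exists_bound_of_dependsOn {f : (ι → A) → ℝ} (hf : DependsOn f s) :
    ∃ C, ∀ x, |f x| ≤ C := by
  obtain ⟨g, rfl⟩ := dependsOn_iff_exists_comp.1 hf
  obtain ⟨C, hC⟩ := (Set.finite_range fun y => |g y|).bddAbove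
  exact ⟨C, fun x => hC ⟨_, rfl⟩⟩

end DependsOnFinite

/-! ### Bernoulli measures -/

theorem _root_.IsBernoulliMeasure.unique {A : Type*} [Finite A] [MeasurableSpace A]
    [DiscreteMeasurableSpace A] {p : A → ℝ} {μ ν : Measure (ℤ → A)}
    (hμ : IsBernoulliMeasure μ p) (hν : IsBernoulliMeasure ν p) : μ = ν := by
  rcases isEmpty_or_nonempty A with hA | ⟨⟨a₀⟩⟩
  · exact Measure.eq_zero_of_isEmpty μ |>.trans (Measure.eq_zero_of_isEmpty ν).symm
  have measure_univ_eq {ν : Measure (ℤ → A)} (hν : IsBernoulliMeasure ν p) :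
      ν Set.univ = 1 := by simpa using hν ∅ fun _ => a₀
  have : IsFiniteMeasure μ := ⟨by simp [measure_univ_eq hμ]⟩
  let cylinders : Set (Set (ℤ → A)) :=
    {E | ∃ (F : Finset ℤ) (s : ℤ → A), E = {x | ∀ i ∈ F, x i = s i}}
  refine ext_of_generate_finite cylinders (le_antisymm ?_ ?_) ?_ ?_
    ((measure_univ_eq hμ).trans (measure_univ_eq hν).symm)
  · refine iSup_le fun i => measurable_iff_comap_le.1 ?_
    refine @measurable_to_countable' _ _ _ _ (MeasurableSpace.generateFrom cylinders) _ fun a => ?_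
    exact MeasurableSpace.measurableSet_generateFrom ⟨{i}, fun _ => a, by ext x; simp⟩
  · refine MeasurableSpace.generateFrom_le ?_
    rintro _ ⟨F, s, rfl⟩
    exact measurableSet_of_dependsOn (s := (F : Set ℤ)) fun x y hxy =>
      propext (forall₂_congr fun i hi => by rw [hxy i hi])
  · rintro _ ⟨F, s, rfl⟩ _ ⟨G, t, rfl⟩ ⟨z, hzF, hzG⟩
    refine ⟨F ∪ G, z, ?_⟩
    ext x
    simp only [Set.mem_ofPred_eq] at hzF hzG
    simp only [Set.mem_inter_iff, Set.mem_ofPred_eq, Finset.mem_union, or_imp, forall_and]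
    exact and_congr (forall₂_congr fun i hi => by rw [hzF i hi])
      (forall₂_congr fun i hi => by rw [hzG i hi])
  · rintro _ ⟨F, s, rfl⟩
    rw [hμ, hν]

/-- The iterated shift. -/
def shiftBy {A : Type*} (n : ℤ) (x : ℤ → A) : ℤ → A := fun i => x (i + n)

theorem measurable_shiftBy {A : Type*} [MeasurableSpace A] (n : ℤ) :
    Measurable (shiftBy n : (ℤ → A) → ℤ → A) :=
  measurable_pi_lambda _ fun i => measurable_pi_apply (i + n)

theorem dependsOn_comp_shiftBy {A β : Type*} {a b : ℤ} {f : (ℤ → A) → β}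
    (hf : DependsOn f (Set.Ico a b)) (n : ℤ) :
    DependsOn (fun x => f (shiftBy n x)) (Set.Ico (a + n) (b + n)) :=
  fun _ _ hxy => hf fun i hi => hxy (i + n) ⟨by linarith [hi.1], by linarith [hi.2]⟩

theorem dependsOn_window {A : Type*} (i : ℤ) (n : ℕ) :
    DependsOn (fun x : ℤ → A => window x i n) (Set.Ico i (i + n)) :=
  fun _ _ hxy => window_congr fun t ht => hxy _ ⟨by omega, by omega⟩

theorem dependsOn_window_eq {A : Type*} (i : ℤ) (n : ℕ) (l : List A) :
    DependsOn (fun x : ℤ → A => window x i n = l) (Set.Ico i (i + n)) :=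
  fun _ _ hxy => congrArg (· = l) (dependsOn_window i n hxy)

section Bernoulli

variable {A : Type*} [Fintype A] [MeasurableSpace A]

/-- The measure on the alphabet with weights `p`. -/
def letterMeasure (p : A → ℝ) : Measure A := ∑ a, ENNReal.ofReal (p a) • Measure.dirac a

/-- The Bernoulli measure with weights `p`. -/
def bernoulliMeasure (p : A → ℝ) : Measure (ℤ → A) := Measure.infinitePi fun _ => letterMeasure p

theorem isProbabilityMeasure_letterMeasure {p : A → ℝ} (hp : IsProbVector p) :
    IsProbabilityMeasure (letterMeasure p) := by
  constructor
  simp only [letterMeasure, Measure.coe_finsetSum, Finset.sum_apply, Measure.smul_apply,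
    smul_eq_mul, measure_univ, mul_one]
  rw [← ENNReal.ofReal_sum_of_nonneg fun a _ => (hp.1 a).le, hp.2, ENNReal.ofReal_one]

theorem isProbabilityMeasure_bernoulliMeasure {p : A → ℝ} (hp : IsProbVector p) :
    IsProbabilityMeasure (bernoulliMeasure p) := by
  have := isProbabilityMeasure_letterMeasure hp
  unfold bernoulliMeasure
  infer_instance

variable [DiscreteMeasurableSpace A]

theorem letterMeasure_singleton (p : A → ℝ) (a : A) :
    letterMeasure p {a} = ENNReal.ofReal (p a) := by
  simp only [letterMeasure, Measure.coe_finsetSum, Finset.sum_apply, Measure.smul_apply,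
    smul_eq_mul]
  rw [Finset.sum_eq_single a]
  · simp
  · intro b _ hb
    simp [hb]
  · simp

variable {p : A → ℝ} (hp : IsProbVector p)

include hp

theorem isBernoulliMeasure_bernoulliMeasure : IsBernoulliMeasure (bernoulliMeasure p) p := by
  have := isProbabilityMeasure_letterMeasure hp
  intro F s
  have cylinder_eq : {x : ℤ → A | ∀ i ∈ F, x i = s i} = Set.pi F fun i => {s i} := by
    ext x
    simp
  rw [cylinder_eq, bernoulliMeasure, Measure.infinitePi_pi _ fun i _ => MeasurableSet.of_discrete]
  simp_rw [letterMeasure_singleton]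
  rw [ENNReal.ofReal_prod_of_nonneg fun i _ => (hp.1 _).le]

theorem measurePreserving_shiftBy (n : ℤ) :
    MeasurePreserving (shiftBy n) (bernoulliMeasure p) (bernoulliMeasure p) := by
  refine ⟨measurable_shiftBy n, ?_⟩
  refine IsBernoulliMeasure.unique (fun F s => ?_) (isBernoulliMeasure_bernoulliMeasure hp)
  rw [Measure.map_apply (measurable_shiftBy n)
    (measurableSet_of_dependsOn (s := (F : Set ℤ)) fun x y hxy =>
      propext (forall₂_congr fun i hi => by rw [hxy i hi]))]
  have := isBernoulliMeasure_bernoulliMeasure hp (F.map (addRightEmbedding n)) fun i => s (i - n)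
  simp only [Finset.mem_map, addRightEmbedding_apply, forall_exists_index, and_imp,
    forall_apply_eq_imp_iff₂, Finset.prod_map, add_sub_cancel_right] at this
  exact this

theorem bernoulliMeasure_shiftBy (n : ℤ) {E : Set (ℤ → A)} (hE : MeasurableSet E) :
    bernoulliMeasure p {x | shiftBy n x ∈ E} = bernoulliMeasure p E :=
  (measurePreserving_shiftBy hp n).measure_preimage hE.nullMeasurableSet

theorem indepFun_of_dependsOn {β γ : Type*} [Nonempty β] [Nonempty γ] [MeasurableSpace β]
    [MeasurableSpace γ] {s t : Set ℤ} [Finite s] [Finite t] {f : (ℤ → A) → β} {g : (ℤ → A) → γ}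
    (hf : DependsOn f s) (hg : DependsOn g t) (hst : Disjoint s t) :
    IndepFun f g (bernoulliMeasure p) := by
  have := isProbabilityMeasure_letterMeasure hp
  lift s to Finset ℤ using s.toFinite
  lift t to Finset ℤ using t.toFinite
  obtain ⟨f, rfl⟩ := dependsOn_iff_exists_comp.1 hf
  obtain ⟨g, rfl⟩ := dependsOn_iff_exists_comp.1 hg
  have indep : iIndepFun (fun (i : ℤ) (x : ℤ → A) => x i) (bernoulliMeasure p) :=
    iIndepFun_infinitePi (X := fun (_ : ℤ) (a : A) => a) fun _ => measurable_id
  exact (indep.indepFun_finset s t (Finset.disjoint_coe.1 hst)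
    fun i => measurable_pi_apply i).comp (measurable_of_countable f) (measurable_of_countable g)

theorem measure_and_of_dependsOn {s t : Set ℤ} [Finite s] [Finite t] {P Q : (ℤ → A) → Prop}
    (hP : DependsOn P s) (hQ : DependsOn Q t) (hst : Disjoint s t) :
    bernoulliMeasure p {x | P x ∧ Q x} =
      bernoulliMeasure p {x | P x} * bernoulliMeasure p {x | Q x} := by
  have preimage_eq (P : (ℤ → A) → Prop) : P ⁻¹' {True} = {x | P x} := by
    ext x
    simp
  have := (indepFun_of_dependsOn hp hP hQ hst).measure_inter_preimage_eq_mul {True} {True}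
    MeasurableSet.of_discrete MeasurableSet.of_discrete
  rw [preimage_eq, preimage_eq] at this
  exact this

theorem integrable_of_dependsOn {s : Set ℤ} [Finite s] {f : (ℤ → A) → ℝ} (hf : DependsOn f s) :
    Integrable f (bernoulliMeasure p) := by
  have := isProbabilityMeasure_bernoulliMeasure hp
  obtain ⟨C, hC⟩ := exists_bound_of_dependsOn hf
  exact .of_bound (measurable_of_dependsOn hf).aestronglyMeasurable C (ae_of_all _ hC)

theorem bernoulliMeasure_window_eq (i : ℤ) (l : List A) :
    bernoulliMeasure p {x | window x i l.length = l} = ENNReal.ofReal (l.map p).prod := by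
  have := isProbabilityMeasure_bernoulliMeasure hp
  induction l generalizing i with
  | nil => simp
  | cons a l ih =>
    have window_cons : {x : ℤ → A | window x i (a :: l).length = a :: l} =
        {x | window x i 1 = [a] ∧ window x (i + 1) l.length = l} := by
      ext x
      simpa using window_eq_append_iff (x := x) (i := i) (l := [a]) (l' := l)
    have measure_head : bernoulliMeasure p {x | window x i 1 = [a]} = ENNReal.ofReal (p a) := by
      simpa [window] using isBernoulliMeasure_bernoulliMeasure hp {i} fun _ => a
    rw [window_cons, measure_and_of_dependsOn hp (dependsOn_window_eq i 1 [a])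
      (dependsOn_window_eq (i + 1) l.length l) (Set.disjoint_left.2 fun j hj hj' => by
        simp only [Set.mem_Ico, Nat.cast_one] at hj hj'
        omega), measure_head, ih, List.map_cons, List.prod_cons, ENNReal.ofReal_mul (hp.1 a).le]

end Bernoulli

/-! ### The law of large numbers for functions of finitely many coordinates -/

section LinearBounds

theorem exists_linear_bound_of_tendsto {s : ℕ → ℝ} {m : ℝ}
    (h : Tendsto (fun n : ℕ => s n / n) atTop (𝓝 m)) {ε : ℝ} (hε : 0 < ε) :
    ∃ C, ∀ n, |s n - n * m| ≤ ε * n + C := by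
  obtain ⟨n₀, hn₀⟩ := Metric.tendsto_atTop.1 h ε hε
  set C := ∑ n ∈ Finset.range (n₀ + 1), |s n - n * m|
  have hC : 0 ≤ C := Finset.sum_nonneg fun _ _ => abs_nonneg _
  refine ⟨C, fun n => ?_⟩
  by_cases hn : n < n₀ + 1
  · have : |s n - n * m| ≤ C := Finset.single_le_sum (f := fun n : ℕ => |s n - n * m|)
      (fun _ _ => abs_nonneg _) (Finset.mem_range.2 hn)
    have : 0 ≤ ε * n := by positivity
    linarith
  · have hpos : (0 : ℝ) < n := by exact_mod_cast (by omega : 0 < n)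
    have close := (hn₀ n (by omega)).le
    rw [Real.dist_eq] at close
    calc |s n - n * m| = n * |s n / n - m| := by
          rw [← abs_of_pos hpos, ← abs_mul, abs_of_pos hpos]
          congr 1
          field_simp
      _ ≤ n * ε := by gcongr
      _ ≤ ε * n + C := by linarith

theorem sum_range_mul_eq_sum_residues {R : Type*} [AddCommMonoid R] (M : ℕ) (f : ℕ → R) (q : ℕ) :
    ∑ s ∈ Finset.range (M * q), f s =
      ∑ ρ ∈ Finset.range M, ∑ t ∈ Finset.range q, f (M * t + ρ) := by
  induction q with
  | zero => simp
  | succ q ih =>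
    rw [Nat.mul_succ, Finset.sum_range_add, ih]
    simp_rw [Finset.sum_range_succ, Finset.sum_add_distrib]

theorem abs_sum_range_sub_le {f : ℕ → ℝ} {K : ℝ} (hK : ∀ s, |f s| ≤ K) (m : ℝ) (r : ℕ) :
    |∑ s ∈ Finset.range r, f s - r * m| ≤ r * (K + |m|) :=
  calc |∑ s ∈ Finset.range r, f s - r * m| = |∑ s ∈ Finset.range r, (f s - m)| := by
        simp [Finset.sum_sub_distrib]
    _ ≤ ∑ s ∈ Finset.range r, |f s - m| := Finset.abs_sum_le_sum_abs _ _
    _ ≤ ∑ _s ∈ Finset.range r, (K + |m|) :=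
        Finset.sum_le_sum fun s _ => (abs_sub _ _).trans (by gcongr; exact hK s)
    _ = r * (K + |m|) := by rw [Finset.sum_const, Finset.card_range, nsmul_eq_mul]

theorem exists_linear_bound_of_residues {M : ℕ} (hM : 0 < M) {f : ℕ → ℝ} {m K : ℝ}
    (hK : ∀ s, |f s| ≤ K)
    (h : ∀ ρ < M, ∀ ε > 0, ∃ C, ∀ q : ℕ,
      |∑ t ∈ Finset.range q, f (M * t + ρ) - q * m| ≤ ε * q + C)
    {ε : ℝ} (hε : 0 < ε) : ∃ C, ∀ n : ℕ, |∑ s ∈ Finset.range n, f s - n * m| ≤ ε * n + C := by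
  choose! C hC using fun ρ hρ => h ρ hρ ε hε
  have hKm : 0 ≤ K + |m| := add_nonneg ((abs_nonneg _).trans (hK 0)) (abs_nonneg _)
  have full_periods (q : ℕ) : |∑ s ∈ Finset.range (M * q), f s - (M * q : ℕ) * m| ≤
      ε * (M * q : ℕ) + ∑ ρ ∈ Finset.range M, C ρ :=
    calc |∑ s ∈ Finset.range (M * q), f s - (M * q : ℕ) * m|
        = |∑ ρ ∈ Finset.range M, (∑ t ∈ Finset.range q, f (M * t + ρ) - q * m)| := by
          rw [sum_range_mul_eq_sum_residues, Finset.sum_sub_distrib]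
          simp [mul_assoc]
      _ ≤ ∑ ρ ∈ Finset.range M, |∑ t ∈ Finset.range q, f (M * t + ρ) - q * m| :=
          Finset.abs_sum_le_sum_abs _ _
      _ ≤ ∑ ρ ∈ Finset.range M, (ε * q + C ρ) :=
          Finset.sum_le_sum fun ρ hρ => hC ρ (Finset.mem_range.1 hρ) q
      _ = ε * (M * q : ℕ) + ∑ ρ ∈ Finset.range M, C ρ := by
          simp only [Finset.sum_add_distrib, Finset.sum_const, Finset.card_range, nsmul_eq_mul,
            Nat.cast_mul]
          ring
  refine ⟨∑ ρ ∈ Finset.range M, C ρ + M * (K + |m|), fun n => ?_⟩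
  obtain ⟨q, r, hr, rfl⟩ : ∃ q r, r < M ∧ M * q + r = n :=
    ⟨n / M, n % M, Nat.mod_lt _ hM, Nat.div_add_mod n M⟩
  calc |∑ s ∈ Finset.range (M * q + r), f s - (M * q + r : ℕ) * m|
      = |(∑ s ∈ Finset.range (M * q), f s - (M * q : ℕ) * m) +
          (∑ s ∈ Finset.range r, f (M * q + s) - r * m)| := by
        rw [Finset.sum_range_add]
        push_cast
        ring_nf
    _ ≤ (ε * (M * q : ℕ) + ∑ ρ ∈ Finset.range M, C ρ) + r * (K + |m|) :=
        (abs_add_le _ _).trans (add_le_add (full_periods q)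
          (abs_sum_range_sub_le (fun s => hK (M * q + s)) m r))
    _ ≤ (ε * (M * q + r : ℕ) + ∑ ρ ∈ Finset.range M, C ρ) + M * (K + |m|) := by
        gcongr
        omega
    _ = _ := by ring

end LinearBounds

section LawOfLargeNumbers

variable {A : Type*} [Fintype A] [MeasurableSpace A] [DiscreteMeasurableSpace A] {p : A → ℝ}
  (hp : IsProbVector p) {a b : ℤ} {f : (ℤ → A) → ℝ} (hf : DependsOn f (Set.Ico a b))

include hp hf

theorem ae_tendsto_average_of_spaced (e : ℕ → ℤ) (he : ∀ s t, s ≠ t → b - a ≤ |e s - e t|) :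
    ∀ᵐ x ∂bernoulliMeasure p,
      Tendsto (fun n : ℕ => (∑ t ∈ Finset.range n, f (shiftBy (e t) x)) / n) atTop
        (𝓝 (∫ x, f x ∂bernoulliMeasure p)) := by
  have dependsOn (n : ℤ) := dependsOn_comp_shiftBy hf n
  have identDistrib (n : ℤ) : IdentDistrib (fun x => f (shiftBy n x)) f (bernoulliMeasure p)
      (bernoulliMeasure p) := by
    refine ⟨(measurable_of_dependsOn (dependsOn n)).aemeasurable,
      (measurable_of_dependsOn hf).aemeasurable, ?_⟩
    conv_rhs => rw [← (measurePreserving_shiftBy hp n).map_eq]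
    rw [Measure.map_map (measurable_of_dependsOn hf) (measurable_shiftBy n)]
    rfl
  have := strong_law_ae_real (μ := bernoulliMeasure p) (fun t x => f (shiftBy (e t) x))
    (integrable_of_dependsOn hp (dependsOn _)) (fun s t hst => ?_)
    (fun t => (identDistrib _).trans (identDistrib _).symm)
  · rwa [(identDistrib (e 0)).integral_eq] at this
  · refine indepFun_of_dependsOn hp (dependsOn _) (dependsOn _)
      (Set.disjoint_left.2 fun j hj hj' => ?_)
    have := he s t hst
    rw [Set.mem_Ico] at hj hj'
    rcases le_abs.1 this with h | h <;> omega

-- Along a residue class modulo `M > b - a` the summands are independent.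
theorem ae_exists_linear_bound_of_abs_eq_one (σ c : ℤ) (hσ : |σ| = 1) :
    ∀ᵐ x ∂bernoulliMeasure p, ∀ ε > 0, ∃ C, ∀ n : ℕ,
      |∑ s ∈ Finset.range n, f (shiftBy (σ * s + c) x) - n * ∫ x, f x ∂bernoulliMeasure p| ≤
        ε * n + C := by
  obtain ⟨K, hK⟩ := exists_bound_of_dependsOn hf
  set M := (b - a).toNat + 1
  have residues (ρ : ℕ) :=
    ae_tendsto_average_of_spaced hp hf (fun t => σ * (M * t + ρ : ℕ) + c) fun s t hst =>
      calc b - a ≤ M * 1 := by omega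
        _ ≤ M * |(s : ℤ) - t| := by
            gcongr
            exact Int.one_le_abs (sub_ne_zero.2 (by exact_mod_cast hst))
        _ = |σ * (M * ((s : ℤ) - t))| := by rw [abs_mul, hσ, one_mul, abs_mul, Nat.abs_cast]
        _ = |σ * (M * s + ρ : ℕ) + c - (σ * (M * t + ρ : ℕ) + c)| := by
            congr 1
            push_cast
            ring
  filter_upwards [ae_all_iff.2 residues] with x hx ε hε
  exact exists_linear_bound_of_residues (f := fun s => f (shiftBy (σ * s + c) x)) (Nat.succ_pos _)
    (fun s => hK _) (fun ρ _ ε hε => exists_linear_bound_of_tendsto (hx ρ) hε) hε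

theorem ae_exists_linear_bound :
    ∀ᵐ x ∂bernoulliMeasure p, ∀ ε > 0, ∃ C, ∀ i n : ℕ,
      |∑ s ∈ Finset.range (i + n), f (shiftBy (-i + s) x) -
        (i + n : ℕ) * ∫ x, f x ∂bernoulliMeasure p| ≤ ε * (i + n : ℕ) + C := by
  filter_upwards [ae_exists_linear_bound_of_abs_eq_one hp hf 1 0 (by simp),
    ae_exists_linear_bound_of_abs_eq_one hp hf (-1) (-1) (by simp)] with x right left ε hε
  obtain ⟨C₁, hC₁⟩ := right ε hε
  obtain ⟨C₂, hC₂⟩ := left ε hε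
  refine ⟨C₁ + C₂, fun i n => ?_⟩
  have sum_left : ∑ s ∈ Finset.range i, f (shiftBy (-i + s) x) =
      ∑ s ∈ Finset.range i, f (shiftBy (-1 * s + -1) x) := by
    rw [← Finset.sum_range_reflect]
    refine Finset.sum_congr rfl fun s hs => ?_
    have := Finset.mem_range.1 hs
    congr 2
    omega
  have sum_right : ∑ s ∈ Finset.range n, f (shiftBy (-i + (i + s : ℕ)) x) =
      ∑ s ∈ Finset.range n, f (shiftBy (1 * s + 0) x) :=
    Finset.sum_congr rfl fun s _ => by congr 2; omega
  have bound_right := hC₁ n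
  have bound_left := hC₂ i
  rw [Finset.sum_range_add, sum_left, sum_right]
  push_cast
  rw [abs_le] at bound_right bound_left ⊢
  constructor <;> linarith [bound_right.1, bound_right.2, bound_left.1, bound_left.2]

end LawOfLargeNumbers

/-! ### The probabilities of return words and of blocks -/

namespace MarkedScheme

variable {A : Type*} [Fintype A] (X : MarkedScheme A)

/-- Some return word to the marker of length `m` starts at position `i` of `x`. -/
def IsReturnAt (m : ℕ) (x : ℤ → A) (i : ℤ) : Prop := ∃ a ∈ X.lexicon.fiber m, X.IsLetterAt x i a

/-- A marker of `x` ends just before the origin, and no other one ends in the next `m`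
positions. -/
def IsGap (m : ℕ) (x : ℤ → A) : Prop := X.IsMarked x 0 ∧ ∀ j, 0 < j → j ≤ (m : ℤ) → ¬ X.IsMarked x j

/-- The origin is the letter at position `d` of a block `u` of level `N` of `x` with `Q d u`. -/
def OriginBlockSatisfies (N : ℕ) (Q : ℕ → List X.Letter → Prop) (x : ℤ → A) : Prop :=
  ∃ (d : ℕ) (u : List X.Letter), X.IsBlockAt N x (-d) u ∧ d < (X.lexicon.skeleton u).sum ∧ Q d u

/-- The probability of the marker. -/
def markerProb : ℝ := (X.marker.map X.prob).prod

theorem markerProb_pos : 0 < X.markerProb := List.prod_pos fun b hb => by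
  obtain ⟨c, _, rfl⟩ := List.mem_map.1 hb
  exact X.isProbVector.1 c

theorem prodWeight_eq (u : List X.Letter) :
    X.lexicon.prodWeight u = ((X.lexicon.spelling u).map X.prob).prod := by
  induction u with
  | nil => simp
  | cons a u ih =>
    rw [Lexicon.prodWeight_cons, ih, Lexicon.spelling_cons, List.map_append, List.prod_append]
    rfl

theorem lengthWeight_eq_zero {m : ℕ} (hm : m < X.marker.length) : X.lexicon.lengthWeight m = 0 :=
  Finset.sum_eq_zero fun a ha => by
    have length_eq := Lexicon.mem_fiber_iff_length_eq.1 ha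
    have := X.marker_length_le a
    omega

section Events

variable {X} {x : ℤ → A} {N m : ℕ} {i n : ℤ} {a : X.Letter} {u : List X.Letter}

theorem isLetterAt_iff_spellsAt : X.IsLetterAt x i a ↔ X.SpellsAt x i [a] := by
  rw [spellsAt_cons, and_iff_left_of_imp]
  exact fun h => ⟨h.isMarked_end, by simp⟩

theorem isBlockAt_zero_singleton : X.IsBlockAt 0 x i [a] ↔ X.IsLetterAt x i a := by
  rw [isLetterAt_iff_spellsAt, IsBlockAt]
  exact ⟨fun h => h.2.2, fun h =>
    ⟨⟨h.1, fun j h₁ h₂ => by omega⟩, .singleton (Nat.zero_le _), h⟩⟩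

theorem isReturnAt_iff (hm : 0 < m) :
    X.IsReturnAt m x i ↔
      X.IsMarked x i ∧ X.IsMarked x (i + m) ∧ ∀ j, i < j → j < i + m → ¬ X.IsMarked x j := by
  constructor
  · rintro ⟨a, ha, h⟩
    obtain rfl := Lexicon.mem_fiber_iff_length_eq.1 ha
    exact ⟨h.1, h.isMarked_end, fun j => h.not_isMarked⟩
  · rintro ⟨h₁, h₂, h₃⟩
    obtain ⟨a, ha, length_eq⟩ := exists_isLetterAt h₁ h₂ (by omega) h₃
    exact ⟨a, Lexicon.mem_fiber_iff_length_eq.2 (by omega), ha⟩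

theorem isCut_shiftBy : X.IsCut N (shiftBy n x) i ↔ X.IsCut N x (i + n) :=
  isCut_congr fun t _ _ => by rw [shiftBy, add_right_comm]

theorem isLetterAt_shiftBy : X.IsLetterAt (shiftBy n x) i a ↔ X.IsLetterAt x (i + n) a := by
  rw [isLetterAt_iff_spellsAt, isLetterAt_iff_spellsAt]
  exact spellsAt_congr fun t _ _ => by rw [shiftBy, add_right_comm]

theorem isBlockAt_shiftBy : X.IsBlockAt N (shiftBy n x) i u ↔ X.IsBlockAt N x (i + n) u :=
  isBlockAt_congr fun t _ _ => by rw [shiftBy, add_right_comm]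

theorem IsBlockAt.unique_at_origin {d d' : ℕ} {u' : List X.Letter} (h : X.IsBlockAt N x (-d) u)
    (h' : X.IsBlockAt N x (-d') u') (hd : d < (X.lexicon.skeleton u).sum)
    (hd' : d' < (X.lexicon.skeleton u').sum) : d = d' ∧ u = u' := by
  have := h.unique h' (l := 0) (by omega) (by omega) (by omega) (by omega)
  exact ⟨by omega, this.2⟩

end Events

theorem dependsOn_isMarked (i : ℤ) :
    DependsOn (fun x => X.IsMarked x i) (Set.Ico (i - X.marker.length) i) := fun _ _ hxy =>
  propext (isMarked_congr fun _ _ _ => hxy _ ⟨by omega, by omega⟩)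

theorem dependsOn_isCut (N : ℕ) (i : ℤ) :
    DependsOn (fun x => X.IsCut N x i) (Set.Ico (i - X.marker.length - N) i) := fun _ _ hxy =>
  propext (isCut_congr fun _ _ _ => hxy _ ⟨by omega, by omega⟩)

theorem dependsOn_isLetterAt (i : ℤ) (a : X.Letter) :
    DependsOn (fun x => X.IsLetterAt x i a)
      (Set.Ico (i - X.marker.length) (i + X.lexicon.length a)) := fun x y hxy => by
  simp only [isLetterAt_iff_spellsAt]
  refine propext (spellsAt_congr fun t h₁ h₂ => hxy _ ⟨by omega, ?_⟩)
  simp only [Lexicon.skeleton_cons, Lexicon.skeleton_nil, List.sum_cons, List.sum_nil] at h₂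
  omega

theorem dependsOn_isBlockAt (N : ℕ) (i : ℤ) (u : List X.Letter) :
    DependsOn (fun x => X.IsBlockAt N x i u)
      (Set.Ico (i - X.marker.length - N) (i + (X.lexicon.skeleton u).sum)) := fun _ _ hxy =>
  propext (isBlockAt_congr fun _ _ _ => hxy _ ⟨by omega, by omega⟩)

theorem dependsOn_isReturnAt (i : ℤ) (m : ℕ) :
    DependsOn (fun x => X.IsReturnAt m x i) (Set.Ico (i - X.marker.length) (i + m)) := by
  refine fun x y hxy => propext (exists_congr fun a => and_congr_right fun ha => ?_)
  obtain rfl := Lexicon.mem_fiber_iff_length_eq.1 ha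
  exact Iff.of_eq (X.dependsOn_isLetterAt i a hxy)

theorem dependsOn_isGap (m : ℕ) :
    DependsOn (fun x => X.IsGap m x) (Set.Ico (-X.marker.length : ℤ) m) := by
  intro x y hxy
  have isMarked_iff (j : ℤ) (h₁ : 0 ≤ j) (h₂ : j ≤ m) : X.IsMarked x j ↔ X.IsMarked y j :=
    Iff.of_eq (X.dependsOn_isMarked j fun i hi => hxy i ⟨by linarith [hi.1], by linarith [hi.2]⟩)
  refine propext (and_congr (isMarked_iff 0 le_rfl (by omega)) (forall_congr' fun j => ?_))
  exact forall₂_congr fun h₁ h₂ => not_congr (isMarked_iff j h₁.le h₂)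

variable [MeasurableSpace A]

/-- The Bernoulli measure of a marked scheme. -/
def measure : Measure (ℤ → A) := bernoulliMeasure X.prob

instance : IsProbabilityMeasure X.measure := isProbabilityMeasure_bernoulliMeasure X.isProbVector

/-- The probability of a cut of level `N` at the origin. -/
def cutProb (N : ℕ) : ℝ≥0∞ := X.measure {x | X.IsCut N x 0}

variable [DiscreteMeasurableSpace A]

theorem measurableSet_isBlockAt (N : ℕ) (i : ℤ) (u : List X.Letter) :
    MeasurableSet {x | X.IsBlockAt N x i u} :=
  measurableSet_of_dependsOn (X.dependsOn_isBlockAt N i u)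

theorem measure_isMarked (i : ℤ) : X.measure {x | X.IsMarked x i} = ENNReal.ofReal X.markerProb :=
  bernoulliMeasure_window_eq X.isProbVector _ _

theorem measure_isCut (N : ℕ) (i : ℤ) : X.measure {x | X.IsCut N x i} = X.cutProb N := by
  have := bernoulliMeasure_shiftBy X.isProbVector i
    (measurableSet_of_dependsOn (X.dependsOn_isCut N 0))
  simp only [Set.mem_ofPred_eq, isCut_shiftBy, zero_add] at this
  exact this

theorem cutProb_zero : X.cutProb 0 = ENNReal.ofReal X.markerProb := by
  rw [← X.measure_isMarked 0, cutProb]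
  congr 1
  ext x
  exact and_iff_left fun j _ _ => by omega

theorem measure_isBlockAt {N : ℕ} (i : ℤ) {u : List X.Letter}
    (hu : IsBlock N (X.lexicon.skeleton u)) :
    X.measure {x | X.IsBlockAt N x i u} =
      X.cutProb N * ENNReal.ofReal (X.lexicon.prodWeight u) := by
  rw [prodWeight_eq, ← bernoulliMeasure_window_eq X.isProbVector i, ← X.measure_isCut N i,
    measure, ← measure_and_of_dependsOn X.isProbVector (X.dependsOn_isCut N i)
      (dependsOn_window_eq _ _ _) (Set.Ico_disjoint_Ico_same)]
  congr 1
  ext x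
  exact ⟨fun h => ⟨h.1, h.2.2.2⟩, fun h => ⟨h.1, hu, h.1.1, h.2⟩⟩

theorem measure_isLetterAt (i : ℤ) (a : X.Letter) :
    X.measure {x | X.IsLetterAt x i a} =
      ENNReal.ofReal (X.markerProb * X.lexicon.weight a) := by
  have := X.measure_isBlockAt (N := 0) i (u := [a]) (.singleton (Nat.zero_le _))
  simp only [isBlockAt_zero_singleton, cutProb_zero, Lexicon.prodWeight_cons,
    Lexicon.prodWeight_nil, mul_one] at this
  rw [this, ENNReal.ofReal_mul X.markerProb_pos.le]

theorem measure_isReturnAt (i : ℤ) (m : ℕ) :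
    X.measure {x | X.IsReturnAt m x i} =
      ENNReal.ofReal (X.markerProb * X.lexicon.lengthWeight m) := by
  have eq_biUnion : {x | X.IsReturnAt m x i} =
      ⋃ a ∈ X.lexicon.fiber m, {x | X.IsLetterAt x i a} := by
    ext x
    simp [IsReturnAt]
  rw [eq_biUnion, measure_biUnion_finset]
  · simp_rw [measure_isLetterAt]
    rw [Lexicon.lengthWeight, Finset.mul_sum, ENNReal.ofReal_sum_of_nonneg fun a _ =>
      mul_nonneg X.markerProb_pos.le (X.lexicon.weight_pos a).le]
  · exact fun a _ b _ hab => Set.disjoint_left.2 fun x ha hb =>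
      hab (IsLetterAt.eq (x := x) ha hb)
  · exact fun a _ => measurableSet_of_dependsOn (X.dependsOn_isLetterAt i a)

/-! ### The length distribution of return words is determined by the marker -/

theorem cutProb_succ (N : ℕ) :
    X.cutProb (N + 1) + ENNReal.ofReal (X.markerProb * X.lexicon.lengthWeight N) =
      X.cutProb N := by
  have isCut_iff {x : ℤ → A} {M : ℕ} {a : X.Letter} (h : X.IsLetterAt x (-X.lexicon.length a) a) :
      X.IsCut M x 0 ↔ M ≤ X.lexicon.length a := by simpa using h.isCut_end_iff (N := M)
  rw [← X.measure_isReturnAt (-N) N, cutProb, cutProb, ← measure_union]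
  · congr 1
    ext x
    simp only [Set.mem_union, Set.mem_ofPred_eq]
    constructor
    · rintro (h | ⟨a, ha, h⟩)
      · exact h.mono (Nat.le_succ N)
      · obtain rfl := Lexicon.mem_fiber_iff_length_eq.1 ha
        exact (isCut_iff h).2 le_rfl
    · intro h
      by_cases hb : 0 < N ∧ X.IsMarked x (-N)
      · right
        rw [isReturnAt_iff hb.1]
        exact ⟨hb.2, by simpa using h.1, fun j h₁ h₂ => h.2 j (by omega) (by omega)⟩
      · left
        refine ⟨h.1, fun j h₁ h₂ hj => ?_⟩
        by_cases hjN : j = -N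
        · exact hb ⟨by omega, hjN ▸ hj⟩
        · exact h.2 j (by push_cast at h₁; omega) h₂ hj
  · rw [Set.disjoint_left]
    rintro x hc ⟨a, ha, h⟩
    obtain rfl := Lexicon.mem_fiber_iff_length_eq.1 ha
    exact absurd ((isCut_iff h).1 hc) (by omega)
  · exact measurableSet_of_dependsOn (X.dependsOn_isReturnAt _ _)

theorem measure_isGap_zero : X.measure {x | X.IsGap 0 x} = ENNReal.ofReal X.markerProb := by
  rw [← X.measure_isMarked 0]
  congr 1
  ext x
  exact and_iff_left fun j _ _ => by omega

theorem measure_isGap_succ (m : ℕ) :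
    X.measure {x | X.IsGap (m + 1) x} +
        ENNReal.ofReal (X.markerProb * X.lexicon.lengthWeight (m + 1)) =
      X.measure {x | X.IsGap m x} := by
  rw [← X.measure_isReturnAt 0, ← measure_union]
  · congr 1
    ext x
    simp only [Set.mem_union, Set.mem_ofPred_eq, isReturnAt_iff (Nat.succ_pos m), IsGap]
    push_cast
    constructor
    · rintro (⟨h₁, h₂⟩ | ⟨h₁, -, h₃⟩)
      · exact ⟨h₁, fun j h₃ h₄ => h₂ j h₃ (by omega)⟩
      · exact ⟨h₁, fun j h₄ h₅ => h₃ j h₄ (by omega)⟩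
    · rintro ⟨h₁, h₂⟩
      by_cases hb : X.IsMarked x (0 + (m + 1))
      · exact .inr ⟨h₁, hb, fun j h₃ h₄ => h₂ j h₃ (by omega)⟩
      · refine .inl ⟨h₁, fun j h₃ h₄ h₅ => ?_⟩
        by_cases hj : j = 0 + (m + 1)
        · exact hb (hj ▸ h₅)
        · exact h₂ j h₃ (by omega) h₅
  · refine Set.disjoint_left.2 fun x hgap hreturn => ?_
    exact hgap.2 _ (by omega) (by simp) ((isReturnAt_iff (Nat.succ_pos m)).1 hreturn).2.1
  · exact measurableSet_of_dependsOn (X.dependsOn_isReturnAt _ _)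

/- Since the marker does not overlap itself, a return of length `m + k`, with `k` the length of the
marker, is a gap of length `m` followed by an independent marker. -/
theorem ofReal_lengthWeight_eq_measure_isGap (m : ℕ) :
    ENNReal.ofReal (X.markerProb * X.lexicon.lengthWeight (m + X.marker.length)) =
      X.measure {x | X.IsGap m x} * ENNReal.ofReal X.markerProb := by
  have hk := X.marker_length_pos
  rw [← X.measure_isReturnAt 0, ← X.measure_isMarked (m + X.marker.length), measure,
    ← measure_and_of_dependsOn X.isProbVector (X.dependsOn_isGap m) (X.dependsOn_isMarked _)
      (by rw [add_sub_cancel_right]; exact Set.Ico_disjoint_Ico_same)]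
  congr 1
  ext x
  simp only [Set.mem_ofPred_eq]
  rw [isReturnAt_iff (by omega)]
  push_cast
  rw [zero_add]
  constructor
  · rintro ⟨h₁, h₂, h₃⟩
    exact ⟨⟨h₁, fun j h₄ h₅ => h₃ j h₄ (by omega)⟩, h₂⟩
  · rintro ⟨⟨h₁, h₂⟩, h₃⟩
    refine ⟨h₁, h₃, fun j h₄ h₅ hj => ?_⟩
    by_cases hjm : j ≤ m
    · exact h₂ j h₄ hjm hj
    · exact hj.not_isMarked h₅ (by omega) h₃

section TwoSchemes

variable {X} {B : Type*} [Fintype B] [MeasurableSpace B] [DiscreteMeasurableSpace B]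
  {Y : MarkedScheme B}

theorem lengthWeight_eq_of_measure_isGap_eq (hk : X.marker.length = Y.marker.length)
    (hp : X.markerProb = Y.markerProb) {m : ℕ}
    (h : X.marker.length ≤ m → X.measure {x | X.IsGap (m - X.marker.length) x} =
      Y.measure {x | Y.IsGap (m - X.marker.length) x}) :
    X.lexicon.lengthWeight m = Y.lexicon.lengthWeight m := by
  by_cases hm : m < X.marker.length
  · rw [X.lengthWeight_eq_zero hm, Y.lengthWeight_eq_zero (by omega)]
  push Not at hm
  have hX := X.ofReal_lengthWeight_eq_measure_isGap (m - X.marker.length)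
  have hY := Y.ofReal_lengthWeight_eq_measure_isGap (m - X.marker.length)
  rw [Nat.sub_add_cancel hm] at hX
  rw [← hk, Nat.sub_add_cancel hm, ← hp, ← h hm, ← hX] at hY
  rw [ENNReal.ofReal_eq_ofReal_iff
    (mul_nonneg X.markerProb_pos.le (Y.lexicon.lengthWeight_nonneg _))
    (mul_nonneg X.markerProb_pos.le (X.lexicon.lengthWeight_nonneg _))] at hY
  exact (mul_left_cancel₀ X.markerProb_pos.ne' hY).symm

theorem measure_isGap_eq (hk : X.marker.length = Y.marker.length)
    (hp : X.markerProb = Y.markerProb) (m : ℕ) :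
    X.measure {x | X.IsGap m x} = Y.measure {x | Y.IsGap m x} := by
  induction m using Nat.strong_induction_on with
  | _ m ih =>
    rcases m with _ | m
    · rw [measure_isGap_zero, measure_isGap_zero, hp]
    · have hX := X.measure_isGap_succ m
      have hY := Y.measure_isGap_succ m
      rw [← ih m (Nat.lt_succ_self m), ← hX, ← hp, ← lengthWeight_eq_of_measure_isGap_eq hk hp
        fun h => ih _ (by have := X.marker_length_pos; omega)] at hY
      exact ((ENNReal.add_left_inj ENNReal.ofReal_ne_top).1 hY).symm

theorem lengthWeight_eq (hk : X.marker.length = Y.marker.length)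
    (hp : X.markerProb = Y.markerProb) (m : ℕ) :
    X.lexicon.lengthWeight m = Y.lexicon.lengthWeight m :=
  lengthWeight_eq_of_measure_isGap_eq hk hp fun _ => measure_isGap_eq hk hp _

theorem cutProb_eq (hk : X.marker.length = Y.marker.length)
    (hp : X.markerProb = Y.markerProb) : X.cutProb = Y.cutProb := by
  funext N
  induction N with
  | zero => rw [cutProb_zero, cutProb_zero, hp]
  | succ N ih =>
    have hX := X.cutProb_succ N
    have hY := Y.cutProb_succ N
    rw [← ih, ← hX, ← hp, ← lengthWeight_eq hk hp] at hY
    exact ((ENNReal.add_left_inj ENNReal.ofReal_ne_top).1 hY).symm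

end TwoSchemes

/-! ### The block containing the origin -/

section OriginBlock

variable (N : ℕ) (Q : ℕ → List X.Letter → Prop)

theorem measurableSet_originBlockSatisfies : MeasurableSet {x | X.OriginBlockSatisfies N Q x} := by
  have eq_iUnion : {x | X.OriginBlockSatisfies N Q x} = ⋃ (d : ℕ) (u : List X.Letter),
      {x | X.IsBlockAt N x (-d) u} ∩ {_x | d < (X.lexicon.skeleton u).sum ∧ Q d u} := by
    ext x
    simp [OriginBlockSatisfies]
  rw [eq_iUnion]
  exact .iUnion fun d => .iUnion fun u => (X.measurableSet_isBlockAt _ _ _).inter (.const _)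

variable {N} {S : List ℕ}

theorem measure_biUnion_isBlockAt (hS : IsBlock N S) (i : ℤ) {T : Finset (List X.Letter)}
    (hT : T ⊆ X.lexicon.fillers S) :
    X.measure (⋃ u ∈ T, {x | X.IsBlockAt N x i u}) =
      X.cutProb N * ENNReal.ofReal (∑ u ∈ T, X.lexicon.prodWeight u) := by
  have skeleton_eq {u : List X.Letter} (hu : u ∈ T) : X.lexicon.skeleton u = S :=
    X.lexicon.mem_fillers.1 (hT hu)
  rw [measure_biUnion_finset]
  · rw [ENNReal.ofReal_sum_of_nonneg fun u _ => (X.lexicon.prodWeight_pos u).le, Finset.mul_sum]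
    exact Finset.sum_congr rfl fun u hu => X.measure_isBlockAt i (by rwa [skeleton_eq hu])
  · refine fun u hu v hv huv => Set.disjoint_left.2 fun x h h' => huv ?_
    exact SpellsAt.eq (x := x) h.2.2 h'.2.2 (by rw [skeleton_eq hu, skeleton_eq hv])
  · exact fun u _ => X.measurableSet_isBlockAt _ _ _

theorem measure_originBlockSatisfies_skeleton_eq (hS : IsBlock N S) :
    X.measure {x | X.OriginBlockSatisfies N (fun d u => Q d u ∧ X.lexicon.skeleton u = S) x} =
      ∑ d ∈ Finset.range S.sum, X.cutProb N *
        ENNReal.ofReal (∑ u ∈ (X.lexicon.fillers S).filter (Q d), X.lexicon.prodWeight u) := by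
  have eq_iUnion :
      {x | X.OriginBlockSatisfies N (fun d u => Q d u ∧ X.lexicon.skeleton u = S) x} =
        ⋃ d ∈ Finset.range S.sum, ⋃ u ∈ (X.lexicon.fillers S).filter (Q d),
          {x | X.IsBlockAt N x (-d : ℤ) u} := by
    ext x
    simp only [OriginBlockSatisfies, Set.mem_iUnion, Finset.mem_range, Finset.mem_filter,
      Lexicon.mem_fillers, exists_prop, Set.mem_ofPred_eq]
    constructor
    · rintro ⟨d, u, h, hd, hQ, rfl⟩
      exact ⟨d, hd, u, ⟨rfl, hQ⟩, h⟩
    · rintro ⟨d, hd, u, ⟨rfl, hQ⟩, h⟩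
      exact ⟨d, u, h, hd, hQ, rfl⟩
  rw [eq_iUnion, measure_biUnion_finset]
  · exact Finset.sum_congr rfl fun d _ =>
      X.measure_biUnion_isBlockAt hS _ (Finset.filter_subset _ _)
  · intro d hd d' hd' hne
    rw [Function.onFun, Set.disjoint_left]
    intro x hx hx'
    simp only [Set.mem_iUnion, Finset.mem_filter, Lexicon.mem_fillers, exists_prop] at hx hx'
    obtain ⟨u, ⟨rfl, -⟩, hx⟩ := hx
    obtain ⟨u', ⟨skeleton_eq, -⟩, hx'⟩ := hx'
    refine hne (IsBlockAt.unique_at_origin hx hx' (Finset.mem_range.1 hd) ?_).1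
    rw [skeleton_eq]
    exact Finset.mem_range.1 hd'
  · exact fun d _ => Finset.measurableSet_biUnion _ fun u _ => X.measurableSet_isBlockAt _ _ _

variable (N)

theorem blockProb_eq_measure :
    X.lexicon.blockProb X.cutProb N Q = X.measure {x | X.OriginBlockSatisfies N Q x} := by
  have eq_iUnion : {x | X.OriginBlockSatisfies N Q x} = ⋃ S : List ℕ,
      {x | X.OriginBlockSatisfies N (fun d u => Q d u ∧ X.lexicon.skeleton u = S) x} := by
    ext x
    rw [Set.mem_iUnion]
    constructor
    · rintro ⟨d, u, h, hd, hQ⟩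
      exact ⟨_, d, u, h, hd, hQ, rfl⟩
    · rintro ⟨_, d, u, h, hd, hQ, -⟩
      exact ⟨d, u, h, hd, hQ⟩
  rw [eq_iUnion, measure_iUnion, Lexicon.blockProb]
  · refine tsum_congr fun S => ?_
    split_ifs with hS
    · rw [X.measure_originBlockSatisfies_skeleton_eq Q hS]
    · refine (measure_mono_null ?_ measure_empty).symm
      rintro x ⟨d, u, h, -, -, rfl⟩
      exact hS h.2.1
  · intro S S' hne
    rw [Function.onFun, Set.disjoint_left]
    rintro x ⟨d, u, h, hd, -, rfl⟩ ⟨d', u', h', hd', -, rfl⟩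
    exact hne (by rw [(h.unique_at_origin h' hd hd').2])
  · exact fun S => X.measurableSet_originBlockSatisfies N _

end OriginBlock

end MarkedScheme

/-! ### Almost every point has cuts of all levels -/

namespace MarkedScheme

variable {A : Type*} [Fintype A] (X : MarkedScheme A)

/-- There are cuts of every level on both sides of every position of `x`. -/
def HasCuts (x : ℤ → A) : Prop :=
  ∀ (N : ℕ) (l : ℤ), (∃ i ≤ l, X.IsCut N x i) ∧ ∃ i, l < i ∧ X.IsCut N x i

variable {X} in
theorem HasCuts.shiftBy {x : ℤ → A} (h : X.HasCuts x) (n : ℤ) : X.HasCuts (shiftBy n x) := by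
  intro N l
  obtain ⟨⟨i, hi, hci⟩, j, hj, hcj⟩ := h N (l + n)
  exact ⟨⟨i - n, by omega, by rwa [isCut_shiftBy, sub_add_cancel]⟩,
    j - n, by omega, by rwa [isCut_shiftBy, sub_add_cancel]⟩

section AlmostEverywhere

variable [MeasurableSpace A] [DiscreteMeasurableSpace A]

theorem cutProb_toReal_pos (N : ℕ) : 0 < (X.cutProb N).toReal := by
  obtain ⟨u, -, hu, -, -, -, hN⟩ := X.exists_ne_of_length_eq N
  set a : X.Letter := ⟨u, hu⟩
  have measure_pos : 0 < X.measure {x | X.IsLetterAt x (-X.lexicon.length a) a} := by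
    rw [measure_isLetterAt]
    exact ENNReal.ofReal_pos.2 (mul_pos X.markerProb_pos (X.lexicon.weight_pos a))
  refine ENNReal.toReal_pos (measure_pos.trans_le (measure_mono fun x hx => ?_)).ne'
    (measure_ne_top _ _)
  have := (IsLetterAt.isCut_end_iff (x := x) hx).2 hN
  rwa [neg_add_cancel] at this

theorem ae_exists_shiftBy_of_dependsOn {P : (ℤ → A) → Prop} {a b : ℤ}
    (hP : DependsOn P (Set.Ico a b)) (hpos : 0 < (X.measure {x | P x}).toReal) {σ : ℤ}
    (hσ : |σ| = 1) (c : ℤ) : ∀ᵐ x ∂X.measure, ∃ s : ℕ, P (shiftBy (σ * s + c) x) := by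
  have dependsOn_indicator : DependsOn (fun x => if P x then (1 : ℝ) else 0) (Set.Ico a b) :=
    fun x y hxy => by simp only [hP hxy]
  have integral_eq : ∫ x, (if P x then (1 : ℝ) else 0) ∂bernoulliMeasure X.prob =
      (X.measure {x | P x}).toReal := by
    rw [← Measure.real, ← integral_indicator_one (measurableSet_of_dependsOn hP)]
    simp [Set.indicator_apply, measure]
  filter_upwards [ae_exists_linear_bound_of_abs_eq_one X.isProbVector dependsOn_indicator σ c hσ]
    with x hx
  by_contra! never
  obtain ⟨C, hC⟩ := hx _ (half_pos hpos)
  obtain ⟨n, hn⟩ := exists_nat_gt (2 * C / (X.measure {x | P x}).toReal)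
  have bound := hC n
  simp only [never, if_false, Finset.sum_const_zero, zero_sub, abs_neg, integral_eq] at bound
  rw [abs_of_nonneg (by positivity)] at bound
  rw [div_lt_iff₀ hpos] at hn
  linarith

theorem ae_hasCuts : ∀ᵐ x ∂X.measure, X.HasCuts x := by
  refine ae_all_iff.2 fun N => ae_all_iff.2 fun l => ?_
  filter_upwards [
    X.ae_exists_shiftBy_of_dependsOn (X.dependsOn_isCut N 0) (X.cutProb_toReal_pos N)
      (σ := -1) (by simp) l,
    X.ae_exists_shiftBy_of_dependsOn (X.dependsOn_isCut N 0) (X.cutProb_toReal_pos N)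
      (σ := 1) (by simp) (l + 1)] with x left right
  simp only [isCut_shiftBy, zero_add] at left right
  obtain ⟨s, hs⟩ := left
  obtain ⟨t, ht⟩ := right
  exact ⟨⟨_, by omega, hs⟩, _, by omega, ht⟩

end AlmostEverywhere

/-! ### The law of large numbers for blocks -/

/-- The conditional information of the letter that starts at the origin, if there is one and its
length is at most `c`. -/
def originInfo (c : ℕ) (x : ℤ → A) : ℝ :=
  ∑ m ∈ Finset.range (c + 1), ∑ a ∈ X.lexicon.fiber m,
    if X.IsLetterAt x 0 a then X.lexicon.letterInfo a else 0

theorem dependsOn_originInfo (c : ℕ) :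
    DependsOn (X.originInfo c) (Set.Ico (-X.marker.length : ℤ) c) := by
  refine fun x y hxy => Finset.sum_congr rfl fun m hm => Finset.sum_congr rfl fun a ha => ?_
  obtain rfl := Lexicon.mem_fiber_iff_length_eq.1 ha
  rw [Finset.mem_range] at hm
  have : X.IsLetterAt x 0 a = X.IsLetterAt y 0 a :=
    X.dependsOn_isLetterAt 0 a fun i hi => hxy i (by rw [Set.mem_Ico] at hi ⊢; omega)
  simp only [this]

section OriginInfo

variable {X} {c d : ℕ} {x : ℤ → A} {i : ℤ} {a : X.Letter} {u : List X.Letter}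

theorem originInfo_shiftBy_eq_zero (h : ¬ X.IsMarked x i) : X.originInfo c (shiftBy i x) = 0 :=
  Finset.sum_eq_zero fun m _ => Finset.sum_eq_zero fun a _ => if_neg fun ha => h <| by
    rw [isLetterAt_shiftBy, zero_add] at ha
    exact ha.1

theorem originInfo_shiftBy (h : X.IsLetterAt x i a) :
    X.originInfo c (shiftBy i x) =
      if X.lexicon.length a ≤ c then X.lexicon.letterInfo a else 0 := by
  have isLetterAt_iff (b) : X.IsLetterAt (shiftBy i x) 0 b ↔ b = a := by
    rw [isLetterAt_shiftBy, zero_add]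
    exact ⟨fun hb => hb.eq h, fun hb => hb ▸ h⟩
  simp only [originInfo, isLetterAt_iff, Finset.sum_ite_eq', Lexicon.mem_fiber_iff_length_eq]
  simp only [Finset.sum_ite_eq, Finset.mem_range, Nat.lt_succ_iff]

theorem IsLetterAt.sum_originInfo (h : X.IsLetterAt x i a) :
    ∑ s ∈ Finset.range (X.lexicon.length a), X.originInfo c (shiftBy (i + s) x) =
      if X.lexicon.length a ≤ c then X.lexicon.letterInfo a else 0 := by
  rw [Finset.sum_eq_single_of_mem 0 (Finset.mem_range.2 (X.lexicon_length_pos a))]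
  · rw [Nat.cast_zero, add_zero, originInfo_shiftBy h]
  · intro s hs hs₀
    rw [Finset.mem_range] at hs
    exact originInfo_shiftBy_eq_zero (h.not_isMarked (by omega) (by omega))

theorem SpellsAt.sum_originInfo (h : X.SpellsAt x i u) :
    ∑ s ∈ Finset.range (X.lexicon.skeleton u).sum, X.originInfo c (shiftBy (i + s) x) =
      X.lexicon.visibleInfo c u := by
  induction u generalizing i with
  | nil => simp [Lexicon.visibleInfo]
  | cons a u ih =>
    rw [spellsAt_cons] at h
    rw [Lexicon.skeleton_cons, List.sum_cons, Finset.sum_range_add, h.1.sum_originInfo,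
      Lexicon.visibleInfo, List.map_cons, List.sum_cons, ← Lexicon.visibleInfo, ← ih h.2]
    simp only [Nat.cast_add, add_assoc]

theorem SpellsAt.exists_isLetterAt (h : X.SpellsAt x i u) (hd : d < (X.lexicon.skeleton u).sum) :
    ∃ (a : X.Letter) (s : ℕ), X.IsLetterAt x (i + s) a ∧ s ≤ d ∧ d < s + X.lexicon.length a ∧
      (X.lexicon.spelling u)[d]? = a.1[d - s]? ∧
      ∀ c, ¬ IsShortAt c (X.lexicon.skeleton u) d → c < X.lexicon.length a := by
  induction u generalizing i d with
  | nil => simp at hd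
  | cons a u ih =>
    rw [spellsAt_cons] at h
    simp only [Lexicon.skeleton_cons, List.sum_cons, IsShortAt, Lexicon.spelling_cons] at hd ⊢
    by_cases hda : d < X.lexicon.length a
    · refine ⟨a, 0, by simpa using h.1, by omega, by omega, ?_, fun c hc => ?_⟩
      · rw [List.getElem?_append_left hda, Nat.sub_zero]
        rfl
      · rw [if_pos hda] at hc
        omega
    · obtain ⟨b, s, hb, hs, hds, get_eq, hshort⟩ := ih h.2 (d := d - X.lexicon.length a) (by omega)
      refine ⟨b, X.lexicon.length a + s, ?_, by omega, by omega, ?_, fun c hc => hshort c ?_⟩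
      · rwa [Nat.cast_add, ← add_assoc]
      · rw [List.getElem?_append_right (not_lt.1 hda), ← Nat.sub_sub, ← get_eq]
        rfl
      · rwa [if_neg hda] at hc

theorem originBlockSatisfies_zero_of_not_isShortAt {N : ℕ}
    (h : X.OriginBlockSatisfies N (fun d u => ¬ IsShortAt c (X.lexicon.skeleton u) d) x) :
    X.OriginBlockSatisfies 0 (fun _ u => c < (X.lexicon.skeleton u).sum) x := by
  obtain ⟨d, u, hu, hd, hlong⟩ := h
  obtain ⟨a, s, ha, hsd, hds, -, hc⟩ := hu.2.2.exists_isLetterAt hd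
  refine ⟨d - s, [a], ?_, ?_, ?_⟩
  · rw [isBlockAt_zero_singleton]
    convert ha using 1
    omega
  · rw [Lexicon.skeleton_cons, Lexicon.skeleton_nil, List.sum_singleton]
    omega
  · simpa using hc c hlong

end OriginInfo

variable [MeasurableSpace A]

/-- The mean conditional information, per symbol, of the letters of length at most `c`. -/
def meanInfo (c : ℕ) : ℝ := ∫ x, X.originInfo c x ∂X.measure

variable [DiscreteMeasurableSpace A]

theorem tendsto_blockProb_not_isTypical (c : ℕ) {δ : ℝ} (hδ : 0 < δ) :
    Tendsto (fun N => X.lexicon.blockProb X.cutProb N fun _ u =>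
      ¬ X.lexicon.IsTypical c (X.meanInfo c) δ u) atTop (𝓝 0) := by
  simp_rw [blockProb_eq_measure]
  rw [← measure_empty (μ := X.measure)]
  refine tendsto_measure_of_ae_tendsto_indicator_of_isFiniteMeasure atTop MeasurableSet.empty
    (fun N => X.measurableSet_originBlockSatisfies _ _) ?_
  filter_upwards [ae_exists_linear_bound X.isProbVector (X.dependsOn_originInfo c)] with x hx
  obtain ⟨C, hC⟩ := hx (δ / 2) (half_pos hδ)
  obtain ⟨n, hn⟩ := exists_nat_gt (2 * C / δ)
  filter_upwards [eventually_ge_atTop n] with N hN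
  refine iff_of_false ?_ (Set.notMem_empty x)
  rintro ⟨d, u, hu, hd, hu_typical⟩
  have bound := hC d ((X.lexicon.skeleton u).sum - d)
  rw [Nat.add_sub_cancel' hd.le, hu.2.2.sum_originInfo] at bound
  have N_le : (N : ℝ) ≤ (X.lexicon.skeleton u).sum := by exact_mod_cast hu.2.1.le_sum
  have n_le : (n : ℝ) ≤ N := by exact_mod_cast hN
  rw [div_lt_iff₀ hδ] at hn
  rw [Lexicon.IsTypical, mul_comm (X.meanInfo c)] at hu_typical
  exact hu_typical (bound.trans (by nlinarith))

theorem tendsto_measure_lt_length :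
    Tendsto (fun c => X.measure {x | X.OriginBlockSatisfies 0
      (fun _ u => c < (X.lexicon.skeleton u).sum) x}) atTop (𝓝 0) := by
  rw [← measure_empty (μ := X.measure)]
  refine tendsto_measure_of_ae_tendsto_indicator_of_isFiniteMeasure atTop MeasurableSet.empty
    (fun N => X.measurableSet_originBlockSatisfies _ _) (ae_of_all _ fun x => ?_)
  by_cases h : ∃ d u, X.IsBlockAt 0 x (-(d : ℕ)) u ∧ d < (X.lexicon.skeleton u).sum
  · obtain ⟨d, u, hu, hd⟩ := h
    filter_upwards [eventually_ge_atTop (X.lexicon.skeleton u).sum] with c hc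
    refine iff_of_false ?_ (Set.notMem_empty x)
    rintro ⟨d', u', hu', hd', hc'⟩
    obtain ⟨-, rfl⟩ := hu.unique_at_origin hu' hd hd'
    omega
  · refine Eventually.of_forall fun c => iff_of_false ?_ (Set.notMem_empty x)
    rintro ⟨d, u, hu, hd, -⟩
    exact h ⟨d, u, hu, hd⟩

theorem exists_blockProb_not_isShortAt_le {ε : ℝ} (hε : 0 < ε) : ∃ c₀, ∀ c ≥ c₀, ∀ N,
    X.lexicon.blockProb X.cutProb N (fun d u => ¬ IsShortAt c (X.lexicon.skeleton u) d) ≤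
      ENNReal.ofReal ε := by
  obtain ⟨c₀, hc₀⟩ := eventually_atTop.1
    (X.tendsto_measure_lt_length.eventually_le_const (ENNReal.ofReal_pos.2 hε))
  refine ⟨c₀, fun c hc N => ?_⟩
  rw [blockProb_eq_measure]
  exact (measure_mono fun x hx => originBlockSatisfies_zero_of_not_isShortAt hx).trans (hc₀ c hc)

end MarkedScheme

/-! ### The entropy of the return words given their lengths -/

section LetterCounts

variable {A : Type*}

theorem sum_range_getElem?_eq_count (l : List A) (b : A) :
    ∑ d ∈ Finset.range l.length, (if l[d]? = some b then (1 : ℝ) else 0) = l.count b := by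
  induction l with
  | nil => simp
  | cons a l ih =>
    rw [List.length_cons, Finset.sum_range_succ', List.count_cons]
    simp only [List.getElem?_cons_succ, ih, List.getElem?_cons_zero, Option.some.injEq, beq_iff_eq]
    push_cast
    congr

theorem log_prod_map_eq_sum_count [Fintype A] {p : A → ℝ} (hp : ∀ a, p a ≠ 0) (l : List A) :
    Real.log (l.map p).prod = ∑ b, (l.count b : ℝ) * Real.log (p b) := by
  rw [Real.log_list_prod (by simpa using fun a _ => hp a), List.map_map,
    Finset.sum_list_map_count]
  rw [Finset.sum_subset (Finset.subset_univ _) fun b _ hb => ?_]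
  · simp
  · rw [List.count_eq_zero.2 (by simpa using hb), zero_smul]

end LetterCounts

namespace MarkedScheme

variable {A : Type*} [Fintype A] (X : MarkedScheme A)

/-- The contribution of the return words of length `m` to the entropy per symbol. -/
def letterEntropy (m : ℕ) : ℝ :=
  ∑ a ∈ X.lexicon.fiber m, X.markerProb * X.lexicon.weight a * -Real.log (X.lexicon.weight a)

/-- The contribution of the length `m` to the entropy per symbol of the lengths of return words. -/
def lengthEntropy (m : ℕ) : ℝ :=
  X.markerProb * X.lexicon.lengthWeight m * -Real.log (X.lexicon.lengthWeight m)

/-- The contribution of the return words of length `m` to the entropy per symbol of the return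
words given their lengths. -/
def conditionalEntropy (m : ℕ) : ℝ :=
  ∑ a ∈ X.lexicon.fiber m, X.markerProb * X.lexicon.weight a * X.lexicon.letterInfo a

theorem letterEntropy_sub_lengthEntropy (m : ℕ) :
    X.letterEntropy m - X.lengthEntropy m = X.conditionalEntropy m := by
  have lengthEntropy_eq : X.lengthEntropy m = ∑ a ∈ X.lexicon.fiber m,
      X.markerProb * X.lexicon.weight a * -Real.log (X.lexicon.lengthWeight m) := by
    rw [← Finset.sum_mul, ← Finset.mul_sum]
    rfl
  rw [lengthEntropy_eq, letterEntropy, ← Finset.sum_sub_distrib]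
  refine Finset.sum_congr rfl fun a ha => ?_
  obtain rfl := Lexicon.mem_fiber_iff_length_eq.1 ha
  rw [Lexicon.letterInfo]
  ring

theorem markerProb_mul_weight_pos (a : X.Letter) : 0 < X.markerProb * X.lexicon.weight a :=
  mul_pos X.markerProb_pos (X.lexicon.weight_pos a)

theorem conditionalEntropy_nonneg (m : ℕ) : 0 ≤ X.conditionalEntropy m :=
  Finset.sum_nonneg fun a _ =>
    mul_nonneg (X.markerProb_mul_weight_pos a).le (X.lexicon.letterInfo_nonneg a)

theorem exists_conditionalEntropy_pos (c : ℕ) : ∃ m, c < m ∧ 0 < X.conditionalEntropy m := by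
  obtain ⟨u, v, hu, hv, hne, length_eq, hc⟩ := X.exists_ne_of_length_eq (c + 1)
  set a : X.Letter := ⟨u, hu⟩
  set b : X.Letter := ⟨v, hv⟩
  have ha : a ∈ X.lexicon.fiber (X.lexicon.length a) := Lexicon.mem_fiber_iff_length_eq.2 rfl
  have hb : b ∈ X.lexicon.fiber (X.lexicon.length a) :=
    Lexicon.mem_fiber_iff_length_eq.2 length_eq.symm
  have weight_lt : X.lexicon.weight a < X.lexicon.lengthWeight (X.lexicon.length a) :=
    Finset.single_lt_sum (fun h => hne (congrArg Subtype.val h).symm) ha hb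
      (X.lexicon.weight_pos b) fun e _ _ => (X.lexicon.weight_pos e).le
  refine ⟨X.lexicon.length a, hc, Finset.sum_pos' (fun e _ => mul_nonneg
    (X.markerProb_mul_weight_pos e).le (X.lexicon.letterInfo_nonneg e)) ⟨a, ha, ?_⟩⟩
  exact mul_pos (X.markerProb_mul_weight_pos a)
    (sub_pos.2 (Real.log_lt_log (X.lexicon.weight_pos a) weight_lt))

/-- The expected number of occurrences of `b` in a return word of length `m` at the origin. -/
def symbolFrequency (b : A) (m : ℕ) : ℝ :=
  ∑ a ∈ X.lexicon.fiber m, X.markerProb * X.lexicon.weight a * a.1.count b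

theorem symbolFrequency_nonneg (b : A) (m : ℕ) : 0 ≤ X.symbolFrequency b m :=
  Finset.sum_nonneg fun a _ => mul_nonneg (X.markerProb_mul_weight_pos a).le (Nat.cast_nonneg _)

theorem letterEntropy_eq_sum_symbolFrequency (m : ℕ) :
    X.letterEntropy m = ∑ b, -Real.log (X.prob b) * X.symbolFrequency b m := by
  simp_rw [symbolFrequency, Finset.mul_sum]
  rw [Finset.sum_comm]
  refine Finset.sum_congr rfl fun a _ => ?_
  have log_weight : Real.log (X.lexicon.weight a) = ∑ b, (a.1.count b : ℝ) * Real.log (X.prob b) :=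
    log_prod_map_eq_sum_count (fun b => (X.isProbVector.1 b).ne') a.1
  rw [log_weight, ← Finset.sum_neg_distrib, Finset.mul_sum]
  exact Finset.sum_congr rfl fun b _ => by ring

theorem IsBlockAt.getElem?_spelling_eq_some_iff {X : MarkedScheme A} {x : ℤ → A} {N d : ℕ}
    {u : List X.Letter} (h : X.IsBlockAt N x (-d) u) (hd : d < (X.lexicon.skeleton u).sum) (b : A) :
    (X.lexicon.spelling u)[d]? = some b ↔ x 0 = b := by
  rw [← h.2.2.2, getElem?_window _ _ (by rwa [Lexicon.length_spelling]), neg_add_cancel,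
    Option.some.injEq]

variable [MeasurableSpace A] [DiscreteMeasurableSpace A]

theorem lengthWeight_le_one (m : ℕ) : X.lexicon.lengthWeight m ≤ 1 := by
  have measure_le : X.measure {x | X.IsReturnAt m x 0} ≤ X.measure {x | X.IsMarked x 0} :=
    measure_mono fun x ⟨a, _, h⟩ => h.1
  rw [measure_isReturnAt, measure_isMarked,
    ENNReal.ofReal_le_ofReal_iff X.markerProb_pos.le] at measure_le
  nlinarith [X.markerProb_pos]

theorem lengthEntropy_nonneg (m : ℕ) : 0 ≤ X.lengthEntropy m :=
  mul_nonneg (mul_nonneg X.markerProb_pos.le (X.lexicon.lengthWeight_nonneg m))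
    (neg_nonneg.2 (Real.log_nonpos (X.lexicon.lengthWeight_nonneg m) (X.lengthWeight_le_one m)))

theorem meanInfo_eq_sum (c : ℕ) :
    X.meanInfo c = ∑ m ∈ Finset.range (c + 1), X.conditionalEntropy m := by
  have ite_eq (a : X.Letter) :
      (fun x => if X.IsLetterAt x 0 a then X.lexicon.letterInfo a else 0) =
        {x | X.IsLetterAt x 0 a}.indicator fun _ => X.lexicon.letterInfo a := by
    funext x
    simp [Set.indicator_apply]
  have measurableSet_letter (a : X.Letter) : MeasurableSet {x | X.IsLetterAt x 0 a} :=
    measurableSet_of_dependsOn (X.dependsOn_isLetterAt 0 a)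
  have integrable (a : X.Letter) :
      Integrable (fun x => if X.IsLetterAt x 0 a then X.lexicon.letterInfo a else 0)
        X.measure := by
    rw [ite_eq]
    exact (integrable_const _).indicator (measurableSet_letter a)
  simp only [meanInfo, originInfo]
  rw [integral_finsetSum _ fun m _ => integrable_finsetSum _ fun a _ => integrable a]
  refine Finset.sum_congr rfl fun m _ => ?_
  rw [integral_finsetSum _ fun a _ => integrable a]
  refine Finset.sum_congr rfl fun a _ => ?_
  rw [ite_eq, integral_indicator_const _ (measurableSet_letter a), Measure.real,
    measure_isLetterAt, ENNReal.toReal_ofReal (X.markerProb_mul_weight_pos a).le, smul_eq_mul]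

theorem blockProb_zero_getElem?_spelling (b : A) :
    X.lexicon.blockProb X.cutProb 0 (fun d u => (X.lexicon.spelling u)[d]? = some b) =
      ∑' m, ENNReal.ofReal (X.symbolFrequency b m) := by
  have injective_singleton : Function.Injective fun m : ℕ => [m] := List.singleton_injective
  rw [Lexicon.blockProb, ← injective_singleton.tsum_eq]
  · refine tsum_congr fun m => ?_
    rw [if_pos (isBlock_zero.2 ⟨m, rfl⟩), cutProb_zero]
    simp_rw [← ENNReal.ofReal_mul X.markerProb_pos.le]
    rw [← ENNReal.ofReal_sum_of_nonneg fun d _ => mul_nonneg X.markerProb_pos.le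
      (Finset.sum_nonneg fun u _ => (X.lexicon.prodWeight_pos u).le)]
    congr 1
    simp_rw [Finset.sum_filter, Lexicon.sum_fillers_cons]
    simp only [Lexicon.fillers, Finset.sum_singleton, Lexicon.prodWeight_cons,
      Lexicon.prodWeight_nil, mul_one, Lexicon.spelling_cons, Lexicon.spelling_nil,
      List.append_nil, List.sum_singleton]
    rw [← Finset.mul_sum, Finset.sum_comm, Finset.mul_sum, symbolFrequency]
    refine Finset.sum_congr rfl fun a ha => ?_
    obtain rfl := Lexicon.mem_fiber_iff_length_eq.1 ha
    rw [← sum_range_getElem?_eq_count, Finset.mul_sum, Finset.mul_sum]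
    refine Finset.sum_congr rfl fun d _ => ?_
    rw [mul_ite, mul_ite, mul_one, mul_zero, mul_zero]
    rfl
  · intro S hS
    by_contra h
    refine hS (if_neg fun hb => h ?_)
    obtain ⟨m, rfl⟩ := isBlock_zero.1 hb
    exact ⟨m, rfl⟩

theorem measure_apply_zero_eq (b : A) :
    X.measure {x | x 0 = b} = ENNReal.ofReal (X.prob b) := by
  have := bernoulliMeasure_window_eq X.isProbVector 0 [b]
  simpa [window, measure] using this

theorem ae_originBlockSatisfies_iff (b : A) :
    ∀ᵐ x ∂X.measure,
      X.OriginBlockSatisfies 0 (fun d u => (X.lexicon.spelling u)[d]? = some b) x ↔ x 0 = b := by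
  filter_upwards [X.ae_hasCuts] with x hx
  constructor
  · rintro ⟨d, u, hu, hd, get_eq⟩
    exact (hu.getElem?_spelling_eq_some_iff hd b).1 get_eq
  · intro hb
    obtain ⟨i, u, hu, hi, h0⟩ := exists_isBlockAt (hx 0 0).1 (hx 0 0).2
    obtain ⟨d, rfl⟩ : ∃ d : ℕ, i = -d := ⟨(-i).toNat, by omega⟩
    have hd : d < (X.lexicon.skeleton u).sum := by omega
    exact ⟨d, u, hu, hd, (hu.getElem?_spelling_eq_some_iff hd b).2 hb⟩

theorem hasSum_symbolFrequency (b : A) : HasSum (X.symbolFrequency b) (X.prob b) := by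
  have tsum_eq : ∑' m, ENNReal.ofReal (X.symbolFrequency b m) = ENNReal.ofReal (X.prob b) := by
    rw [← blockProb_zero_getElem?_spelling, blockProb_eq_measure, ← measure_apply_zero_eq]
    exact measure_congr ((X.ae_originBlockSatisfies_iff b).mono fun x hx => propext hx)
  have hasSum := ENNReal.hasSum_toReal (tsum_eq.trans_ne ENNReal.ofReal_ne_top)
  rw [← ENNReal.tsum_toReal_eq fun _ => ENNReal.ofReal_ne_top, tsum_eq,
    ENNReal.toReal_ofReal (X.isProbVector.1 b).le] at hasSum
  simpa only [ENNReal.toReal_ofReal (X.symbolFrequency_nonneg b _)] using hasSum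

theorem hasSum_letterEntropy : HasSum X.letterEntropy (vecEntropy X.prob) := by
  have vecEntropy_eq : vecEntropy X.prob = ∑ b, -Real.log (X.prob b) * X.prob b := by
    rw [vecEntropy, ← Finset.sum_neg_distrib]
    exact Finset.sum_congr rfl fun b _ => by ring
  rw [vecEntropy_eq, funext X.letterEntropy_eq_sum_symbolFrequency]
  exact hasSum_sum fun b _ => (X.hasSum_symbolFrequency b).mul_left _

theorem hasSum_conditionalEntropy :
    HasSum X.conditionalEntropy (vecEntropy X.prob - ∑' m, X.lengthEntropy m) := by
  have summable : Summable X.lengthEntropy :=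
    X.hasSum_letterEntropy.summable.of_nonneg_of_le X.lengthEntropy_nonneg fun m =>
      sub_nonneg.1 ((X.conditionalEntropy_nonneg m).trans_eq
        (X.letterEntropy_sub_lengthEntropy m).symm)
  rw [← funext X.letterEntropy_sub_lengthEntropy]
  exact X.hasSum_letterEntropy.sub summable.hasSum

/-- The entropy per symbol of the return words given their lengths. -/
def informationRate : ℝ := ∑' m, X.conditionalEntropy m

theorem meanInfo_lt_informationRate (c : ℕ) : X.meanInfo c < X.informationRate := by
  obtain ⟨m, hcm, hpos⟩ := X.exists_conditionalEntropy_pos c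
  rw [meanInfo_eq_sum]
  calc ∑ i ∈ Finset.range (c + 1), X.conditionalEntropy i
    _ < ∑ i ∈ Finset.range (m + 1), X.conditionalEntropy i :=
      Finset.sum_lt_sum_of_subset (Finset.range_mono (by omega)) (Finset.self_mem_range_succ m)
        (by rw [Finset.mem_range]; omega) hpos fun i _ _ => X.conditionalEntropy_nonneg i
    _ ≤ X.informationRate :=
      X.hasSum_conditionalEntropy.summable.sum_le_tsum _ fun i _ => X.conditionalEntropy_nonneg i

theorem informationRate_pos : 0 < X.informationRate := by
  refine lt_of_le_of_lt ?_ (X.meanInfo_lt_informationRate 0)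
  rw [meanInfo_eq_sum]
  exact Finset.sum_nonneg fun i _ => X.conditionalEntropy_nonneg i

theorem hasInformationRate :
    X.lexicon.HasInformationRate X.cutProb X.informationRate X.meanInfo where
  blockProb_true_le N := by
    rw [blockProb_eq_measure]
    exact prob_le_one
  tendsto_not_isTypical c δ hδ := X.tendsto_blockProb_not_isTypical c hδ
  not_isShortAt_le ε hε := X.exists_blockProb_not_isShortAt_le hε
  lt := X.meanInfo_lt_informationRate
  tendsto := by
    simp_rw [funext X.meanInfo_eq_sum]
    exact X.hasSum_conditionalEntropy.summable.hasSum.tendsto_sum_nat.comp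
      (tendsto_add_atTop_nat 1)

variable {X} in
theorem informationRate_eq {B : Type*} [Fintype B] [MeasurableSpace B] [DiscreteMeasurableSpace B]
    {Y : MarkedScheme B} (hk : X.marker.length = Y.marker.length)
    (hp : X.markerProb = Y.markerProb) (hH : vecEntropy X.prob = vecEntropy Y.prob) :
    X.informationRate = Y.informationRate := by
  simp only [informationRate, X.hasSum_conditionalEntropy.tsum_eq,
    Y.hasSum_conditionalEntropy.tsum_eq, hH, lengthEntropy, hp, lengthWeight_eq hk hp]

end MarkedScheme

/-! ### The code defined by a tower -/

namespace Lexicon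

variable {α β A B : Type*} {X : Lexicon α A} {Y : Lexicon β B} {N : ℕ}
  {R : List α → List β → Prop} {u u₁ u₃ : List α} {v v₁ v₃ w : List β}

theorem Blockwise.exists_append_of_isBlock (hR : IsBlockRelation X Y N R)
    (hu : IsBlock N (X.skeleton u)) (h : Blockwise X Y N R (u ++ u₃) w) :
    ∃ v v₃, w = v ++ v₃ ∧ R u v ∧ Blockwise X Y N R u₃ v₃ := by
  rw [Blockwise, blockSplit_append_of_isBlock X.length hu] at h
  obtain ⟨v, bs, huv, hbs, hw⟩ := List.forall₂_cons_left_iff.1 h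
  have append_eq : w = v ++ bs.flatten := by
    rw [← flatten_blockSplit Y.length (N := N) w, hw, List.flatten_cons]
  have hv : IsBlock N (Y.skeleton v) := by rwa [hR.skeleton_eq u v huv]
  refine ⟨v, bs.flatten, append_eq, huv, ?_⟩
  rw [append_eq, blockSplit_append_of_isBlock Y.length hv, List.cons_inj_right] at hw
  rwa [Blockwise, hw]

theorem Blockwise.exists_append_append (hR : IsBlockRelation X Y N R)
    (hu₁ : IsBlockConcat N (X.skeleton u₁)) (hu : IsBlock N (X.skeleton u))
    (h : Blockwise X Y N R (u₁ ++ (u ++ u₃)) w) :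
    ∃ v₁ v v₃, w = v₁ ++ (v ++ v₃) ∧ R u v ∧ Y.skeleton v₁ = X.skeleton u₁ := by
  generalize hS : X.skeleton u₁ = S at hu₁
  induction hu₁ generalizing u₁ w with
  | nil =>
    obtain rfl := List.map_eq_nil_iff.1 hS
    obtain ⟨v, v₃, rfl, huv, -⟩ := exists_append_of_isBlock hR hu h
    exact ⟨[], v, v₃, rfl, huv, rfl⟩
  | append hb _ ih =>
    obtain ⟨b, u₂, rfl, rfl, rfl⟩ := List.map_eq_append_iff.1 hS
    rw [List.append_assoc] at h
    obtain ⟨b', w, rfl, hbb', h⟩ := exists_append_of_isBlock hR hb h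
    obtain ⟨v₂, v, v₃, rfl, huv, hv₂⟩ := ih h rfl
    refine ⟨b' ++ v₂, v, v₃, by simp, huv, ?_⟩
    rw [skeleton_append, hv₂, hR.skeleton_eq b b' hbb']
    rfl

theorem getElem?_spelling_append {d : ℕ} (hd : d < (Y.skeleton v).sum) :
    (Y.spelling (v₁ ++ (v ++ v₃)))[(Y.skeleton v₁).sum + d]? = (Y.spelling v)[d]? := by
  rw [← length_spelling] at hd
  rw [spelling_append, spelling_append, ← length_spelling,
    List.getElem?_append_right (Nat.le_add_right _ _), Nat.add_sub_cancel_left,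
    List.getElem?_append_left hd]

theorem IsBlockRelation.exists_rel (hR : IsBlockRelation X Y N R)
    (hu : IsBlock N (X.skeleton u)) : ∃ v, R u v := by
  obtain ⟨v, -, hv⟩ :=
    (hR.hasCoupling _ hu).exists_right (X.mem_fillers.2 rfl) (X.prodWeight_pos u).ne'
  exact ⟨v, hv⟩

end Lexicon

namespace MarkedScheme

open Lexicon (IsBlockTower DeterminesLetter)

variable {A B : Type*} [Fintype A] [Fintype B] {X : MarkedScheme A} {Y : MarkedScheme B}
  {κ : ℕ → ℝ≥0∞} {N : ℕ → ℕ} {R : ℕ → List X.Letter → List Y.Letter → Prop}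
  {x : ℤ → A} {y : ℤ → B} {r r' : ℕ} {i i' l : ℤ} {b b' : B}
  {u u' : List X.Letter} {v v' : List Y.Letter}

theorem sum_skeleton_pos {n : ℕ} (hu : IsBlock n (X.lexicon.skeleton u)) :
    0 < (X.lexicon.skeleton u).sum := by
  obtain ⟨v, a, rfl, -, -⟩ := exists_eq_append_singleton_of_isBlock hu
  have := X.lexicon_length_pos a
  simp only [Lexicon.skeleton_append, Lexicon.skeleton_cons, List.sum_append, List.sum_cons]
  omega

theorem exists_rel_of_isBlockAt_succ (hT : IsBlockTower X.lexicon Y.lexicon κ N R)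
    (hu' : X.IsBlockAt (N (r + 1)) x i' u') (hv' : R (r + 1) u' v')
    (hu : X.IsBlockAt (N r) x i u) (hl' : i' ≤ l) (hr' : l < i' + (X.lexicon.skeleton u').sum)
    (hl : i ≤ l) (hr : l < i + (X.lexicon.skeleton u).sum) :
    ∃ v₁ v v₃, v' = v₁ ++ (v ++ v₃) ∧ R r u v ∧ i = i' + (Y.lexicon.skeleton v₁).sum := by
  obtain ⟨u₁, u₃, rfl, hu₁, rfl⟩ :=
    hu'.exists_eq_append (hT.strictMono r.lt_succ_self).le hu hl' hr' hl hr
  obtain ⟨v₁, v, v₃, rfl, huv, skeleton_eq⟩ :=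
    (hT.blockwise r _ _ hv').exists_append_append (hT.isBlockRelation r) hu₁ hu.2.1
  exact ⟨v₁, v, v₃, rfl, huv, by rw [skeleton_eq]⟩

theorem exists_rel_of_isBlockAt (hT : IsBlockTower X.lexicon Y.lexicon κ N R) (hrr' : r ≤ r')
    (hu' : X.IsBlockAt (N r') x i' u') (hv' : R r' u' v')
    (hu : X.IsBlockAt (N r) x i u) (hl' : i' ≤ l) (hr' : l < i' + (X.lexicon.skeleton u').sum)
    (hl : i ≤ l) (hr : l < i + (X.lexicon.skeleton u).sum) :
    ∃ v₁ v v₃, v' = v₁ ++ (v ++ v₃) ∧ R r u v ∧ i = i' + (Y.lexicon.skeleton v₁).sum := by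
  induction r', hrr' using Nat.le_induction generalizing i' u' v' with
  | base =>
    obtain ⟨rfl, rfl⟩ := hu'.unique hu hl' hr' hl hr
    exact ⟨[], v', [], by simp, hv', by simp⟩
  | succ r' _ ih =>
    have hN := (hT.strictMono r'.lt_succ_self).le
    obtain ⟨u₁, u₂, -, -, -, hu₂, hl₂, hr₂⟩ :=
      hu'.2.2.exists_isBlockAt (hu'.2.1.isBlockConcat hN) (hu'.1.mono hN) hl' hr'
    obtain ⟨v₁, v₂, v₃, rfl, huv₂, hi₂⟩ :=
      exists_rel_of_isBlockAt_succ hT hu' hv' hu₂ hl' hr' hl₂ hr₂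
    obtain ⟨w₁, v, w₃, rfl, huv, hi⟩ := ih hu₂ huv₂ hl₂ hr₂
    refine ⟨v₁ ++ w₁, v, w₃ ++ v₃, by simp, huv, ?_⟩
    rw [hi, hi₂, Lexicon.skeleton_append, List.sum_append]
    push_cast
    ring

variable (X Y N R) in
/-- Some level of the tower determines the symbol `b` of the image at position `l`: all images of
the block of `x` around `l` agree at that position. -/
def TowerDetermines (x : ℤ → A) (l : ℤ) (b : B) : Prop :=
  ∃ (r d : ℕ) (u : List X.Letter) (v : List Y.Letter), X.IsBlockAt (N r) x (l - d) u ∧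
    d < (X.lexicon.skeleton u).sum ∧ DeterminesLetter Y.lexicon (R r) u d ∧ R r u v ∧
    (Y.lexicon.spelling v)[d]? = some b

variable (X Y N R) in
/-- Every coordinate of the image of `x` is determined by some level of the tower. -/
def IsCodable (x : ℤ → A) : Prop := X.HasCuts x ∧ ∀ l, ∃ b, TowerDetermines X Y N R x l b

variable (X Y N R) in
/-- The map that reads off the symbols determined by the levels of a tower; its value where no
level determines the symbol is arbitrary. -/
def towerCode (x : ℤ → A) (l : ℤ) : B :=
  haveI : Nonempty B := ⟨Y.marker.head Y.marker_ne_nil⟩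
  Classical.epsilon (TowerDetermines X Y N R x l)

theorem towerDetermines_shiftBy {n : ℤ} :
    TowerDetermines X Y N R (shiftBy n x) l b ↔ TowerDetermines X Y N R x (l + n) b := by
  simp only [TowerDetermines, isBlockAt_shiftBy, sub_add_eq_add_sub]

theorem towerCode_shiftBy (n : ℤ) :
    towerCode X Y N R (shiftBy n x) = shiftBy n (towerCode X Y N R x) := by
  funext l
  simp only [towerCode, shiftBy]
  congr 1
  funext b
  exact propext towerDetermines_shiftBy

theorem isCodable_shiftBy {n : ℤ} :
    IsCodable X Y N R (shiftBy n x) ↔ IsCodable X Y N R x := by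
  have shift_of_isCodable (x : ℤ → A) (n : ℤ) (h : IsCodable X Y N R x) :
      IsCodable X Y N R (shiftBy n x) :=
    ⟨h.1.shiftBy n, fun l => by simp only [towerDetermines_shiftBy]; exact h.2 _⟩
  refine ⟨fun h => ?_, shift_of_isCodable x n⟩
  have shift_shift : shiftBy (-n) (shiftBy n x) = x := by
    funext i
    simp [shiftBy]
  exact shift_shift ▸ shift_of_isCodable _ (-n) h

theorem getElem?_spelling_eq_of_le (hT : IsBlockTower X.lexicon Y.lexicon κ N R)
    {d d' : ℕ} (hrr' : r ≤ r') (hu' : X.IsBlockAt (N r') x (l - d') u') (hv' : R r' u' v')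
    (hd' : d' < (X.lexicon.skeleton u').sum) (hu : X.IsBlockAt (N r) x (l - d) u)
    (hd : d < (X.lexicon.skeleton u).sum) (hdet : DeterminesLetter Y.lexicon (R r) u d)
    (hv : R r u v) : (Y.lexicon.spelling v')[d']? = (Y.lexicon.spelling v)[d]? := by
  obtain ⟨v₁, w, v₃, rfl, hw, hi⟩ := exists_rel_of_isBlockAt hT hrr' hu' hv' hu (l := l) (by omega)
    (by omega) (by omega) (by omega)
  obtain rfl : d' = (Y.lexicon.skeleton v₁).sum + d := by omega
  have hdw : d < (Y.lexicon.skeleton w).sum := by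
    rwa [(hT.isBlockRelation r).skeleton_eq _ _ hw]
  rw [Lexicon.getElem?_spelling_append hdw, hdet v w hv hw]

theorem TowerDetermines.exists_level (hT : IsBlockTower X.lexicon Y.lexicon κ N R)
    (h : TowerDetermines X Y N R x l b) :
    ∃ r₀, ∀ r ≥ r₀, ∀ (d : ℕ) u v, X.IsBlockAt (N r) x (l - d) u →
      d < (X.lexicon.skeleton u).sum → R r u v → (Y.lexicon.spelling v)[d]? = some b := by
  obtain ⟨r₀, d₀, u₀, v₀, hu₀, hd₀, hdet, hv₀, hb⟩ := h
  refine ⟨r₀, fun r hr d u v hu hd hv => ?_⟩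
  rw [← hb, getElem?_spelling_eq_of_le hT hr hu hv hd hu₀ hd₀ hdet hv₀]

theorem TowerDetermines.unique (hT : IsBlockTower X.lexicon Y.lexicon κ N R)
    (h : TowerDetermines X Y N R x l b) (h' : TowerDetermines X Y N R x l b') : b = b' := by
  obtain ⟨r, d, u, v, hu, hd, hdet, hv, hb⟩ := h
  obtain ⟨r', d', u', v', hu', hd', hdet', hv', hb'⟩ := h'
  rw [← Option.some_inj, ← hb, ← hb']
  rcases le_total r r' with hr | hr
  · exact (getElem?_spelling_eq_of_le hT hr hu' hv' hd' hu hd hdet hv).symm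
  · exact getElem?_spelling_eq_of_le hT hr hu hv hd hu' hd' hdet' hv'

theorem TowerDetermines.towerCode_eq (hT : IsBlockTower X.lexicon Y.lexicon κ N R)
    (h : TowerDetermines X Y N R x l b) : towerCode X Y N R x l = b :=
  have hb : TowerDetermines X Y N R x l (towerCode X Y N R x l) :=
    Classical.epsilon_spec (p := TowerDetermines X Y N R x l) ⟨b, h⟩
  hb.unique hT h

theorem IsCodable.exists_window_towerCode_eq (hT : IsBlockTower X.lexicon Y.lexicon κ N R)
    (hx : IsCodable X Y N R x) (hu : X.IsBlockAt (N r) x i u) :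
    ∃ v, R r u v ∧ window (towerCode X Y N R x) i (Y.lexicon.spelling v).length =
      Y.lexicon.spelling v := by
  have exists_level (l : ℤ) : ∃ r₀, ∀ r ≥ r₀, ∀ (d : ℕ) u v, X.IsBlockAt (N r) x (l - d) u →
      d < (X.lexicon.skeleton u).sum → R r u v →
      (Y.lexicon.spelling v)[d]? = some (towerCode X Y N R x l) := by
    obtain ⟨b, hb⟩ := hx.2 l
    rw [hb.towerCode_eq hT]
    exact hb.exists_level hT
  choose lev hlev using exists_level
  set M := max r ((Finset.range (X.lexicon.skeleton u).sum).sup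
    fun t : ℕ => lev (i + t))
  obtain ⟨i', u', hu', hl', hr'⟩ := exists_isBlockAt (hx.1 (N M) i).1 (hx.1 (N M) i).2
  obtain ⟨v', hv'⟩ := (hT.isBlockRelation _).exists_rel hu'.2.1
  obtain ⟨v₁, v, v₃, rfl, hv, rfl⟩ := exists_rel_of_isBlockAt hT (le_max_left _ _) hu' hv' hu
    hl' hr' le_rfl (by have := sum_skeleton_pos hu.2.1; omega)
  have skeleton_eq := (hT.isBlockRelation r).skeleton_eq _ _ hv
  refine ⟨v, hv, (window_eq_iff rfl).2 fun t ht => ?_⟩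
  rw [Lexicon.length_spelling, skeleton_eq] at ht
  have level_le : lev (i' + (Y.lexicon.skeleton v₁).sum + t) ≤ M :=
    (Finset.le_sup (f := fun t : ℕ => lev (i' + (Y.lexicon.skeleton v₁).sum + t))
      (Finset.mem_range.2 ht)).trans (le_max_right _ _)
  rw [← Lexicon.getElem?_spelling_append (by rwa [skeleton_eq])]
  refine hlev _ M level_le _ u' _ ?_ ?_ hv'
  · convert hu' using 1
    push_cast
    ring
  · rw [← (hT.isBlockRelation M).skeleton_eq _ _ hv']
    simp only [Lexicon.skeleton_append, List.sum_append, skeleton_eq]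
    omega

theorem HasCuts.exists_isBlockAt_end_eq {n : ℕ} (hx : X.HasCuts x) (hi : X.IsCut n x i) :
    ∃ i' u, X.IsBlockAt n x i' u ∧ i' + (X.lexicon.skeleton u).sum = i := by
  obtain ⟨i', u, hu, hl, hr⟩ := exists_isBlockAt (hx n (i - 1)).1 (hx n (i - 1)).2
  refine ⟨i', u, hu, ?_⟩
  by_contra hne
  exact hu.not_isCut (by omega) (by omega) hi

theorem isMarked_of_window_eq_spelling (hv : v ≠ [])
    (h : window y i (Y.lexicon.spelling v).length = Y.lexicon.spelling v) :
    Y.IsMarked y (i + (Y.lexicon.skeleton v).sum) := by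
  obtain ⟨w, a, rfl⟩ := List.eq_nil_or_concat' v |>.resolve_left hv
  have suffix : Y.marker <:+ Y.lexicon.spelling (w ++ [a]) := by
    rw [Lexicon.spelling_append, Lexicon.spelling_cons, Lexicon.spelling_nil, List.append_nil]
    exact a.2.1.trans (List.suffix_append _ _)
  rw [← h, suffix_window_iff, Lexicon.length_spelling] at suffix
  exact suffix.2

theorem IsCodable.exists_isBlockAt_towerCode (hT : IsBlockTower X.lexicon Y.lexicon κ N R)
    (hx : IsCodable X Y N R x) (hu : X.IsBlockAt (N r) x i u) :
    ∃ v, R r u v ∧ Y.IsBlockAt (N r) (towerCode X Y N R x) i v := by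
  have hR := hT.isBlockRelation r
  have isBlock {u v} (huv : R r u v) : IsBlock (N r) (Y.lexicon.skeleton v) := by
    rw [hR.skeleton_eq _ _ huv]
    exact hR.isBlock _ _ huv
  have isMarked_start {i u} (hu : X.IsBlockAt (N r) x i u) :
      Y.IsMarked (towerCode X Y N R x) i := by
    obtain ⟨i', u', hu', rfl⟩ := hx.1.exists_isBlockAt_end_eq hu.1
    obtain ⟨v', huv', hw⟩ := hx.exists_window_towerCode_eq hT hu'
    rw [← hR.skeleton_eq _ _ huv']
    refine isMarked_of_window_eq_spelling ?_ hw
    rintro rfl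
    exact (isBlock huv').ne_nil rfl
  have exists_spellsAt {i u} (hu : X.IsBlockAt (N r) x i u) :
      ∃ v, R r u v ∧ Y.SpellsAt (towerCode X Y N R x) i v := by
    obtain ⟨v, huv, hw⟩ := hx.exists_window_towerCode_eq hT hu
    exact ⟨v, huv, isMarked_start hu, hw⟩
  obtain ⟨v, huv, hv⟩ := exists_spellsAt hu
  refine ⟨v, huv, ?_, isBlock huv, hv⟩
  obtain ⟨i', u', hu', rfl⟩ := hx.1.exists_isBlockAt_end_eq hu.1
  obtain ⟨v', huv', hv'⟩ := exists_spellsAt hu'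
  rw [← hR.skeleton_eq _ _ huv']
  exact hv'.isCut_end (isBlock huv')

theorem towerCode_towerCode_swap (hT : IsBlockTower X.lexicon Y.lexicon κ N R)
    (hx : IsCodable X Y N R x)
    (hy : IsCodable Y X N (fun r v u => R r u v) (towerCode X Y N R x)) :
    towerCode Y X N (fun r v u => R r u v) (towerCode X Y N R x) = x := by
  funext l
  obtain ⟨-, r, d, v, u', hv, hd, hdet, huv', -⟩ := hy.2 l
  refine TowerDetermines.towerCode_eq hT.swap ⟨r, d, v, u', hv, hd, hdet, huv', ?_⟩
  obtain ⟨i, u, hu, hl, hr⟩ := exists_isBlockAt (hx.1 (N r) l).1 (hx.1 (N r) l).2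
  obtain ⟨v', huv, hv'⟩ := hx.exists_isBlockAt_towerCode hT hu
  obtain ⟨rfl, rfl⟩ := hv'.unique hv hl
    (by rwa [(hT.isBlockRelation r).skeleton_eq _ _ huv]) (by omega) (by omega)
  rw [hdet u' u huv' huv, ← hu.2.2.2,
    getElem?_window _ _ (by rw [Lexicon.length_spelling]; omega), sub_add_cancel]

end MarkedScheme

/-! ### Measure-theoretic properties of the code of a tower -/

namespace MarkedScheme

open Lexicon (IsBlockTower DeterminesLetter)

variable {A B : Type*} [Fintype A] [Fintype B] {X : MarkedScheme A} {Y : MarkedScheme B}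
  {N : ℕ → ℕ} {R : ℕ → List X.Letter → List Y.Letter → Prop} {f : (ℤ → B) → Prop} {m : ℕ}

theorem HasCuts.exists_isBlockAt_origin {x : ℤ → A} (hx : X.HasCuts x) (n : ℕ) :
    ∃ (d : ℕ) (u : List X.Letter), X.IsBlockAt n x (-d) u ∧ d < (X.lexicon.skeleton u).sum := by
  obtain ⟨i, u, hu, hl, hr⟩ := exists_isBlockAt (hx n 0).1 (hx n 0).2
  obtain ⟨d, rfl⟩ : ∃ d : ℕ, i = -d := ⟨(-i).toNat, by omega⟩
  exact ⟨d, u, hu, by omega⟩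

theorem exists_towerDetermines_of_not_originBlockSatisfies {κ : ℕ → ℝ≥0∞}
    (hT : IsBlockTower X.lexicon Y.lexicon κ N R) {x : ℤ → A} (hx : X.HasCuts x) {r : ℕ}
    (h : ¬ X.OriginBlockSatisfies (N r) (fun d u => ¬ DeterminesLetter Y.lexicon (R r) u d) x) :
    ∃ b, TowerDetermines X Y N R x 0 b := by
  obtain ⟨d, u, hu, hd⟩ := hx.exists_isBlockAt_origin (N r)
  have hdet : DeterminesLetter Y.lexicon (R r) u d := by
    by_contra hndet
    exact h ⟨d, u, hu, hd, hndet⟩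
  have hR := hT.isBlockRelation r
  obtain ⟨v, huv⟩ := hR.exists_rel hu.2.1
  have hdv : d < (Y.lexicon.spelling v).length := by
    rwa [Lexicon.length_spelling, hR.skeleton_eq _ _ huv]
  exact ⟨(Y.lexicon.spelling v)[d], r, d, u, v, by simpa using hu, hd, hdet, huv,
    List.getElem?_eq_getElem hdv⟩

variable (Y) in
/-- The spelling of `v`, with position `d` placed at the origin, covers `[-m, m)` and agrees there
with a point satisfying `f`. -/
def SpellsAround (f : (ℤ → B) → Prop) (m d : ℕ) (v : List Y.Letter) : Prop :=
  m ≤ d ∧ d + m ≤ (Y.lexicon.skeleton v).sum ∧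
    ∃ y, f y ∧ ∀ i : ℤ, -m ≤ i → i < m → (Y.lexicon.spelling v)[(d + i).toNat]? = some (y i)

theorem IsBlockAt.getElem?_spelling {n d : ℕ} {y : ℤ → B} {v : List Y.Letter}
    (hv : Y.IsBlockAt n y (-d) v) {i : ℤ} (hi : 0 ≤ d + i)
    (hi' : d + i < (Y.lexicon.skeleton v).sum) :
    (Y.lexicon.spelling v)[(d + i).toNat]? = some (y i) := by
  rw [← hv.2.2.2, getElem?_window _ _ (by rw [Lexicon.length_spelling]; omega)]
  congr 2
  omega

variable (X Y N R) in
/-- The set on which the code of a tower is inverted by the code of the reversed tower. -/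
def codeDomain : Set (ℤ → A) :=
  {x | IsCodable X Y N R x ∧ IsCodable Y X N (fun r v u => R r u v) (towerCode X Y N R x)}

theorem towerCode_mem_codeDomain {κ : ℕ → ℝ≥0∞} (hT : IsBlockTower X.lexicon Y.lexicon κ N R)
    {x : ℤ → A} (hx : x ∈ codeDomain X Y N R) :
    towerCode X Y N R x ∈ codeDomain Y X N (fun r v u => R r u v) :=
  ⟨hx.2, by rw [towerCode_towerCode_swap hT hx.1 hx.2]; exact hx.1⟩

variable [MeasurableSpace A]

theorem isFinitary_towerCode [MeasurableSpace B] {κ : ℕ → ℝ≥0∞}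
    (hT : IsBlockTower X.lexicon Y.lexicon κ N R) :
    IsFinitary X.measure (codeDomain X Y N R) (towerCode X Y N R) := by
  refine ae_of_all _ fun x hx => ?_
  obtain ⟨b, hb⟩ := hx.1.2 0
  have code_eq := hb.towerCode_eq hT
  obtain ⟨r, d, u, v, hu, hd, hdet, huv, hv⟩ := hb
  refine ⟨d + X.marker.length + N r, (X.lexicon.skeleton u).sum, fun y _ hxy => ?_⟩
  rw [code_eq]
  refine TowerDetermines.towerCode_eq hT ⟨r, d, u, v, ?_, hd, hdet, huv, hv⟩
  refine (isBlockAt_congr fun t ht ht' => ?_).1 hu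
  exact (hxy _ (by push_cast; omega) (by omega)).symm

variable [DiscreteMeasurableSpace A]

theorem measurableSet_towerDetermines (l : ℤ) (b : B) :
    MeasurableSet {x | TowerDetermines X Y N R x l b} := by
  have eq_iUnion : {x | TowerDetermines X Y N R x l b} =
      ⋃ (r : ℕ) (d : ℕ) (u : List X.Letter) (v : List Y.Letter),
        {x | X.IsBlockAt (N r) x (l - d) u} ∩ {_x | d < (X.lexicon.skeleton u).sum ∧
          DeterminesLetter Y.lexicon (R r) u d ∧ R r u v ∧
          (Y.lexicon.spelling v)[d]? = some b} := by
    ext x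
    simp [TowerDetermines]
  rw [eq_iUnion]
  exact .iUnion fun r => .iUnion fun d => .iUnion fun u => .iUnion fun v =>
    (X.measurableSet_isBlockAt _ _ _).inter (.const _)

theorem measurableSet_hasCuts : MeasurableSet {x | X.HasCuts x} := by
  have eq_iInter : {x | X.HasCuts x} =
      ⋂ (n : ℕ) (l : ℤ), (⋃ i : ℤ, {_x | i ≤ l} ∩ {x | X.IsCut n x i}) ∩
        ⋃ i : ℤ, {_x | l < i} ∩ {x | X.IsCut n x i} := by
    ext x
    simp [HasCuts]
  have measurableSet_isCut (n : ℕ) (i : ℤ) : MeasurableSet {x | X.IsCut n x i} :=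
    measurableSet_of_dependsOn (X.dependsOn_isCut n i)
  rw [eq_iInter]
  exact .iInter fun n => .iInter fun l =>
    (MeasurableSet.iUnion fun i => (MeasurableSet.const _).inter (measurableSet_isCut n i)).inter
      (.iUnion fun i => (MeasurableSet.const _).inter (measurableSet_isCut n i))

theorem measurableSet_isCodable : MeasurableSet {x | IsCodable X Y N R x} := by
  have eq_inter : {x | IsCodable X Y N R x} =
      {x | X.HasCuts x} ∩ ⋂ l : ℤ, ⋃ b, {x | TowerDetermines X Y N R x l b} := by
    ext x
    simp [IsCodable]
  rw [eq_inter]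
  exact measurableSet_hasCuts.inter
    (.iInter fun l => .iUnion fun b => measurableSet_towerDetermines l b)

theorem ae_exists_towerDetermines (hT : IsBlockTower X.lexicon Y.lexicon X.cutProb N R) :
    ∀ᵐ x ∂X.measure, ∃ b, TowerDetermines X Y N R x 0 b := by
  have measure_le (ε : ℝ) (hε : 0 < ε) :
      X.measure {x | ¬ ∃ b, TowerDetermines X Y N R x 0 b} ≤ ENNReal.ofReal ε := by
    obtain ⟨r, hr⟩ := (hT.frequently_right ε hε).exists
    rw [blockProb_eq_measure] at hr
    refine le_trans (measure_mono_ae ?_) hr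
    filter_upwards [X.ae_hasCuts] with x hx hundetermined
    by_contra hdetermined
    exact hundetermined (exists_towerDetermines_of_not_originBlockSatisfies hT hx hdetermined)
  rw [ae_iff]
  refine le_antisymm (ENNReal.le_of_forall_pos_le_add fun ε hε _ => ?_) bot_le
  simpa using measure_le ε hε

theorem ae_isCodable (hT : IsBlockTower X.lexicon Y.lexicon X.cutProb N R) :
    ∀ᵐ x ∂X.measure, IsCodable X Y N R x := by
  have determined (l : ℤ) : ∀ᵐ x ∂X.measure, ∃ b, TowerDetermines X Y N R x l b := by
    filter_upwards [(measurePreserving_shiftBy X.isProbVector l).quasiMeasurePreserving.ae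
      (ae_exists_towerDetermines hT)] with x hx
    simpa only [towerDetermines_shiftBy, zero_add] using hx
  filter_upwards [X.ae_hasCuts, ae_all_iff.2 determined] with x hcuts hdet
  exact ⟨hcuts, hdet⟩

variable (X) in
theorem tendsto_measure_not_window_subset_originBlock (m : ℕ) :
    Tendsto (fun n => X.measure {x | ¬ X.OriginBlockSatisfies n
      (fun d u => m ≤ d ∧ d + m ≤ (X.lexicon.skeleton u).sum) x}) atTop (𝓝 0) := by
  rw [← measure_empty (μ := X.measure)]
  refine tendsto_measure_of_ae_tendsto_indicator_of_isFiniteMeasure atTop MeasurableSet.empty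
    (fun n => (X.measurableSet_originBlockSatisfies _ _).compl) ?_
  filter_upwards [X.ae_hasCuts] with x hx
  obtain ⟨j, hj, hcut⟩ := (hx 0 (-m - 1)).1
  -- A cut of level `n` has no marker shortly before it, whereas there is one at `j < -m`.
  filter_upwards [eventually_ge_atTop (m - j + 1).toNat] with n hn
  refine iff_of_false (not_not.2 ?_) (Set.notMem_empty x)
  have not_isCut (i : ℤ) (hi : -m ≤ i) (hi' : i ≤ m) : ¬ X.IsCut n x i := fun h =>
    h.2 j (by omega) (by omega) hcut.1
  obtain ⟨d, u, hu, hd⟩ := hx.exists_isBlockAt_origin n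
  refine ⟨d, u, hu, hd, ?_, ?_⟩
  · by_contra hlt
    exact not_isCut _ (by omega) (by omega) hu.1
  · by_contra hlt
    exact not_isCut _ (by omega) (by omega) hu.isCut_end

theorem ae_towerCode_or_undetermined (hT : IsBlockTower X.lexicon Y.lexicon X.cutProb N R)
    (hf : DependsOn f (Set.Ico (-m : ℤ) m)) (r : ℕ) :
    ∀ᵐ x ∂X.measure,
      X.OriginBlockSatisfies (N r) (fun d u => ∃ v, R r u v ∧ Y.SpellsAround f m d v) x →
      f (towerCode X Y N R x) ∨ ∃ i ∈ Finset.Ico (-m : ℤ) m, X.OriginBlockSatisfies (N r)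
        (fun d u => ¬ DeterminesLetter Y.lexicon (R r) u d) (shiftBy i x) := by
  filter_upwards [ae_isCodable hT] with x hx
  rintro ⟨d, u, hu, hd, v, huv, hmd, hdm, y, hy, hyv⟩
  have hR := hT.isBlockRelation r
  rw [hR.skeleton_eq _ _ huv] at hdm
  refine or_iff_not_imp_right.2 fun hdet => ?_
  have determinesLetter (i : ℤ) (hi : -m ≤ i) (hi' : i < m) :
      DeterminesLetter Y.lexicon (R r) u (d + i).toNat := by
    by_contra hndet
    refine hdet ⟨i, Finset.mem_Ico.2 ⟨hi, hi'⟩, (d + i).toNat, u, ?_, by omega, hndet⟩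
    rw [isBlockAt_shiftBy]
    convert hu using 1
    omega
  obtain ⟨v', huv', hv'⟩ := hx.exists_isBlockAt_towerCode hT hu
  have code_eq : ∀ i ∈ Set.Ico (-m : ℤ) m, towerCode X Y N R x i = y i := by
    rintro i ⟨hi, hi'⟩
    rw [← Option.some_inj, ← hyv i hi hi', ← hv'.getElem?_spelling (by omega)
      (by rw [hR.skeleton_eq _ _ huv']; omega)]
    exact determinesLetter i hi hi' v' v huv' huv
  rwa [hf code_eq]

theorem measure_exists_shiftBy_le {E : Set (ℤ → A)} (hE : MeasurableSet E) {δ : ℝ}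
    (hδ : X.measure E ≤ ENNReal.ofReal δ) (m : ℕ) :
    X.measure {x | ∃ i ∈ Finset.Ico (-m : ℤ) m, shiftBy i x ∈ E} ≤
      ENNReal.ofReal (2 * m * δ) := by
  have eq_biUnion : {x | ∃ i ∈ Finset.Ico (-m : ℤ) m, shiftBy i x ∈ E} =
      ⋃ i ∈ Finset.Ico (-m : ℤ) m, {x | shiftBy i x ∈ E} := by
    ext x
    simp
  rw [eq_biUnion]
  calc X.measure (⋃ i ∈ Finset.Ico (-m : ℤ) m, {x | shiftBy i x ∈ E})
      ≤ ∑ i ∈ Finset.Ico (-m : ℤ) m, X.measure {x | shiftBy i x ∈ E} :=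
        measure_biUnion_finset_le _ _
    _ ≤ ∑ _i ∈ Finset.Ico (-m : ℤ) m, ENNReal.ofReal δ := Finset.sum_le_sum fun _ _ => by
        rw [measure, bernoulliMeasure_shiftBy X.isProbVector _ hE]
        exact hδ
    _ = ENNReal.ofReal (2 * m * δ) := by
        rw [Finset.sum_const, Int.card_Ico, sub_neg_eq_add, ← two_mul, nsmul_eq_mul,
          ENNReal.ofReal_mul (by positivity)]
        norm_cast

variable [MeasurableSpace B]

theorem measure_le_measure_spellsAround_add (f : (ℤ → B) → Prop) (m n : ℕ) :
    Y.measure {y | f y} ≤ Y.measure {y | Y.OriginBlockSatisfies n (Y.SpellsAround f m) y} +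
      Y.measure {y | ¬ Y.OriginBlockSatisfies n
        (fun d v => m ≤ d ∧ d + m ≤ (Y.lexicon.skeleton v).sum) y} := by
  refine (measure_mono fun y hy => ?_).trans (measure_union_le _ _)
  refine or_iff_not_imp_right.2 fun hinside => ?_
  obtain ⟨d, v, hv, hd, hmd, hdm⟩ := not_not.1 hinside
  exact ⟨d, v, hv, hd, hmd, hdm, y, hy, fun i _ _ => hv.getElem?_spelling (by omega) (by omega)⟩

theorem measurable_towerCode : Measurable (towerCode X Y N R) := by
  refine measurable_pi_lambda _ fun l => ?_
  have : Nonempty B := ⟨Y.marker.head Y.marker_ne_nil⟩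
  have measurable_determines : Measurable fun x b => TowerDetermines X Y N R x l b :=
    measurable_pi_lambda _ fun b => measurableSet_setOfPred.1 (measurableSet_towerDetermines l b)
  exact (Measurable.of_discrete (f := fun P : B → Prop => Classical.epsilon P)).comp
    measurable_determines

variable [DiscreteMeasurableSpace B]

theorem measure_originBlockSatisfies_le {n : ℕ} {S : List X.Letter → List Y.Letter → Prop}
    (hS : Lexicon.IsBlockRelation X.lexicon Y.lexicon n S) (hκ : X.cutProb = Y.cutProb)
    (Q : ℕ → List Y.Letter → Prop) :
    Y.measure {y | Y.OriginBlockSatisfies n Q y} ≤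
      X.measure {x | X.OriginBlockSatisfies n (fun d u => ∃ v, S u v ∧ Q d v) x} := by
  rw [← blockProb_eq_measure, ← blockProb_eq_measure, ← hκ,
    ← one_mul (Lexicon.blockProb X.lexicon _ _ _), ← ENNReal.ofReal_one]
  refine Lexicon.blockProb_le_mul zero_le_one fun s hs d => ?_
  rw [one_mul]
  exact (hS.hasCoupling s hs).sum_filter_le fun u _ v _ huv hv => ⟨v, huv, hv⟩

theorem measure_le_measure_towerCode_add
    (hT : IsBlockTower X.lexicon Y.lexicon X.cutProb N R) (hκ : X.cutProb = Y.cutProb)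
    (hf : DependsOn f (Set.Ico (-m : ℤ) m)) {ε : ℝ} (hε : 0 < ε) :
    Y.measure {y | f y} ≤ X.measure {x | f (towerCode X Y N R x)} + ENNReal.ofReal ε := by
  set δ : ℝ := ε / (2 * m + 1) with hδ
  have δ_pos : 0 < δ := by positivity
  have eventually_inside :=
    ((Y.tendsto_measure_not_window_subset_originBlock m).comp
      hT.strictMono.tendsto_atTop).eventually_le_const (ENNReal.ofReal_pos.2 δ_pos)
  obtain ⟨r, hdet, hinside⟩ :=
    ((hT.frequently_right δ δ_pos).and_eventually eventually_inside).exists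
  rw [blockProb_eq_measure] at hdet
  calc Y.measure {y | f y}
      ≤ Y.measure {y | Y.OriginBlockSatisfies (N r) (Y.SpellsAround f m) y} + ENNReal.ofReal δ :=
        (measure_le_measure_spellsAround_add f m (N r)).trans (by gcongr; exact hinside)
    _ ≤ X.measure {x | X.OriginBlockSatisfies (N r)
          (fun d u => ∃ v, R r u v ∧ Y.SpellsAround f m d v) x} + ENNReal.ofReal δ := by
        gcongr
        exact measure_originBlockSatisfies_le (hT.isBlockRelation r) hκ _
    _ ≤ X.measure {x | f (towerCode X Y N R x)} + ENNReal.ofReal (2 * m * δ) +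
          ENNReal.ofReal δ := by
        gcongr
        exact (measure_mono_ae (ae_towerCode_or_undetermined hT hf r)).trans
          ((measure_union_le _ _).trans (add_le_add_right
            (measure_exists_shiftBy_le (X.measurableSet_originBlockSatisfies _ _) hdet m) _))
    _ = X.measure {x | f (towerCode X Y N R x)} + ENNReal.ofReal ε := by
        rw [add_assoc, ← ENNReal.ofReal_add (by positivity) δ_pos.le]
        congr 2
        rw [hδ]
        field_simp

theorem measure_towerCode_eq (hT : IsBlockTower X.lexicon Y.lexicon X.cutProb N R)
    (hκ : X.cutProb = Y.cutProb) (hf : DependsOn f (Set.Ico (-m : ℤ) m)) :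
    X.measure {x | f (towerCode X Y N R x)} = Y.measure {y | f y} := by
  have measure_le {f : (ℤ → B) → Prop} (hf : DependsOn f (Set.Ico (-m : ℤ) m)) :
      Y.measure {y | f y} ≤ X.measure {x | f (towerCode X Y N R x)} :=
    ENNReal.le_of_forall_pos_le_add fun ε hε _ => by
      simpa using measure_le_measure_towerCode_add hT hκ hf (ε := ε) hε
  have measurableSet_f := measurableSet_of_dependsOn hf
  have compl_le : Y.measure {y | f y}ᶜ ≤ X.measure (towerCode X Y N R ⁻¹' {y | f y})ᶜ :=
    measure_le (f := fun y => ¬ f y) fun x y hxy => by simp only [hf hxy]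
  rw [prob_compl_eq_one_sub measurableSet_f,
    prob_compl_eq_one_sub (measurable_towerCode measurableSet_f)] at compl_le
  exact le_antisymm ((ENNReal.sub_le_sub_iff_left prob_le_one one_ne_top).1 compl_le)
    (measure_le hf)

theorem map_towerCode (hT : IsBlockTower X.lexicon Y.lexicon X.cutProb N R)
    (hκ : X.cutProb = Y.cutProb) : X.measure.map (towerCode X Y N R) = Y.measure := by
  refine IsBernoulliMeasure.unique ?_ (isBernoulliMeasure_bernoulliMeasure Y.isProbVector)
  intro F s
  obtain ⟨m, hm⟩ : ∃ m : ℕ, ∀ i ∈ F, i.natAbs < m :=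
    ⟨F.sup Int.natAbs + 1, fun i hi => Nat.lt_succ_of_le (Finset.le_sup hi)⟩
  have dependsOn : DependsOn (fun y : ℤ → B => ∀ i ∈ F, y i = s i) (Set.Ico (-m : ℤ) m) :=
    fun x y hxy => propext <| forall₂_congr fun i hi => by
      have := hm i hi
      rw [hxy i ⟨by omega, by omega⟩]
  rw [Measure.map_apply measurable_towerCode (measurableSet_of_dependsOn dependsOn)]
  exact (measure_towerCode_eq hT hκ dependsOn).trans
    (isBernoulliMeasure_bernoulliMeasure Y.isProbVector F s)

theorem isFactorMap_towerCode (hT : IsBlockTower X.lexicon Y.lexicon X.cutProb N R)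
    (hκ : X.cutProb = Y.cutProb) :
    IsFactorMap X.measure Y.measure (codeDomain X Y N R) (towerCode X Y N R) := by
  have measurableSet_codeDomain : MeasurableSet (codeDomain X Y N R) :=
    measurableSet_isCodable.inter (measurable_towerCode measurableSet_isCodable)
  refine ⟨measurable_towerCode, measurableSet_codeDomain, ?_, ?_, (map_towerCode hT hκ).symm,
    fun x _ => towerCode_shiftBy 1⟩
  · ext x
    have shift_eq : shift x = shiftBy 1 x := rfl
    simp only [Set.mem_preimage, codeDomain, Set.mem_ofPred_eq, shift_eq, towerCode_shiftBy,
      isCodable_shiftBy]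
  · refine (mem_ae_iff_prob_eq_one measurableSet_codeDomain).1 ?_
    have hT' : IsBlockTower Y.lexicon X.lexicon Y.cutProb N fun r v u => R r u v := hκ ▸ hT.swap
    have ae_swap := ae_isCodable hT'
    rw [← map_towerCode hT hκ] at ae_swap
    filter_upwards [ae_isCodable hT, ae_of_ae_map measurable_towerCode.aemeasurable ae_swap]
      with x hx hx'
    exact ⟨hx, hx'⟩

theorem exists_isFinitaryIsomorphism (hk : X.marker.length = Y.marker.length)
    (hp : X.markerProb = Y.markerProb) (hH : vecEntropy X.prob = vecEntropy Y.prob) :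
    ∃ D E φ ψ, IsFinitaryIsomorphism X.measure Y.measure D E φ ψ := by
  have hκ := cutProb_eq hk hp
  have hY := Y.hasInformationRate
  rw [← hκ, ← informationRate_eq hk hp hH] at hY
  obtain ⟨N, R, hT⟩ := Lexicon.exists_isBlockTower X.informationRate_pos (lengthWeight_eq hk hp)
    X.hasInformationRate hY
  have hT' : IsBlockTower Y.lexicon X.lexicon Y.cutProb N fun r v u => R r u v := hκ ▸ hT.swap
  exact ⟨_, _, _, _, isFactorMap_towerCode hT hκ, isFactorMap_towerCode hT' hκ.symm,
    isFinitary_towerCode hT, isFinitary_towerCode hT',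
    fun x hx => ⟨towerCode_mem_codeDomain hT hx, towerCode_towerCode_swap hT hx.1 hx.2⟩,
    fun y hy => ⟨towerCode_mem_codeDomain hT' hy, towerCode_towerCode_swap hT' hy.1 hy.2⟩⟩

end MarkedScheme

/-! ### Composition of finitary isomorphisms -/

section Composition

variable {A B C : Type*} [MeasurableSpace A] [MeasurableSpace B] [MeasurableSpace C]
  {μ : Measure (ℤ → A)} {ν : Measure (ℤ → B)} {ρ : Measure (ℤ → C)}
  {D : Set (ℤ → A)} {E : Set (ℤ → B)} {φ : (ℤ → A) → ℤ → B}
  {D' : Set (ℤ → B)} {E' : Set (ℤ → C)} {φ' : (ℤ → B) → ℤ → C}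
  {ψ : (ℤ → B) → ℤ → A} {ψ' : (ℤ → C) → ℤ → B}

theorem shiftBy_zero {α : Type*} (x : ℤ → α) : shiftBy 0 x = x :=
  funext fun i => congrArg x (add_zero i)

theorem shiftBy_add_one {α : Type*} (n : ℤ) (x : ℤ → α) :
    shiftBy (n + 1) x = shift (shiftBy n x) := by
  funext i
  simp only [shiftBy, shift, add_assoc, add_comm 1 n]

theorem shift_injective {α : Type*} : Function.Injective (shift : (ℤ → α) → ℤ → α) :=
  fun x y h => funext fun i => by simpa [shift] using congrFun h (i - 1)

theorem _root_.IsFactorMap.shift_mem_iff (h : IsFactorMap μ ν D φ) {x : ℤ → A} :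
    shift x ∈ D ↔ x ∈ D :=
  Set.ext_iff.1 h.dom_shift_invariant x

theorem _root_.IsFactorMap.shiftBy_mem_and_map_shiftBy (h : IsFactorMap μ ν D φ) (n : ℤ)
    {x : ℤ → A} (hx : x ∈ D) : shiftBy n x ∈ D ∧ φ (shiftBy n x) = shiftBy n (φ x) := by
  induction n with
  | zero => simpa only [shiftBy_zero, and_true] using hx
  | succ k ih =>
    obtain ⟨mem, map_eq⟩ := ih
    rw [shiftBy_add_one, shiftBy_add_one, h.shift_mem_iff, h.equivariant _ mem, map_eq]
    exact ⟨mem, rfl⟩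
  | pred k ih =>
    obtain ⟨mem, map_eq⟩ := ih
    rw [← sub_add_cancel (-k : ℤ) 1, shiftBy_add_one, h.shift_mem_iff] at mem
    rw [← sub_add_cancel (-k : ℤ) 1, shiftBy_add_one, shiftBy_add_one,
      h.equivariant _ mem] at map_eq
    exact ⟨mem, shift_injective map_eq⟩

theorem _root_.IsFinitary.ae_exists_window (hμ : ∀ n, MeasurePreserving (shiftBy n) μ μ)
    (h : IsFactorMap μ ν D φ) (hfin : IsFinitary μ D φ) :
    ∀ᵐ x ∂μ, x ∈ D → ∀ n : ℤ, ∃ m : ℕ, ∀ y ∈ D, (∀ i, -(m : ℤ) ≤ i → i ≤ m → y i = x i) →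
      φ y n = φ x n := by
  filter_upwards [ae_all_iff.2 fun n => (hμ n).quasiMeasurePreserving.ae hfin] with x hx hxD n
  obtain ⟨mem, map_eq⟩ := h.shiftBy_mem_and_map_shiftBy n hxD
  obtain ⟨q, r, determines⟩ := hx n mem
  refine ⟨q + r + n.natAbs, fun y hy hyx => ?_⟩
  obtain ⟨mem', map_eq'⟩ := h.shiftBy_mem_and_map_shiftBy n hy
  have eq_at_zero :=
    determines (shiftBy n y) mem' fun i hi hi' => hyx (i + n) (by omega) (by omega)
  simpa [map_eq, map_eq', shiftBy] using eq_at_zero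

theorem _root_.IsFactorMap.comp [IsProbabilityMeasure μ] [IsProbabilityMeasure ν]
    (h : IsFactorMap μ ν D φ) (h' : IsFactorMap ν ρ D' φ') :
    IsFactorMap μ ρ (D ∩ φ ⁻¹' D') (φ' ∘ φ) where
  measurable_map := h'.measurable_map.comp h.measurable_map
  dom_measurable := h.dom_measurable.inter (h.measurable_map h'.dom_measurable)
  dom_shift_invariant := by
    ext x
    simp only [Set.mem_preimage, Set.mem_inter_iff, h.shift_mem_iff]
    exact and_congr_right fun hx => by rw [h.equivariant x hx, h'.shift_mem_iff]
  dom_full := by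
    have ae_mem : ∀ᵐ x ∂μ, x ∈ D := (mem_ae_iff_prob_eq_one h.dom_measurable).2 h.dom_full
    have ae_mem' : ∀ᵐ y ∂ν, y ∈ D' := (mem_ae_iff_prob_eq_one h'.dom_measurable).2 h'.dom_full
    rw [h.pushforward] at ae_mem'
    exact (mem_ae_iff_prob_eq_one
      (h.dom_measurable.inter (h.measurable_map h'.dom_measurable))).1
        (ae_mem.and (ae_of_ae_map h.measurable_map.aemeasurable ae_mem'))
  pushforward := by
    rw [← Measure.map_map h'.measurable_map h.measurable_map, ← h.pushforward, h'.pushforward]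
  equivariant x hx := by
    simp only [Function.comp_apply, h.equivariant x hx.1, h'.equivariant _ hx.2]

theorem _root_.IsFinitary.comp (hμ : ∀ n, MeasurePreserving (shiftBy n) μ μ)
    (h : IsFactorMap μ ν D φ) (hfin : IsFinitary μ D φ) (hfin' : IsFinitary ν D' φ') :
    IsFinitary μ (D ∩ φ ⁻¹' D') (φ' ∘ φ) := by
  rw [IsFinitary, h.pushforward] at hfin'
  filter_upwards [hfin.ae_exists_window hμ h, ae_of_ae_map h.measurable_map.aemeasurable hfin']
    with x window determines hx
  obtain ⟨q, r, hqr⟩ := determines hx.2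
  choose m hm using window hx.1
  let M := ∑ n ∈ Finset.Icc (-q : ℤ) r, m n
  refine ⟨M, M, fun y hy hyx => hqr _ hy.2 fun n hn hn' => hm n y hy.1 fun i hi hi' => ?_⟩
  have le_M : m n ≤ M :=
    Finset.single_le_sum (f := m) (fun _ _ => Nat.zero_le _) (Finset.mem_Icc.2 ⟨hn, hn'⟩)
  exact hyx i (by omega) (by omega)

theorem _root_.IsFinitaryIsomorphism.trans [IsProbabilityMeasure μ] [IsProbabilityMeasure ν]
    [IsProbabilityMeasure ρ] (hμ : ∀ n, MeasurePreserving (shiftBy n) μ μ)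
    (hρ : ∀ n, MeasurePreserving (shiftBy n) ρ ρ) (h : IsFinitaryIsomorphism μ ν D E φ ψ)
    (h' : IsFinitaryIsomorphism ν ρ D' E' φ' ψ') :
    IsFinitaryIsomorphism μ ρ (D ∩ φ ⁻¹' D') (E' ∩ ψ' ⁻¹' E) (φ' ∘ φ) (ψ ∘ ψ') := by
  obtain ⟨hφ, hψ, finφ, finψ, left, right⟩ := h
  obtain ⟨hφ', hψ', finφ', finψ', left', right'⟩ := h'
  refine ⟨hφ.comp hφ', hψ'.comp hψ, finφ.comp hμ hφ finφ', finψ'.comp hρ hψ' finψ,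
    fun x ⟨hx, hx'⟩ => ?_, fun z ⟨hz, hz'⟩ => ?_⟩
  · simp only [Set.mem_inter_iff, Set.mem_preimage, Function.comp_apply, (left' _ hx').2]
    exact ⟨⟨(left' _ hx').1, (left x hx).1⟩, (left x hx).2⟩
  · simp only [Set.mem_inter_iff, Set.mem_preimage, Function.comp_apply, (right _ hz').2]
    exact ⟨⟨(right _ hz').1, (right' z hz).1⟩, (right' z hz).2⟩

end Composition

/-! ### Markers with two letters -/

section Marker

variable {A : Type*}

theorem isFirstOccurrence_replicate {a b : A} (hab : a ≠ b) {k t : ℕ} (hk : 0 < k) (ht : k ≤ t)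
    (s : ℕ) : IsFirstOccurrence (List.replicate k a ++ [b])
      (List.replicate s b ++ (List.replicate t a ++ [b])) := by
  constructor
  · refine ⟨List.replicate s b ++ List.replicate (t - k) a, ?_⟩
    have replicate_eq : List.replicate t a = List.replicate (t - k) a ++ List.replicate k a := by
      rw [← List.replicate_add, Nat.sub_add_cancel ht]
    simp only [replicate_eq, List.append_assoc]
  · intro j hj hsuffix
    simp only [List.length_append, List.length_replicate, List.length_singleton] at hj
    have take_eq : (List.replicate t a ++ [b]).take (j - s) = List.replicate (j - s) a := by
      rw [List.take_append_of_le_length (by rw [List.length_replicate]; omega),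
        List.take_replicate, min_eq_left (by omega)]
    rw [List.take_append, List.length_replicate, take_eq, List.take_replicate] at hsuffix
    rcases Nat.eq_zero_or_pos (j - s) with hjs | hjs
    · have mem : a ∈ List.replicate k a ++ [b] := by simp [hk.ne']
      simpa [hjs, hab] using hsuffix.subset mem
    · obtain ⟨l, hl⟩ := hsuffix
      have getLast_eq := congrArg List.getLast? hl
      simp only [List.getLast?_append, List.getLast?_replicate, hjs.ne', List.getLast?_singleton,
        if_false, Option.some_or, Option.some.injEq] at getLast_eq
      exact hab getLast_eq.symm

variable [Fintype A]

/-- The scheme `p` with marker `a⋯ab`, where `a` is repeated `k` times. -/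
def MarkedScheme.ofLetters (p : A → ℝ) (hp : IsProbVector p) (a b : A) (hab : a ≠ b) (k : ℕ)
    (hk : 0 < k) : MarkedScheme A where
  prob := p
  isProbVector := hp
  marker := List.replicate k a ++ [b]
  marker_ne_nil := by simp
  unbordered m hm hm' h := by
    simp only [List.length_append, List.length_replicate, List.length_singleton] at hm' h
    rw [List.drop_append_of_le_length (by rw [List.length_replicate]; omega),
      List.take_append_of_le_length (by rw [List.length_replicate]; omega)] at h
    have mem : b ∈ (List.replicate k a).drop m ++ [b] := by simp
    rw [h] at mem
    exact hab (List.eq_of_mem_replicate (List.mem_of_mem_take mem)).symm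
  exists_ne_of_length_eq M := by
    refine ⟨_, _, isFirstOccurrence_replicate hab hk le_rfl (M + 1),
      isFirstOccurrence_replicate hab hk (Nat.le_succ k) M, fun h => ?_,
      by simp only [List.length_append, List.length_replicate]; omega,
      by simp only [List.length_append, List.length_replicate]; omega⟩
    have getElem_eq := congrArg (·[M]?) h
    simp [List.getElem?_append, hab.symm] at getElem_eq

end Marker

/-! ### Probability vectors of prescribed entropy -/

section Vectors

variable {A : Type*} [Fintype A] {p : A → ℝ}

theorem vecEntropy_eq_sum (p : A → ℝ) : vecEntropy p = ∑ i, Real.negMulLog (p i) := by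
  simp [vecEntropy, Real.negMulLog, Finset.sum_neg_distrib]

theorem _root_.IsProbVector.nonempty (hp : IsProbVector p) : Nonempty A := by
  by_contra h
  have := not_nonempty_iff.1 h
  simpa using hp.2

theorem _root_.IsProbVector.lt_one [Nontrivial A] (hp : IsProbVector p) (a : A) : p a < 1 := by
  obtain ⟨b, hb⟩ := exists_ne a
  rw [← hp.2]
  exact Finset.single_lt_sum hb (Finset.mem_univ a) (Finset.mem_univ b) (hp.1 b)
    fun c _ _ => (hp.1 c).le

theorem vecEntropy_pos [Nontrivial A] (hp : IsProbVector p) : 0 < vecEntropy p := by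
  rw [vecEntropy_eq_sum]
  refine Finset.sum_pos (fun a _ => ?_) Finset.univ_nonempty
  rw [Real.negMulLog, neg_mul, neg_pos]
  exact mul_neg_of_pos_of_neg (hp.1 a) (Real.log_neg (hp.1 a) (hp.lt_one a))

theorem vecEntropy_eq_zero [Subsingleton A] (hp : IsProbVector p) : vecEntropy p = 0 := by
  rw [vecEntropy_eq_sum]
  refine Finset.sum_eq_zero fun a _ => ?_
  rw [← Fintype.sum_subsingleton p a, hp.2, Real.negMulLog_one]

theorem exists_le_mul_negMulLog_div {m : ℝ} (hm : 0 < m) (T : ℝ) :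
    ∃ N : ℕ, T ≤ (N + 1) * Real.negMulLog (m / (N + 1)) := by
  have lim : Tendsto (fun N : ℕ => m * (Real.log ((N : ℝ) + 1) - Real.log m)) atTop atTop :=
    (tendsto_atTop_add_const_right _ _ (Real.tendsto_log_atTop.comp
      (tendsto_atTop_add_const_right _ _ tendsto_natCast_atTop_atTop))).const_mul_atTop hm
  obtain ⟨N, hN⟩ := (lim.eventually_ge_atTop T).exists
  refine ⟨N, hN.trans_eq ?_⟩
  have : (0 : ℝ) < N + 1 := by positivity
  rw [Real.negMulLog, Real.log_div hm.ne' this.ne']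
  field_simp
  ring

/-- Move continuously from the concentrated vector `(m, 0, …, 0)` to the uniform one. -/
theorem exists_sum_negMulLog_eq {m T : ℝ} (hm : 0 < m) (hT : Real.negMulLog m < T) :
    ∃ (N : ℕ) (v : Fin (N + 1) → ℝ), (∀ i, 0 < v i) ∧ ∑ i, v i = m ∧
      ∑ i, Real.negMulLog (v i) = T := by
  obtain ⟨N, hN⟩ := exists_le_mul_negMulLog_div hm T
  let v (t : ℝ) : Fin (N + 1) → ℝ :=
    Fin.cons (m * (1 - t) + t * (m / (N + 1))) fun _ => t * (m / (N + 1))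
  have sum_negMulLog (t : ℝ) : ∑ i, Real.negMulLog (v t i) =
      Real.negMulLog (m * (1 - t) + t * (m / (N + 1))) +
        N * Real.negMulLog (t * (m / (N + 1))) := by
    simp [v, Fin.sum_univ_succ]
  have continuous_sum : Continuous fun t => ∑ i, Real.negMulLog (v t i) := by
    simp only [sum_negMulLog]
    have := Real.continuous_negMulLog
    fun_prop
  have at_zero : ∑ i, Real.negMulLog (v 0 i) = Real.negMulLog m := by
    simp [sum_negMulLog]
  have at_one : ∑ i, Real.negMulLog (v 1 i) = (N + 1) * Real.negMulLog (m / (N + 1)) := by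
    rw [sum_negMulLog, sub_self, mul_zero, zero_add, one_mul]
    ring
  obtain ⟨t, ht, eq_T⟩ := intermediate_value_Icc zero_le_one continuous_sum.continuousOn
    ⟨at_zero.trans_le hT.le, hN.trans_eq at_one.symm⟩
  have ht_ne : t ≠ 0 := by
    rintro rfl
    exact hT.ne (at_zero.symm.trans eq_T)
  have tail_pos : 0 < t * (m / (N + 1)) :=
    mul_pos (lt_of_le_of_ne ht.1 ht_ne.symm) (by positivity)
  have head_pos : 0 < m * (1 - t) + t * (m / (N + 1)) :=
    add_pos_of_nonneg_of_pos (mul_nonneg hm.le (sub_nonneg.2 ht.2)) tail_pos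
  refine ⟨N, v t, Fin.cases head_pos fun _ => tail_pos, ?_, eq_T⟩
  simp only [v, Fin.sum_univ_succ, Fin.cons_zero, Fin.cons_succ, Finset.sum_const,
    Finset.card_univ, Fintype.card_fin, nsmul_eq_mul]
  field_simp
  ring

theorem exists_mul_div_pow_lt {c s η : ℝ} (c' : ℝ) (hc : 0 ≤ c) (hcs : c < s) (hη : 0 < η) :
    ∃ k : ℕ, 0 < k ∧ c' * (c / s) ^ k < η := by
  have hs : 0 < s := hc.trans_lt hcs
  have lim : Tendsto (fun k : ℕ => c' * (c / s) ^ k) atTop (𝓝 (c' * 0)) :=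
    (tendsto_pow_atTop_nhds_zero_of_lt_one (by positivity) ((div_lt_one hs).2 hcs)).const_mul _
  rw [mul_zero] at lim
  obtain ⟨k, hlt, hk⟩ :=
    ((lim.eventually_lt_const hη).and (eventually_gt_atTop 0)).exists
  exact ⟨k, hk, hlt⟩

theorem eventually_negMulLog_lt {η : ℝ} (hη : 0 < η) :
    ∀ᶠ ε in 𝓝[>] 0, Real.negMulLog (1 - ε) < η ∧
      ∀ z, 0 < z → z < ε → Real.negMulLog z < η := by
  have near_one : ∀ᶠ ε in 𝓝 (0 : ℝ), Real.negMulLog (1 - ε) < η :=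
    (Real.continuous_negMulLog.comp (continuous_const.sub continuous_id)).tendsto 0
      |>.eventually_lt_const (by simpa using hη)
  have near_zero : ∀ᶠ z in 𝓝 (0 : ℝ), Real.negMulLog z < η :=
    (Real.continuous_negMulLog.tendsto 0).eventually_lt_const (by simpa using hη)
  obtain ⟨δ, hδ, hz⟩ := Metric.eventually_nhds_iff.1 near_zero
  filter_upwards [near_one.filter_mono nhdsWithin_le_nhds, Ioo_mem_nhdsGT hδ]
    with ε hε hεδ
  refine ⟨hε, fun z hz0 hzε => hz ?_⟩
  rw [Real.dist_eq, sub_zero, abs_of_pos hz0]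
  exact hzε.trans hεδ.2

theorem exists_isProbVector_cons {H s x y : ℝ} (hs : 0 < s) (hx : 0 < x) (hy : 0 < y)
    (hsum : s + x + y < 1) (hH : Real.negMulLog s + Real.negMulLog x + Real.negMulLog y +
      Real.negMulLog (1 - s - x - y) < H) :
    ∃ (n : ℕ) (r : Fin (n + 3) → ℝ), IsProbVector r ∧ vecEntropy r = H ∧
      r 0 = s ∧ r 1 = x ∧ r 2 = y := by
  obtain ⟨N, v, v_pos, sum_v, entropy_v⟩ := exists_sum_negMulLog_eq
    (m := 1 - s - x - y) (T := H - Real.negMulLog s - Real.negMulLog x - Real.negMulLog y)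
    (by linarith) (by linarith)
  refine ⟨N + 1, Fin.cons s (Fin.cons x (Fin.cons y v)),
    ⟨Fin.cases hs (Fin.cases hx (Fin.cases hy v_pos)), ?_⟩, ?_, rfl, rfl, rfl⟩
  · simp only [Fin.sum_univ_succ (n := N + 3), Fin.sum_univ_succ (n := N + 2),
      Fin.sum_univ_succ (n := N + 1), Fin.cons_zero, Fin.cons_succ, sum_v]
    ring
  · rw [vecEntropy_eq_sum]
    simp only [Fin.sum_univ_succ (n := N + 3), Fin.sum_univ_succ (n := N + 2),
      Fin.sum_univ_succ (n := N + 1), Fin.cons_zero, Fin.cons_succ, entropy_v]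
    ring

/-- A vector of entropy `H` sharing a marker probability with each of two given schemes: its first
entry is so close to `1` that high powers of `a` and `b` leave room for all other entries. -/
theorem exists_isProbVector_bridge {H a a' b b' : ℝ} (hH : 0 < H) (ha : 0 < a) (ha1 : a < 1)
    (ha' : 0 < a') (hb : 0 < b) (hb1 : b < 1) (hb' : 0 < b') :
    ∃ (n k l : ℕ) (r : Fin (n + 3) → ℝ), IsProbVector r ∧ vecEntropy r = H ∧ 0 < k ∧ 0 < l ∧
      r 0 ^ k * r 1 = a ^ k * a' ∧ r 0 ^ l * r 2 = b ^ l * b' := by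
  obtain ⟨ε, ⟨hs, small⟩, hε, hεab⟩ := ((eventually_negMulLog_lt (by positivity : 0 < H / 4)).and
    (Ioo_mem_nhdsGT (lt_min (sub_pos.2 ha1) (sub_pos.2 hb1)))).exists
  obtain ⟨hεa, hεb⟩ := lt_min_iff.1 hεab
  have s_pos : 0 < 1 - ε := by linarith
  obtain ⟨k, hk, hx⟩ := exists_mul_div_pow_lt (s := 1 - ε) (η := ε / 3) a' ha.le (by linarith)
    (by positivity)
  obtain ⟨l, hl, hy⟩ := exists_mul_div_pow_lt (s := 1 - ε) (η := ε / 3) b' hb.le (by linarith)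
    (by positivity)
  have x_pos : 0 < a' * (a / (1 - ε)) ^ k := by positivity
  have y_pos : 0 < b' * (b / (1 - ε)) ^ l := by positivity
  generalize hx_eq : a' * (a / (1 - ε)) ^ k = x at hx x_pos
  generalize hy_eq : b' * (b / (1 - ε)) ^ l = y at hy y_pos
  have entropy_x := small x x_pos (by linarith)
  have entropy_y := small y y_pos (by linarith)
  have entropy_rest := small (1 - (1 - ε) - x - y) (by linarith) (by linarith)
  obtain ⟨n, r, hr, hrH, h0, h1, h2⟩ :=
    exists_isProbVector_cons (H := H) s_pos x_pos y_pos (by linarith) (by linarith)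
  refine ⟨n, k, l, r, hr, hrH, hk, hl, ?_, ?_⟩
  · rw [h0, h1, ← hx_eq, div_pow]
    field_simp
  · rw [h0, h2, ← hy_eq, div_pow]
    field_simp

end Vectors

/-! ### Reduction to a common marker -/

section Main

variable {A B : Type*} [MeasurableSpace A] [MeasurableSpace B]

theorem isFactorMap_const [Subsingleton A] [Subsingleton B] {μ : Measure (ℤ → A)}
    {ν : Measure (ℤ → B)} [IsProbabilityMeasure μ] [IsProbabilityMeasure ν] (b : B) :
    IsFactorMap μ ν Set.univ fun _ _ => b where
  measurable_map := measurable_const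
  dom_measurable := MeasurableSet.univ
  dom_shift_invariant := rfl
  dom_full := measure_univ
  pushforward := by
    have := Measure.isProbabilityMeasure_map (μ := μ)
      (measurable_const (a := fun _ : ℤ => b)).aemeasurable
    ext s _
    rcases s.eq_empty_or_nonempty with rfl | hs
    · simp
    · rw [Subsingleton.eq_univ_of_nonempty hs, measure_univ, measure_univ]
  equivariant _ _ := rfl

variable [Fintype A] [Fintype B] {p : A → ℝ} {q : B → ℝ}

theorem exists_isFinitaryIsomorphism_of_subsingleton [Subsingleton A] [Subsingleton B]
    (hp : IsProbVector p) (hq : IsProbVector q) :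
    ∃ D E φ ψ, IsFinitaryIsomorphism (bernoulliMeasure p) (bernoulliMeasure q) D E φ ψ := by
  have := isProbabilityMeasure_bernoulliMeasure hp
  have := isProbabilityMeasure_bernoulliMeasure hq
  obtain ⟨a⟩ := hp.nonempty
  obtain ⟨b⟩ := hq.nonempty
  exact ⟨_, _, _, _, isFactorMap_const b, isFactorMap_const a,
    ae_of_all _ fun _ _ => ⟨0, 0, fun _ _ _ => rfl⟩,
    ae_of_all _ fun _ _ => ⟨0, 0, fun _ _ _ => rfl⟩,
    fun _ _ => ⟨Set.mem_univ _, Subsingleton.elim _ _⟩,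
    fun _ _ => ⟨Set.mem_univ _, Subsingleton.elim _ _⟩⟩

variable [DiscreteMeasurableSpace A] [DiscreteMeasurableSpace B]

theorem exists_isFinitaryIsomorphism_of_marker_eq (hp : IsProbVector p) (hq : IsProbVector q)
    (hH : vecEntropy p = vecEntropy q) {a a' : A} {b b' : B} (ha : a ≠ a') (hb : b ≠ b') {k : ℕ}
    (hk : 0 < k) (h : p a ^ k * p a' = q b ^ k * q b') :
    ∃ D E φ ψ, IsFinitaryIsomorphism (bernoulliMeasure p) (bernoulliMeasure q) D E φ ψ :=
  MarkedScheme.exists_isFinitaryIsomorphism (X := MarkedScheme.ofLetters p hp a a' ha k hk)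
    (Y := MarkedScheme.ofLetters q hq b b' hb k hk) (by simp [MarkedScheme.ofLetters])
    (by simpa [MarkedScheme.markerProb, MarkedScheme.ofLetters] using h) hH

theorem exists_isFinitaryIsomorphism_of_nontrivial [Nontrivial A] [Nontrivial B]
    (hp : IsProbVector p) (hq : IsProbVector q) (hH : vecEntropy p = vecEntropy q) :
    ∃ D E φ ψ, IsFinitaryIsomorphism (bernoulliMeasure p) (bernoulliMeasure q) D E φ ψ := by
  obtain ⟨a, a', ha⟩ := exists_pair_ne A
  obtain ⟨b, b', hb⟩ := exists_pair_ne B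
  obtain ⟨n, k, l, r, hr, hrH, hk, hl, hpr, hqr⟩ := exists_isProbVector_bridge (vecEntropy_pos hp)
    (hp.1 a) (hp.lt_one a) (hp.1 a') (hq.1 b) (hq.lt_one b) (hq.1 b')
  have two_ne : (0 : Fin (n + 3)) ≠ 2 := by
    simp [Fin.ext_iff, Nat.mod_eq_of_lt (show 2 < n + 3 by omega)]
  obtain ⟨_, _, _, _, iso⟩ := exists_isFinitaryIsomorphism_of_marker_eq hp hr hrH.symm ha
    (Fin.zero_ne_one : (0 : Fin (n + 3)) ≠ 1) hk hpr.symm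
  obtain ⟨_, _, _, _, iso'⟩ := exists_isFinitaryIsomorphism_of_marker_eq hr hq (hrH.trans hH)
    two_ne hb hl hqr
  have := isProbabilityMeasure_bernoulliMeasure hp
  have := isProbabilityMeasure_bernoulliMeasure hq
  have := isProbabilityMeasure_bernoulliMeasure hr
  exact ⟨_, _, _, _, iso.trans (measurePreserving_shiftBy hp) (measurePreserving_shiftBy hq) iso'⟩

theorem exists_isFinitaryIsomorphism_bernoulliMeasure (hp : IsProbVector p) (hq : IsProbVector q)
    (hH : vecEntropy p = vecEntropy q) :
    ∃ D E φ ψ, IsFinitaryIsomorphism (bernoulliMeasure p) (bernoulliMeasure q) D E φ ψ := by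
  rcases subsingleton_or_nontrivial A with hA | hA <;>
    rcases subsingleton_or_nontrivial B with hB | hB
  · exact exists_isFinitaryIsomorphism_of_subsingleton hp hq
  · exact absurd hH ((vecEntropy_eq_zero hp).trans_ne (vecEntropy_pos hq).ne)
  · exact absurd hH ((vecEntropy_eq_zero hq).symm ▸ (vecEntropy_pos hp).ne')
  · exact exists_isFinitaryIsomorphism_of_nontrivial hp hq hH

end Main

end KeaneSmorodinsky

/-- **Keane–Smorodinsky (equal entropies).** If `p` and `q` are strictly positive
probability vectors on finite alphabets with `H(p) = H(q)`, then the Bernoulli schemes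
`BS(p)` and `BS(q)` are finitarily isomorphic. -/
theorem finitarily_isomorphic_of_entropy_eq
    {A B : Type*} [Fintype A] [Fintype B]
    [MeasurableSpace A] [DiscreteMeasurableSpace A]
    [MeasurableSpace B] [DiscreteMeasurableSpace B]
    (p : A → ℝ) (q : B → ℝ) (hp : IsProbVector p) (hq : IsProbVector q)
    (μ : Measure (ℤ → A)) (ν : Measure (ℤ → B))
    (hμ : IsBernoulliMeasure μ p) (hν : IsBernoulliMeasure ν q)
    (hH : vecEntropy p = vecEntropy q) :
    ∃ (D : Set (ℤ → A)) (E : Set (ℤ → B))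
      (φ : (ℤ → A) → (ℤ → B)) (ψ : (ℤ → B) → (ℤ → A)),
      IsFinitaryIsomorphism μ ν D E φ ψ := by
  rw [hμ.unique (KeaneSmorodinsky.isBernoulliMeasure_bernoulliMeasure hp),
    hν.unique (KeaneSmorodinsky.isBernoulliMeasure_bernoulliMeasure hq)]
  exact KeaneSmorodinsky.exists_isFinitaryIsomorphism_bernoulliMeasure hp hq hH
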